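/- Let m ≥ 1, let C_i : ℝⁿ → ℝ^{n_i} (i = 1,…,m) be surjective linear maps with ⋂_{i=1}^m ker C_i = {0}, let p_i > 0 be reals, let I ⊆ {1,…,m}, and let Q_i be symmetric positive definite matrices on ℝ^{n_i}. Suppose that for each i ∈ I the nonnegative function g_i ∈ L¹(ℝ^{n_i}) is more log-concave than g_{Q_i^{-1}}, and for each j ∉ I the nonnegative function g_j ∈ L¹(ℝ^{n_j}) is more log-convex than g_{Q_j^{-1}}. Then the outer integral ∫_{ℝⁿ} sup{ ∏_{j=1}^m g_j(y_j)^{p_j} : y_j ∈ ℝ^{n_j}, ∑_{j=1}^m p_j C_jᵀ y_j = x } dx ≥ E · ∏_{i=1}^m (∫_{ℝ^{n_i}} g_i)^{p_i}, where E = inf{ (det(∑_{i=1}^m p_i C_iᵀ B_i C_i) / ∏_{i=1}^m det(B_i)^{p_i})^{1/2} : B_i symmetric with 0 < B_i ≤ Q_i for i ∈ I and B_j ≥ Q_j for j ∉ I }. -/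

import Mathlib

open MeasureTheory Matrix
open scoped ENNReal

noncomputable section

/-- The centered Gaussian function attached to a matrix `Q` : `g_Q(x) = exp(-π⟨Qx,x⟩)`. -/
def gaussFn {k : ℕ} (Q : Matrix (Fin k) (Fin k) ℝ) (x : Fin k → ℝ) : ℝ :=
  Real.exp (-Real.pi * (Q.mulVec x ⬝ᵥ x))

/-- A nonnegative log-convex function. -/
def LogConvexFun {k : ℕ} (h : (Fin k → ℝ) → ℝ) : Prop :=
  (∀ x, 0 ≤ h x) ∧
    ∀ x y : Fin k → ℝ, ∀ a b : ℝ, 0 ≤ a → 0 ≤ b → a + b = 1 →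
      h (a • x + b • y) ≤ h x ^ a * h y ^ b

/-- A nonnegative log-concave function. -/
def LogConcaveFun {k : ℕ} (h : (Fin k → ℝ) → ℝ) : Prop :=
  (∀ x, 0 ≤ h x) ∧
    ∀ x y : Fin k → ℝ, ∀ a b : ℝ, 0 ≤ a → 0 ≤ b → a + b = 1 →
      h x ^ a * h y ^ b ≤ h (a • x + b • y)

/-- `f` is more log-convex than `g_Q`, i.e. `f = g_Q · h` with `h` log-convex. -/
def MoreLogConvex {k : ℕ} (f : (Fin k → ℝ) → ℝ) (Q : Matrix (Fin k) (Fin k) ℝ) : Prop :=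
  ∃ h : (Fin k → ℝ) → ℝ, LogConvexFun h ∧ f = fun x => gaussFn Q x * h x

/-- `f` is more log-concave than `g_Q`, i.e. `f = g_Q · h` with `h` log-concave. -/
def MoreLogConcave {k : ℕ} (f : (Fin k → ℝ) → ℝ) (Q : Matrix (Fin k) (Fin k) ℝ) : Prop :=
  ∃ h : (Fin k → ℝ) → ℝ, LogConcaveFun h ∧ f = fun x => gaussFn Q x * h x

/-!
The proof is a mass transport argument in the manner of Barthe. Fix `B` admissible in the infimum.
Caffarelli's contraction theorem gives, for each `i`, a monotone map `T i` from the Gaussian with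
matrix `B i` to `g i` whose derivative is again admissible: at most `Q i` if `g i` is more
log-concave than the Gaussian of `(Q i)⁻¹`, at least `Q i` if it is more log-convex (then `T i` is
the inverse of a contraction from `g i` to the Gaussian). The Jacobian of the map
`x ↦ ∑ i, p i • (C i)ᵀ *ᵥ T i (C i *ᵥ x)` is the Brascamp–Lieb determinant of the derivatives of the
`T i`, hence at least `E² ∏ det (T i)' ^ p i`. Changing variables along this map bounds the integral
of the supremum from below by `E² ∏ (∫ g i) ^ p i` divided by the Brascamp–Lieb functional of `B`,
whose infimum over `B` is `E`.

Caffarelli's theorem is obtained without regularity theory for the Monge–Ampère equation, as a limit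
of entropic optimal transport. By the Prékopa–Leindler inequality the log-Laplace transform of a
strongly log-concave density is semiconcave, and by Hölder's inequality that of a strongly
log-convex one is semiconvex, so the Sinkhorn iteration preserves the bound to be proved; its
near-fixed points give approximate transports, and compactness of contractions gives the transport
itself.
-/
section PrekopaLeindler

open Filter Topology
open scoped Pointwise

variable {a b : ℝ}

theorem volume_add_volume_le_of_isCompact {K L : Set ℝ} (hK : IsCompact K) (hL : IsCompact L)
    (hK₀ : K.Nonempty) (hL₀ : L.Nonempty) : volume K + volume L ≤ volume (K + L) := by
  obtain ⟨x, hxK, hx⟩ := hK.exists_isGreatest hK₀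
  obtain ⟨y, hyL, hy⟩ := hL.exists_isLeast hL₀
  -- The translates `K + y` and `x + L` lie in `K + L` and meet only in the point `x + y`.
  have hdisj : AEDisjoint volume ((· + y) '' K) ((x + ·) '' L) := by
    refine measure_mono_null (t := {x + y}) ?_ (measure_singleton _)
    rintro _ ⟨⟨u, hu, rfl⟩, ⟨v, hv, huv⟩⟩
    have := hx hu
    have := hy hv
    simp only [Set.mem_singleton_iff]
    linarith
  calc volume K + volume L
    _ = volume ((· + y) '' K) + volume ((x + ·) '' L) := by
        rw [Set.image_add_right, measure_preimage_add_right, Set.image_add_left,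
          measure_preimage_add]
    _ = volume ((· + y) '' K ∪ (x + ·) '' L) :=
        (measure_union₀ (hL.image (by fun_prop)).measurableSet.nullMeasurableSet hdisj).symm
    _ ≤ volume (K + L) := measure_mono <| Set.union_subset
        (Set.image_subset_iff.2 fun u hu => Set.add_mem_add hu hyL)
        (Set.image_subset_iff.2 fun v hv => Set.add_mem_add hxK hv)

theorem volume_add_volume_le_volume_add {A B : Set ℝ} (hA : MeasurableSet A)
    (hB : MeasurableSet B) (hA₀ : A.Nonempty) (hB₀ : B.Nonempty) :
    volume A + volume B ≤ volume (A + B) := by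
  obtain ⟨x, hx⟩ := hA₀
  obtain ⟨y, hy⟩ := hB₀
  simp only [hA.measure_eq_iSup_isCompact, hB.measure_eq_iSup_isCompact, iSup_and']
  refine ENNReal.biSup_add_biSup_le' ⟨∅, Set.empty_subset _, isCompact_empty⟩
    ⟨∅, Set.empty_subset _, isCompact_empty⟩ fun K ⟨hKA, hK⟩ L ⟨hLB, hL⟩ => ?_
  calc volume K + volume L
    _ ≤ volume (insert x K) + volume (insert y L) :=
        add_le_add (measure_mono (Set.subset_insert _ _)) (measure_mono (Set.subset_insert _ _))
    _ ≤ volume (insert x K + insert y L) := volume_add_volume_le_of_isCompact (hK.insert x)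
        (hL.insert y) (Set.insert_nonempty _ _) (Set.insert_nonempty _ _)
    _ ≤ volume (A + B) :=
        measure_mono (Set.add_subset_add (Set.insert_subset hx hKA) (Set.insert_subset hy hLB))

theorem lintegral_eq_lintegral_meas_ofReal_lt {α : Type*} [MeasurableSpace α] {μ : Measure α}
    {f : α → ℝ≥0∞} (hf : Measurable f) (hf' : ∀ x, f x ≠ ∞) :
    ∫⁻ x, f x ∂μ = ∫⁻ t in Set.Ioi (0 : ℝ), μ {x | ENNReal.ofReal t < f x} := by
  calc ∫⁻ x, f x ∂μ
    _ = ∫⁻ x, ENNReal.ofReal (f x).toReal ∂μ := by simp_rw [ENNReal.ofReal_toReal (hf' _)]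
    _ = ∫⁻ t in Set.Ioi (0 : ℝ), μ {x | t < (f x).toReal} :=
        lintegral_eq_lintegral_meas_lt μ (.of_forall fun x => ENNReal.toReal_nonneg)
          hf.ennreal_toReal.aemeasurable
    _ = ∫⁻ t in Set.Ioi (0 : ℝ), μ {x | ENNReal.ofReal t < f x} := by
        refine setLIntegral_congr_fun measurableSet_Ioi fun t ht => ?_
        simp only [ENNReal.ofReal_lt_iff_lt_toReal (Set.mem_Ioi.1 ht).le (hf' _)]

theorem mul_volume_superlevel_add_le (ha : 0 < a) (hb : 0 < b) (hab : a + b = 1)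
    {f g h : ℝ → ℝ≥0∞} (hf : Measurable f) (hg : Measurable g)
    (H : ∀ x y, f x ^ a * g y ^ b ≤ h (a * x + b * y)) {s : ℝ≥0∞} (hs₀ : s ≠ 0) (hs : s ≠ ∞)
    (hfs : ∃ x, s < f x) (hgs : ∃ x, s < g x) :
    ENNReal.ofReal a * volume {x | s < f x} + ENNReal.ofReal b * volume {x | s < g x} ≤
      volume {x | s < h x} := by
  have hsub : a • {x | s < f x} + b • {x | s < g x} ⊆ {x | s < h x} := by
    rintro _ ⟨_, ⟨x, hx, rfl⟩, _, ⟨y, hy, rfl⟩, rfl⟩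
    calc s = s ^ a * s ^ b := by rw [← ENNReal.rpow_add _ _ hs₀ hs, hab, ENNReal.rpow_one]
      _ < f x ^ a * g y ^ b :=
          ENNReal.mul_lt_mul (ENNReal.rpow_lt_rpow hx ha) (ENNReal.rpow_lt_rpow hy hb)
      _ ≤ h (a * x + b * y) := H x y
  calc ENNReal.ofReal a * volume {x | s < f x} + ENNReal.ofReal b * volume {x | s < g x}
    _ = volume (a • {x | s < f x}) + volume (b • {x | s < g x}) := by
        simp only [Measure.addHaar_smul, Module.finrank_self, pow_one, abs_of_pos ha, abs_of_pos hb]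
    _ ≤ volume (a • {x | s < f x} + b • {x | s < g x}) :=
        volume_add_volume_le_volume_add
          ((measurableSet_lt measurable_const hf).const_smul₀ a)
          ((measurableSet_lt measurable_const hg).const_smul₀ b)
          (Set.Nonempty.smul_set hfs) (Set.Nonempty.smul_set hgs)
    _ ≤ volume {x | s < h x} := measure_mono hsub

/-- On the line, functions with supremum one satisfy the Prékopa–Leindler inequality with the
arithmetic mean of the integrals in place of the geometric mean. -/
theorem mul_lintegral_add_le_of_iSup_eq_one (ha : 0 < a) (hb : 0 < b) (hab : a + b = 1)
    {f g h : ℝ → ℝ≥0∞} (hf : Measurable f) (hg : Measurable g) (hh : Measurable h)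
    (hf₁ : ⨆ x, f x = 1) (hg₁ : ⨆ x, g x = 1)
    (H : ∀ x y, f x ^ a * g y ^ b ≤ h (a * x + b * y)) :
    ENNReal.ofReal a * (∫⁻ x, f x) + ENNReal.ofReal b * (∫⁻ x, g x) ≤ ∫⁻ x, h x := by
  have hf_le : ∀ x, f x ≤ 1 := fun x => hf₁ ▸ le_iSup f x
  have hg_le : ∀ x, g x ≤ 1 := fun x => hg₁ ▸ le_iSup g x
  have hmeas : ∀ u : ℝ → ℝ≥0∞, Measurable fun t : ℝ => volume {x | ENNReal.ofReal t < u x} :=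
    fun u => Antitone.measurable fun s t hst => measure_mono fun x hx =>
      (ENNReal.ofReal_le_ofReal hst).trans_lt hx
  have H' : ∀ x y, f x ^ a * g y ^ b ≤ min (h (a * x + b * y)) 1 := fun x y =>
    le_min (H x y) (mul_le_one' (ENNReal.rpow_le_one (hf_le x) ha.le)
      (ENNReal.rpow_le_one (hg_le y) hb.le))
  have hne_top : ∀ {u : ℝ → ℝ≥0∞}, (∀ x, u x ≤ 1) → ∀ x, u x ≠ ∞ :=
    fun hu x => ne_top_of_le_ne_top ENNReal.one_ne_top (hu x)
  refine le_trans ?_ (lintegral_mono fun x => min_le_left (h x) 1)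
  rw [lintegral_eq_lintegral_meas_ofReal_lt hf (hne_top hf_le),
    lintegral_eq_lintegral_meas_ofReal_lt hg (hne_top hg_le),
    lintegral_eq_lintegral_meas_ofReal_lt (hh.min measurable_const)
      (hne_top fun x => min_le_right _ _),
    ← lintegral_const_mul _ (hmeas f), ← lintegral_const_mul _ (hmeas g),
    ← lintegral_add_left ((hmeas f).const_mul _)]
  refine setLIntegral_mono (hmeas _) fun t ht => ?_
  rcases lt_or_ge (ENNReal.ofReal t) 1 with ht₁ | ht₁
  · exact mul_volume_superlevel_add_le ha hb hab hf hg H' (by simpa using ht) ENNReal.ofReal_ne_top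
      (lt_iSup_iff.1 (hf₁ ▸ ht₁)) (lt_iSup_iff.1 (hg₁ ▸ ht₁))
  · simp only [((hf_le _).trans ht₁).not_gt, ((hg_le _).trans ht₁).not_gt, Set.ofPred_false,
      measure_empty, mul_zero, add_zero, zero_le]

theorem ennreal_geom_mean_le_arith_mean (ha : 0 < a) (hb : 0 < b) (hab : a + b = 1) (x y : ℝ≥0∞) :
    x ^ a * y ^ b ≤ ENNReal.ofReal a * x + ENNReal.ofReal b * y := by
  have h := ENNReal.young_inequality (x ^ a) (y ^ b) (.inv_inv ha hb hab)
  rwa [ENNReal.rpow_rpow_inv ha.ne', ENNReal.rpow_rpow_inv hb.ne', ENNReal.ofReal_inv_of_pos ha,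
    ENNReal.ofReal_inv_of_pos hb, div_eq_mul_inv, div_eq_mul_inv, inv_inv, inv_inv, mul_comm x,
    mul_comm y] at h

theorem ennreal_div_rpow_mul_div_rpow (ha : 0 ≤ a) (hb : 0 ≤ b) (x y : ℝ≥0∞) {u v : ℝ≥0∞}
    (hu : u ≠ ∞) (hv : v ≠ ∞) :
    (x / u) ^ a * (y / v) ^ b = x ^ a * y ^ b / (u ^ a * v ^ b) := by
  rw [ENNReal.div_rpow_of_nonneg _ _ ha, ENNReal.div_rpow_of_nonneg _ _ hb,
    ENNReal.mul_div_mul_comm (.inr (ENNReal.rpow_ne_top_of_nonneg hb hv))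
      (.inl (ENNReal.rpow_ne_top_of_nonneg ha hu))]

theorem prekopa_leindler_real_of_iSup_ne_top (ha : 0 < a) (hb : 0 < b) (hab : a + b = 1)
    {f g h : ℝ → ℝ≥0∞} (hf : Measurable f) (hg : Measurable g) (hh : Measurable h)
    (hf' : ⨆ x, f x ≠ ∞) (hg' : ⨆ x, g x ≠ ∞)
    (H : ∀ x y, f x ^ a * g y ^ b ≤ h (a * x + b * y)) :
    (∫⁻ x, f x) ^ a * (∫⁻ x, g x) ^ b ≤ ∫⁻ x, h x := by
  set F := ⨆ x, f x
  set G := ⨆ x, g x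
  rcases eq_or_ne F 0 with hF₀ | hF₀
  · have hf₀ : ∀ x, f x = 0 := ENNReal.iSup_eq_zero.1 hF₀
    simp [hf₀, ha]
  rcases eq_or_ne G 0 with hG₀ | hG₀
  · have hg₀ : ∀ x, g x = 0 := ENNReal.iSup_eq_zero.1 hG₀
    simp [hg₀, hb]
  have hc₀ : F ^ a * G ^ b ≠ 0 :=
    mul_ne_zero (by simp [hF₀, ha.not_gt]) (by simp [hG₀, hb.not_gt])
  have hc : F ^ a * G ^ b ≠ ∞ := ENNReal.mul_ne_top (ENNReal.rpow_ne_top_of_nonneg ha.le hf')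
    (ENNReal.rpow_ne_top_of_nonneg hb.le hg')
  have hdiv : ∀ {u : ℝ → ℝ≥0∞}, Measurable u → ∀ c, ∫⁻ x, u x / c = (∫⁻ x, u x) / c :=
    fun hu c => by simp only [div_eq_mul_inv, lintegral_mul_const _ hu]
  have key := (ennreal_geom_mean_le_arith_mean ha hb hab _ _).trans <|
    mul_lintegral_add_le_of_iSup_eq_one ha hb hab (hf.div_const F) (hg.div_const G)
      (hh.div_const (F ^ a * G ^ b))
      (by rw [← ENNReal.iSup_div, ENNReal.div_self hF₀ hf'])
      (by rw [← ENNReal.iSup_div, ENNReal.div_self hG₀ hg'])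
      (fun x y => by
        rw [ennreal_div_rpow_mul_div_rpow ha.le hb.le _ _ hf' hg']
        exact ENNReal.div_le_div_right (H x y) _)
  rw [hdiv hf, hdiv hg, hdiv hh, ennreal_div_rpow_mul_div_rpow ha.le hb.le _ _ hf' hg'] at key
  simpa only [div_eq_mul_inv, ENNReal.mul_le_mul_iff_left (ENNReal.inv_ne_zero.2 hc)
    (ENNReal.inv_ne_top.2 hc₀)] using key

theorem tendsto_lintegral_min_natCast {α : Type*} [MeasurableSpace α] {μ : Measure α}
    {f : α → ℝ≥0∞} (hf : Measurable f) :
    Tendsto (fun N : ℕ => ∫⁻ x, min (f x) N ∂μ) atTop (𝓝 (∫⁻ x, f x ∂μ)) := by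
  refine lintegral_tendsto_of_tendsto_of_monotone
    (fun N => (hf.min measurable_const).aemeasurable)
    (.of_forall fun x N M hNM => min_le_min le_rfl (by exact_mod_cast hNM))
    (.of_forall fun x => ?_)
  simpa only [min_top_right] using tendsto_const_nhds.min ENNReal.tendsto_nat_nhds_top

theorem prekopa_leindler_real (ha : 0 < a) (hb : 0 < b) (hab : a + b = 1)
    {f g h : ℝ → ℝ≥0∞} (hf : Measurable f) (hg : Measurable g) (hh : Measurable h)
    (H : ∀ x y, f x ^ a * g y ^ b ≤ h (a * x + b * y)) :
    (∫⁻ x, f x) ^ a * (∫⁻ x, g x) ^ b ≤ ∫⁻ x, h x := by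
  have hsup : ∀ (u : ℝ → ℝ≥0∞) (N : ℕ), ⨆ x, min (u x) N ≠ ∞ := fun u N =>
    ne_top_of_le_ne_top (ENNReal.natCast_ne_top N) (iSup_le fun x => min_le_right _ _)
  have htrunc : ∀ N : ℕ, (∫⁻ x, min (f x) N) ^ a * (∫⁻ x, min (g x) N) ^ b ≤ ∫⁻ x, h x := fun N =>
    prekopa_leindler_real_of_iSup_ne_top ha hb hab (hf.min measurable_const)
      (hg.min measurable_const) hh (hsup f N) (hsup g N) fun x y => le_trans (by gcongr <;> simp)
        (H x y)
  rcases eq_or_ne (∫⁻ x, f x) 0 with hf₀ | hf₀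
  · simp [hf₀, ha]
  rcases eq_or_ne (∫⁻ x, g x) 0 with hg₀ | hg₀
  · simp [hg₀, hb]
  refine le_of_tendsto (ENNReal.Tendsto.mul ((tendsto_lintegral_min_natCast hf).ennrpow_const a)
    (.inl ?_) ((tendsto_lintegral_min_natCast hg).ennrpow_const b) (.inl ?_)) (.of_forall htrunc)
  · simp [ENNReal.rpow_eq_zero_iff, hf₀, ha.not_gt]
  · simp [ENNReal.rpow_eq_zero_iff, hg₀, hb.not_gt]

theorem measurable_fin_cons (k : ℕ) :
    Measurable fun z : ℝ × (Fin k → ℝ) => (Fin.cons z.1 z.2 : Fin (k + 1) → ℝ) :=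
  measurable_pi_iff.2 fun i => i.cases (by simpa using measurable_fst) fun j => by
    simp only [Fin.cons_succ]; fun_prop

theorem lintegral_eq_lintegral_lintegral_fin_cons {k : ℕ} {u : (Fin (k + 1) → ℝ) → ℝ≥0∞}
    (hu : Measurable u) : ∫⁻ x, u x = ∫⁻ t : ℝ, ∫⁻ x : Fin k → ℝ, u (Fin.cons t x) := by
  have e := (volume_preserving_piFinSuccAbove (fun _ : Fin (k + 1) => ℝ) 0).symm
  rw [← e.lintegral_comp hu, Measure.volume_eq_prod,
    lintegral_prod (fun z => u _) (hu.comp e.measurable).aemeasurable]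
  simp [MeasurableEquiv.piFinSuccAbove, Fin.insertNthEquiv]

theorem prekopa_leindler_pi (k : ℕ) (ha : 0 < a) (hb : 0 < b) (hab : a + b = 1)
    {f g h : (Fin k → ℝ) → ℝ≥0∞} (hf : Measurable f) (hg : Measurable g) (hh : Measurable h)
    (H : ∀ x y, f x ^ a * g y ^ b ≤ h (a • x + b • y)) :
    (∫⁻ x, f x) ^ a * (∫⁻ x, g x) ^ b ≤ ∫⁻ x, h x := by
  induction k with
  | zero =>
    rw [Measure.volume_pi_eq_dirac]
    simp only [lintegral_dirac]
    exact (H _ _).trans_eq (congrArg h (Subsingleton.elim _ _))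
  | succ k ih =>
    have hcons : ∀ t : ℝ, Measurable fun x : Fin k → ℝ => (Fin.cons t x : Fin (k + 1) → ℝ) :=
      fun t => (measurable_fin_cons k).comp measurable_prodMk_left
    simp only [lintegral_eq_lintegral_lintegral_fin_cons, hf, hg, hh]
    refine prekopa_leindler_real ha hb hab (hf.comp (measurable_fin_cons k)).lintegral_prod_right'
      (hg.comp (measurable_fin_cons k)).lintegral_prod_right'
      (hh.comp (measurable_fin_cons k)).lintegral_prod_right' fun s t => ?_
    refine ih (hf.comp (hcons s)) (hg.comp (hcons t)) (hh.comp (hcons _)) fun x y => ?_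
    refine (H (Fin.cons s x) (Fin.cons t y)).trans_eq (congrArg h ?_)
    ext i
    refine i.cases ?_ (fun j => ?_) <;> simp

theorem exists_measurable_ge_ae_eq {α : Type*} [MeasurableSpace α] {μ : Measure α}
    {h : α → ℝ≥0∞} (hh : AEMeasurable h μ) : ∃ h', Measurable h' ∧ h ≤ h' ∧ h' =ᵐ[μ] h := by
  classical
  set N := toMeasurable μ {x | ¬ h x = hh.mk h x}
  have hN : μ N = 0 := (measure_toMeasurable _).trans hh.ae_eq_mk
  refine ⟨N.piecewise (fun _ => ∞) (hh.mk h),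
    measurable_const.piecewise (measurableSet_toMeasurable _ _) hh.measurable_mk, fun x => ?_, ?_⟩
  · by_cases hx : x ∈ N
    · simp [hx]
    · have : h x = hh.mk h x := not_not.1 fun h' => hx (subset_toMeasurable _ _ h')
      simp [hx, this]
  · filter_upwards [hh.ae_eq_mk, measure_eq_zero_iff_ae_notMem.1 hN] with x hx hxN
    simp [hxN, hx]

theorem prekopa_leindler {k : ℕ} (ha : 0 < a) (hb : 0 < b) (hab : a + b = 1)
    {f g h : EuclideanSpace ℝ (Fin k) → ℝ≥0∞} (hh : AEMeasurable h)
    (H : ∀ x y, f x ^ a * g y ^ b ≤ h (a • x + b • y)) :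
    (∫⁻ x, f x) ^ a * (∫⁻ x, g x) ^ b ≤ ∫⁻ x, h x := by
  obtain ⟨f', hf', hff', hfi⟩ := exists_measurable_le_lintegral_eq volume f
  obtain ⟨g', hg', hgg', hgi⟩ := exists_measurable_le_lintegral_eq volume g
  obtain ⟨h', hh', hhh', hhi⟩ := exists_measurable_ge_ae_eq hh
  have e := PiLp.volume_preserving_toLp (Fin k)
  rw [hfi, hgi, ← lintegral_congr_ae hhi, ← e.lintegral_comp hf', ← e.lintegral_comp hg',
    ← e.lintegral_comp hh']
  refine prekopa_leindler_pi k ha hb hab (hf'.comp e.measurable) (hg'.comp e.measurable)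
    (hh'.comp e.measurable) fun x y => ?_
  calc f' (WithLp.toLp 2 x) ^ a * g' (WithLp.toLp 2 y) ^ b
    _ ≤ f (WithLp.toLp 2 x) ^ a * g (WithLp.toLp 2 y) ^ b := by gcongr <;> [apply hff'; apply hgg']
    _ ≤ h (a • WithLp.toLp 2 x + b • WithLp.toLp 2 y) := H _ _
    _ ≤ h' (WithLp.toLp 2 (a • x + b • y)) := by simpa using hhh' _

end PrekopaLeindler

section LogLaplace

variable {E : Type*} [NormedAddCommGroup E] [InnerProductSpace ℝ E]

/-- The exponential tilt `exp (l ⟪x, y⟫ - u x)` of the density `exp (-u)` in the direction `y`. -/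
def tilt (l : ℝ) (u : E → ℝ) (y x : E) : ℝ := Real.exp (l * inner ℝ x y - u x)

theorem tilt_pos (l : ℝ) (u : E → ℝ) (y x : E) : 0 < tilt l u y x := Real.exp_pos _

theorem tilt_add (l : ℝ) (u : E → ℝ) (y h x : E) :
    tilt l u (y + h) x = tilt l u y x * Real.exp (l * inner ℝ x h) := by
  rw [tilt, tilt, ← Real.exp_add, inner_add_right]
  ring_nf

variable [MeasurableSpace E]

/-- The measure `exp (-u) μ` has finite exponential moments of all orders. -/
def ExpIntegrable (μ : Measure E) (u : E → ℝ) : Prop :=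
  ∀ c : ℝ, Integrable (fun x => Real.exp (c * ‖x‖ - u x)) μ

/-- The Laplace transform of the measure `exp (-u) μ`, with frequencies scaled by `l`. -/
def laplace (l : ℝ) (μ : Measure E) (u : E → ℝ) (y : E) : ℝ := ∫ x, tilt l u y x ∂μ

/-- The log-Laplace transform of the measure `exp (-u) μ`, with frequencies scaled by `l`. -/
def logLaplace (l : ℝ) (μ : Measure E) (u : E → ℝ) (y : E) : ℝ := Real.log (laplace l μ u y)

/-- The barycenter of the probability measure proportional to `tilt l u y • μ`. -/
def tiltMean (l : ℝ) (μ : Measure E) (u : E → ℝ) (y : E) : E :=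
  (laplace l μ u y)⁻¹ • ∫ x, tilt l u y x • x ∂μ

variable {μ : Measure E} {u : E → ℝ}

section Integrability

variable [BorelSpace E]

theorem ExpIntegrable.integrable_exp_mul_tilt (hu : ExpIntegrable μ u) (l c : ℝ) (y : E) :
    Integrable (fun x => Real.exp (c * ‖x‖) * tilt l u y x) μ := by
  refine (hu (c + |l| * ‖y‖)).mono' ?_ (.of_forall fun x => ?_)
  · have factor : (fun x => Real.exp (c * ‖x‖) * tilt l u y x) = fun x =>
        Real.exp (c * ‖x‖ + l * inner ℝ x y) * Real.exp (0 * ‖x‖ - u x) := by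
      ext x
      rw [tilt, ← Real.exp_add, ← Real.exp_add]
      ring_nf
    rw [factor]
    exact (Continuous.aestronglyMeasurable (by fun_prop)).mul (hu 0).aestronglyMeasurable
  · rw [Real.norm_of_nonneg (mul_nonneg (Real.exp_pos _).le (tilt_pos l u y x).le), tilt,
      ← Real.exp_add, Real.exp_le_exp]
    have cauchy_schwarz : l * inner ℝ x y ≤ |l| * (‖x‖ * ‖y‖) := by
      refine (le_abs_self _).trans ?_
      rw [abs_mul]
      exact mul_le_mul_of_nonneg_left (abs_real_inner_le_norm x y) (abs_nonneg l)
    linarith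

theorem ExpIntegrable.integrable_tilt (hu : ExpIntegrable μ u) (l : ℝ) (y : E) :
    Integrable (tilt l u y) μ := by
  simpa using hu.integrable_exp_mul_tilt l 0 y

theorem ExpIntegrable.integrable_tilt_smul [SecondCountableTopology E] (hu : ExpIntegrable μ u)
    (l : ℝ) (y : E) : Integrable (fun x => tilt l u y x • x) μ := by
  refine (hu.integrable_exp_mul_tilt l 1 y).mono' ?_ (.of_forall fun x => ?_)
  · exact (hu.integrable_tilt l y).aestronglyMeasurable.smul continuous_id.aestronglyMeasurable
  · rw [norm_smul, Real.norm_of_nonneg (tilt_pos l u y x).le, mul_comm]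
    refine mul_le_mul_of_nonneg_right ?_ (tilt_pos l u y x).le
    linarith [Real.add_one_le_exp (1 * ‖x‖)]

theorem ExpIntegrable.integrable_tilt_mul_inner [SecondCountableTopology E]
    (hu : ExpIntegrable μ u) (l : ℝ) (y h : E) :
    Integrable (fun x => tilt l u y x * inner ℝ x h) μ := by
  simpa [inner_smul_left] using (hu.integrable_tilt_smul l y).inner_const (𝕜 := ℝ) h

theorem ExpIntegrable.integrable_tilt_mul_norm_sub_sq (hu : ExpIntegrable μ u) (l : ℝ) (y p : E) :
    Integrable (fun x => tilt l u y x * ‖x - p‖ ^ 2) μ := by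
  refine ((hu.integrable_exp_mul_tilt l 1 y).const_mul (2 * Real.exp ‖p‖)).mono' ?_
    (.of_forall fun x => ?_)
  · exact (hu.integrable_tilt l y).aestronglyMeasurable.mul
      (Continuous.aestronglyMeasurable (by fun_prop))
  · rw [Real.norm_of_nonneg (mul_nonneg (tilt_pos l u y x).le (sq_nonneg _))]
    have sq_le : ‖x - p‖ ^ 2 ≤ 2 * (Real.exp ‖p‖ * Real.exp (1 * ‖x‖)) := by
      have exp_le : Real.exp ‖x - p‖ ≤ Real.exp (‖p‖ + 1 * ‖x‖) :=
        Real.exp_le_exp.2 (by linarith [norm_sub_le x p])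
      rw [← Real.exp_add]
      linarith [Real.quadratic_le_exp_of_nonneg (norm_nonneg (x - p)), norm_nonneg (x - p)]
    calc tilt l u y x * ‖x - p‖ ^ 2
        ≤ tilt l u y x * (2 * (Real.exp ‖p‖ * Real.exp (1 * ‖x‖))) :=
          mul_le_mul_of_nonneg_left sq_le (tilt_pos l u y x).le
      _ = _ := by ring

theorem laplace_pos (hu : ExpIntegrable μ u) (hμ : μ ≠ 0) (l : ℝ) (y : E) :
    0 < laplace l μ u y := by
  have : NeZero μ := ⟨hμ⟩
  exact integral_exp_pos (hu.integrable_tilt l y)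

theorem exp_logLaplace (hu : ExpIntegrable μ u) (hμ : μ ≠ 0) (l : ℝ) (y : E) :
    Real.exp (logLaplace l μ u y) = laplace l μ u y :=
  Real.exp_log (laplace_pos hu hμ l y)

variable [SecondCountableTopology E] [CompleteSpace E]

theorem integral_tilt_mul_inner (hu : ExpIntegrable μ u) (hμ : μ ≠ 0) (l : ℝ) (y h : E) :
    ∫ x, tilt l u y x * inner ℝ x h ∂μ = laplace l μ u y * inner ℝ (tiltMean l μ u y) h := by
  have pull_out : ∫ x, tilt l u y x * inner ℝ x h ∂μ = inner ℝ (∫ x, tilt l u y x • x ∂μ) h := by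
    rw [real_inner_comm, ← integral_inner (hu.integrable_tilt_smul l y)]
    simp only [inner_smul_right, real_inner_comm]
  rw [pull_out, tiltMean, real_inner_smul_left, mul_inv_cancel_left₀ (laplace_pos hu hμ l y).ne']

theorem integral_tilt_mul_one_add_inner_sub_tiltMean (hu : ExpIntegrable μ u) (hμ : μ ≠ 0) (l : ℝ)
    (y h : E) :
    Integrable (fun x => tilt l u y x * (1 + l * inner ℝ (x - tiltMean l μ u y) h)) μ ∧
      ∫ x, tilt l u y x * (1 + l * inner ℝ (x - tiltMean l μ u y) h) ∂μ = laplace l μ u y := by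
  set p := tiltMean l μ u y with hp
  have expand : (fun x => tilt l u y x * (1 + l * inner ℝ (x - p) h)) = fun x =>
      (1 - l * inner ℝ p h) * tilt l u y x + l * (tilt l u y x * inner ℝ x h) := by
    ext x
    rw [inner_sub_left]
    ring
  have int_const := (hu.integrable_tilt l y).const_mul (1 - l * inner ℝ p h)
  have int_inner := (hu.integrable_tilt_mul_inner l y h).const_mul l
  rw [expand]
  refine ⟨int_const.add int_inner, ?_⟩
  rw [integral_add int_const int_inner, integral_const_mul, integral_const_mul,
    integral_tilt_mul_inner hu hμ, ← hp, ← laplace]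
  ring

/-- Jensen's inequality, via `1 + t ≤ exp t`: the barycenter is a subgradient. -/
theorem logLaplace_add_ge (hu : ExpIntegrable μ u) (hμ : μ ≠ 0) (l : ℝ) (y h : E) :
    logLaplace l μ u y + l * inner ℝ (tiltMean l μ u y) h ≤ logLaplace l μ u (y + h) := by
  set p := tiltMean l μ u y
  have laplace_y_pos := laplace_pos hu hμ l y
  obtain ⟨int_linear, integral_linear⟩ :=
    integral_tilt_mul_one_add_inner_sub_tiltMean hu hμ l y h
  rw [logLaplace, logLaplace, ← Real.log_exp (l * inner ℝ p h),
    ← Real.log_mul laplace_y_pos.ne' (Real.exp_ne_zero _)]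
  refine Real.log_le_log (by positivity) ?_
  rw [← integral_linear, mul_comm, ← integral_const_mul]
  refine integral_mono (int_linear.const_mul _) (hu.integrable_tilt l (y + h)) fun x => ?_
  have exp_split : Real.exp (l * inner ℝ x h) =
      Real.exp (l * inner ℝ p h) * Real.exp (l * inner ℝ (x - p) h) := by
    rw [← Real.exp_add, inner_sub_left]
    ring_nf
  have := tilt_pos l u y x
  simp only [tilt_add, exp_split]
  rw [mul_left_comm]
  gcongr
  linarith [Real.add_one_le_exp (l * inner ℝ (x - p) h)]

end Integrability

theorem sq_le_exp_add_exp_neg_sub_two (t : ℝ) : t ^ 2 ≤ Real.exp t + Real.exp (-t) - 2 := by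
  have half_sq_le : (t / 2) ^ 2 ≤ Real.sinh (t / 2) ^ 2 := by
    rw [← sq_abs, ← sq_abs (Real.sinh _), Real.abs_sinh]
    exact pow_le_pow_left₀ (abs_nonneg _) (Real.self_le_sinh_iff.2 (abs_nonneg _)) 2
  have double_angle := Real.cosh_two_mul (t / 2)
  rw [mul_div_cancel₀ t two_ne_zero, Real.cosh_eq, Real.cosh_sq] at double_angle
  linarith

theorem integral_tilt_mul_inner_sub_sq_le [BorelSpace E] (hu : ExpIntegrable μ u) (l : ℝ)
    (y h p : E) : ∫ x, tilt l u y x * (l * inner ℝ (x - p) h) ^ 2 ∂μ ≤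
      Real.exp (-(l * inner ℝ p h)) * laplace l μ u (y + h) +
      Real.exp (l * inner ℝ p h) * laplace l μ u (y - h) - 2 * laplace l μ u y := by
  have int_plus := (hu.integrable_tilt l (y + h)).const_mul (Real.exp (-(l * inner ℝ p h)))
  have int_minus := (hu.integrable_tilt l (y - h)).const_mul (Real.exp (l * inner ℝ p h))
  have int_zero := (hu.integrable_tilt l y).const_mul 2
  rw [laplace, laplace, laplace, ← integral_const_mul, ← integral_const_mul,
    ← integral_const_mul, ← integral_add int_plus int_minus]
  refine le_of_le_of_eq ?_ (integral_sub (int_plus.add int_minus) int_zero)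
  refine integral_mono_of_nonneg
    (.of_forall fun x => mul_nonneg (tilt_pos l u y x).le (sq_nonneg _))
    ((int_plus.add int_minus).sub int_zero) (.of_forall fun x => ?_)
  set t := l * inner ℝ (x - p) h with ht
  have tilt_plus : Real.exp (-(l * inner ℝ p h)) * tilt l u (y + h) x =
      tilt l u y x * Real.exp t := by
    rw [tilt_add, ht, inner_sub_left, mul_left_comm, ← Real.exp_add]
    ring_nf
  have tilt_minus : Real.exp (l * inner ℝ p h) * tilt l u (y - h) x =
      tilt l u y x * Real.exp (-t) := by
    rw [sub_eq_add_neg, tilt_add, ht, inner_sub_left, inner_neg_right, mul_left_comm,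
      ← Real.exp_add]
    ring_nf
  simp only [tilt_plus, tilt_minus]
  nlinarith [sq_le_exp_add_exp_neg_sub_two t, tilt_pos l u y x]

end LogLaplace

section SmoothConvex

variable {E : Type*} [NormedAddCommGroup E] [InnerProductSpace ℝ E]

/-- `T` is the gradient of the convex function `φ`, and `∇²φ ≤ a`: the two inequalities express
this without differentiating, so that it passes to limits. -/
def IsSmoothConvexGrad (a : ℝ) (φ : E → ℝ) (T : E → E) : Prop :=
  ∀ x h, φ x + inner ℝ (T x) h ≤ φ (x + h) ∧
    φ (x + h) ≤ φ x + inner ℝ (T x) h + a / 2 * ‖h‖ ^ 2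

/-- `u - α ‖·‖² / 2` is concave, i.e. `∇²u ≤ α`. -/
def Semiconcave (α : ℝ) (u : E → ℝ) : Prop :=
  ∀ x y : E, ∀ t s : ℝ, 0 < t → 0 < s → t + s = 1 →
    t * u x + s * u y - α / 2 * (t * s) * ‖x - y‖ ^ 2 ≤ u (t • x + s • y)

/-- `v - κ ‖·‖² / 2` is convex, i.e. `κ ≤ ∇²v`. -/
def Semiconvex (κ : ℝ) (v : E → ℝ) : Prop :=
  ∀ x y : E, ∀ t s : ℝ, 0 < t → 0 < s → t + s = 1 →
    v (t • x + s • y) ≤ t * v x + s * v y - κ / 2 * (t * s) * ‖x - y‖ ^ 2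

theorem Semiconcave.mono {α α' : ℝ} (h : α ≤ α') {u : E → ℝ} (hu : Semiconcave α u) :
    Semiconcave α' u := fun x y t s ht hs hts =>
  (sub_le_sub_left (by gcongr) _).trans (hu x y t s ht hs hts)

theorem Semiconcave.le_add_of_subgradient_of_pos {α : ℝ} {u : E → ℝ} (hu : Semiconcave α u)
    {x p : E} (hp : ∀ h, u x + inner ℝ p h ≤ u (x + h)) (h : E) {r : ℝ} (hr : 0 < r) :
    u (x + h) ≤ u x + inner ℝ p h + α / 2 * ((1 + r) * ‖h‖ ^ 2) := by
  -- `x` divides the segment from `x + h` to `x - r • h`; the subgradient bounds `u (x - r • h)`.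
  have semiconcave_at := hu (x + h) (x + -r • h) (r / (1 + r)) (1 / (1 + r)) (by positivity)
    (by positivity) (by field_simp; ring)
  have subgradient_at := hp (-r • h)
  have combination : (r / (1 + r)) • (x + h) + (1 / (1 + r)) • (x + -r • h) = x := by
    match_scalars <;> field_simp <;> ring
  have difference : x + h - (x + -r • h) = (1 + r) • h := by module
  rw [combination, difference, norm_smul, mul_pow, Real.norm_eq_abs, sq_abs] at semiconcave_at
  rw [inner_smul_right] at subgradient_at
  have scaled := mul_le_mul_of_nonneg_left semiconcave_at (by positivity : 0 ≤ 1 + r)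
  have expand : (1 + r) * (r / (1 + r) * u (x + h) + 1 / (1 + r) * u (x + -r • h) -
      α / 2 * (r / (1 + r) * (1 / (1 + r))) * ((1 + r) ^ 2 * ‖h‖ ^ 2)) =
      r * u (x + h) + u (x + -r • h) - r * (α / 2 * ((1 + r) * ‖h‖ ^ 2)) := by
    field_simp
  rw [expand] at scaled
  refine le_of_mul_le_mul_left ?_ hr
  linarith

theorem Semiconcave.le_add_of_subgradient {α : ℝ} {u : E → ℝ} (hu : Semiconcave α u) {x p : E}
    (hp : ∀ h, u x + inner ℝ p h ≤ u (x + h)) (h : E) :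
    u (x + h) ≤ u x + inner ℝ p h + α / 2 * ‖h‖ ^ 2 := by
  have bound_tendsto : Filter.Tendsto
      (fun r : ℝ => u x + inner ℝ p h + α / 2 * ((1 + r) * ‖h‖ ^ 2)) (nhdsWithin 0 (Set.Ioi 0))
      (nhds (u x + inner ℝ p h + α / 2 * ((1 + 0) * ‖h‖ ^ 2))) :=
    (Continuous.tendsto (by fun_prop) 0).mono_left nhdsWithin_le_nhds
  rw [add_zero, one_mul] at bound_tendsto
  refine ge_of_tendsto bound_tendsto ?_
  filter_upwards [self_mem_nhdsWithin] with r hr using hu.le_add_of_subgradient_of_pos hp h hr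

namespace IsSmoothConvexGrad

variable {a a' : ℝ} {φ : E → ℝ} {T : E → E}

theorem mono (h : IsSmoothConvexGrad a φ T) (haa : a ≤ a') : IsSmoothConvexGrad a' φ T :=
  fun x y => ⟨(h x y).1, (h x y).2.trans (by gcongr)⟩

theorem sub_add_inner_le (h : IsSmoothConvexGrad a φ T) (ha : 0 < a) (x y : E) :
    φ x - φ y + inner ℝ (T x) (y - x) ≤ -(‖T x - T y‖ ^ 2 / (2 * a)) := by
  -- compare the two bounds on `φ` at the minimiser of the upper quadratic bound minus `⟪T x, ·⟫`
  have lower := (h x (y - x + (1 / a) • (T x - T y))).1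
  have upper := (h y ((1 / a) • (T x - T y))).2
  have same_point : x + (y - x + (1 / a) • (T x - T y)) = y + (1 / a) • (T x - T y) := by abel
  rw [same_point, inner_add_right] at lower
  have linear_gap : inner ℝ (T x) ((1 / a) • (T x - T y)) - inner ℝ (T y) ((1 / a) • (T x - T y)) =
      2 * (‖T x - T y‖ ^ 2 / (2 * a)) := by
    rw [← inner_sub_left, inner_smul_right, real_inner_self_eq_norm_sq]
    field_simp
  have quadratic : a / 2 * ‖(1 / a) • (T x - T y)‖ ^ 2 = ‖T x - T y‖ ^ 2 / (2 * a) := by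
    rw [norm_smul, mul_pow, Real.norm_eq_abs, sq_abs]
    field_simp
  linarith

theorem norm_sub_sq_le (h : IsSmoothConvexGrad a φ T) (ha : 0 < a) (x y : E) :
    ‖T x - T y‖ ^ 2 ≤ a * inner ℝ (T x - T y) (x - y) := by
  have at_xy := h.sub_add_inner_le ha x y
  have at_yx := h.sub_add_inner_le ha y x
  rw [norm_sub_rev (T y)] at at_yx
  have inner_sum : inner ℝ (T x) (y - x) + inner ℝ (T y) (x - y) =
      -inner ℝ (T x - T y) (x - y) := by
    rw [inner_sub_left, ← neg_sub x y, inner_neg_right]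
    ring
  calc ‖T x - T y‖ ^ 2 = a * (2 * (‖T x - T y‖ ^ 2 / (2 * a))) := by field_simp
    _ ≤ a * inner ℝ (T x - T y) (x - y) := by gcongr; linarith

theorem norm_sub_le (h : IsSmoothConvexGrad a φ T) (ha : 0 < a) (x y : E) :
    ‖T x - T y‖ ≤ a * ‖x - y‖ := by
  rcases (norm_nonneg (T x - T y)).eq_or_lt with h_zero | h_pos
  · rw [← h_zero]
    positivity
  · refine le_of_mul_le_mul_left ?_ h_pos
    calc ‖T x - T y‖ * ‖T x - T y‖ ≤ a * inner ℝ (T x - T y) (x - y) := by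
          rw [← sq]
          exact h.norm_sub_sq_le ha x y
      _ ≤ a * (‖T x - T y‖ * ‖x - y‖) := by gcongr; exact real_inner_le_norm _ _
      _ = ‖T x - T y‖ * (a * ‖x - y‖) := by ring

theorem lipschitzWith (h : IsSmoothConvexGrad a φ T) (ha : 0 < a) :
    LipschitzWith a.toNNReal T :=
  LipschitzWith.of_dist_le_mul fun x y => by
    rw [dist_eq_norm, dist_eq_norm, Real.coe_toNNReal _ ha.le]
    exact h.norm_sub_le ha x y

end IsSmoothConvexGrad

end SmoothConvex

section ExtendedExp

/-- The exponential function with values in `[0, ∞]`. -/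
def eexp (r : ℝ) : ℝ≥0∞ := ENNReal.ofReal (Real.exp r)

theorem eexp_add (r s : ℝ) : eexp (r + s) = eexp r * eexp s := by
  rw [eexp, Real.exp_add, ENNReal.ofReal_mul (Real.exp_pos _).le, eexp, eexp]

theorem eexp_rpow (r t : ℝ) : eexp r ^ t = eexp (t * r) := by
  rw [eexp, ENNReal.ofReal_rpow_of_pos (Real.exp_pos _), ← Real.exp_mul, eexp, mul_comm]

@[gcongr]
theorem eexp_mono {r s : ℝ} (h : r ≤ s) : eexp r ≤ eexp s :=
  ENNReal.ofReal_le_ofReal (Real.exp_le_exp.2 h)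

theorem eexp_le_eexp {r s : ℝ} : eexp r ≤ eexp s ↔ r ≤ s := by
  rw [eexp, eexp, ENNReal.ofReal_le_ofReal_iff (Real.exp_pos _).le, Real.exp_le_exp]

theorem eexp_ne_top (r : ℝ) : eexp r ≠ ∞ := ENNReal.ofReal_ne_top

@[fun_prop]
theorem measurable_eexp : Measurable eexp :=
  ENNReal.measurable_ofReal.comp Real.measurable_exp

end ExtendedExp

section TiltedExponents

variable {E : Type*} [NormedAddCommGroup E] [InnerProductSpace ℝ E] {t s : ℝ}

theorem inner_combo_combo (hts : t + s = 1) (x₁ x₂ y₁ y₂ : E) :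
    inner ℝ (t • x₁ + s • x₂) (t • y₁ + s • y₂) =
      t * inner ℝ x₁ y₁ + s * inner ℝ x₂ y₂ - t * s * inner ℝ (x₁ - x₂) (y₁ - y₂) := by
  obtain rfl : s = 1 - t := by linarith
  simp only [inner_add_left, inner_add_right, inner_sub_left, inner_sub_right, inner_smul_left,
    inner_smul_right, RCLike.conj_to_real]
  ring

theorem mul_inner_le_sq_add_sq {K : ℝ} (hK : 0 < K) (l : ℝ) (x y : E) :
    l * inner ℝ x y ≤ K / 2 * ‖x‖ ^ 2 + l ^ 2 / K / 2 * ‖y‖ ^ 2 := by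
  have complete_square : K / 2 * ‖x‖ ^ 2 + l ^ 2 / K / 2 * ‖y‖ ^ 2 - l * inner ℝ x y =
      ‖K • x - l • y‖ ^ 2 / (2 * K) := by
    rw [norm_sub_sq_real, norm_smul, norm_smul, real_inner_smul_left, real_inner_smul_right,
      mul_pow, mul_pow, Real.norm_eq_abs, Real.norm_eq_abs, sq_abs, sq_abs]
    field_simp
    ring
  have : 0 ≤ ‖K • x - l • y‖ ^ 2 / (2 * K) := by positivity
  linarith

theorem Semiconcave.tilt_exponent_le {α b : ℝ} {u : E → ℝ} (hu : Semiconcave α u)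
    (hK : 0 < α + b) (ht : 0 < t) (hs : 0 < s) (hts : t + s = 1) {l : ℝ} {x₁ x₂ y₁ y₂ : E}
    (hx : x₁ - x₂ = (l / (α + b)) • (y₁ - y₂)) :
    b / 2 * (t * s) * ‖x₁ - x₂‖ ^ 2 +
        (l * inner ℝ (t • x₁ + s • x₂) (t • y₁ + s • y₂) - u (t • x₁ + s • x₂)) ≤
      -(l ^ 2 / (α + b) / 2 * (t * s) * ‖y₁ - y₂‖ ^ 2) +
        (t * (l * inner ℝ x₁ y₁ - u x₁) + s * (l * inner ℝ x₂ y₂ - u x₂)) := by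
  have semiconcave_at := hu x₁ x₂ t s ht hs hts
  have norm_sq : ‖x₁ - x₂‖ ^ 2 = (l / (α + b)) ^ 2 * ‖y₁ - y₂‖ ^ 2 := by
    rw [hx, norm_smul, mul_pow, Real.norm_eq_abs, sq_abs]
  have inner_eq : inner ℝ (x₁ - x₂) (y₁ - y₂) = l / (α + b) * ‖y₁ - y₂‖ ^ 2 := by
    rw [hx, real_inner_smul_left, real_inner_self_eq_norm_sq]
  have quadratic : (α + b) / 2 * ‖x₁ - x₂‖ ^ 2 - l * inner ℝ (x₁ - x₂) (y₁ - y₂) =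
      -(l ^ 2 / (α + b) / 2 * ‖y₁ - y₂‖ ^ 2) := by
    rw [norm_sq, inner_eq]
    field_simp
    ring
  rw [inner_combo_combo hts]
  linear_combination semiconcave_at + t * s * quadratic

theorem Semiconvex.le_tilt_exponent {κ β : ℝ} {v : E → ℝ} (hv : Semiconvex κ v)
    (hK : 0 < κ + β) (ht : 0 < t) (hs : 0 < s) (hts : t + s = 1) (l : ℝ) (y₁ y₂ x₁ x₂ : E) :
    t * (l * inner ℝ y₁ x₁ - v y₁) + s * (l * inner ℝ y₂ x₂ - v y₂) ≤
      β / 2 * (t * s) * ‖y₁ - y₂‖ ^ 2 + (l ^ 2 / (κ + β) / 2 * (t * s) * ‖x₁ - x₂‖ ^ 2 +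
        (l * inner ℝ (t • y₁ + s • y₂) (t • x₁ + s • x₂) - v (t • y₁ + s • y₂))) := by
  have semiconvex_at := hv y₁ y₂ t s ht hs hts
  have young := mul_le_mul_of_nonneg_left
    (mul_inner_le_sq_add_sq hK l (y₁ - y₂) (x₁ - x₂)) (mul_pos ht hs).le
  rw [inner_combo_combo hts]
  linear_combination semiconvex_at + young

end TiltedExponents

section Regularity

variable {k : ℕ}

local notation "𝔼" => EuclideanSpace ℝ (Fin k)

/-- `F · exp (b ‖·‖² / 2)` is log-convex; stated multiplicatively, to allow the values `0`, `∞`. -/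
def LogSemiconvex (b : ℝ) (F : EuclideanSpace ℝ (Fin k) → ℝ≥0∞) : Prop :=
  ∀ x y, ∀ t s : ℝ, 0 < t → 0 < s → t + s = 1 →
    F (t • x + s • y) ≤ F x ^ t * F y ^ s * eexp (b / 2 * (t * s) * ‖x - y‖ ^ 2)

/-- `G · exp (β ‖·‖² / 2)` is log-concave; stated multiplicatively, to allow the values `0`,
`∞`. -/
def LogSemiconcave (β : ℝ) (G : EuclideanSpace ℝ (Fin k) → ℝ≥0∞) : Prop :=
  ∀ x y, ∀ t s : ℝ, 0 < t → 0 < s → t + s = 1 →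
    G x ^ t * G y ^ s * eexp (β / 2 * (t * s) * ‖x - y‖ ^ 2) ≤ G (t • x + s • y)

/-- The density of the tilt of the measure with density `F exp (-u)`; its total mass is the
Laplace transform. -/
def tiltDensity (l : ℝ) (F : EuclideanSpace ℝ (Fin k) → ℝ≥0∞)
    (u : EuclideanSpace ℝ (Fin k) → ℝ) (y x : EuclideanSpace ℝ (Fin k)) : ℝ≥0∞ :=
  F x * eexp (l * inner ℝ x y - u x)

variable {F G : EuclideanSpace ℝ (Fin k) → ℝ≥0∞} {u v : EuclideanSpace ℝ (Fin k) → ℝ} {t s : ℝ}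

theorem aemeasurable_tiltDensity (hF : AEMeasurable F) (hu : Measurable u) (l : ℝ) (y : 𝔼) :
    AEMeasurable (tiltDensity l F u y) :=
  hF.mul (Measurable.aemeasurable (by fun_prop))

theorem lintegral_tiltDensity (hF : AEMeasurable F) (hu : ExpIntegrable (volume.withDensity F) u)
    (hμ : volume.withDensity F ≠ 0) (l : ℝ) (y : 𝔼) :
    ∫⁻ x, tiltDensity l F u y x = eexp (logLaplace l (volume.withDensity F) u y) := by
  rw [eexp, exp_logLaplace hu hμ, laplace, ofReal_integral_eq_lintegral_ofReal
    (hu.integrable_tilt l y) (.of_forall fun x => (tilt_pos l u y x).le),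
    lintegral_withDensity_eq_lintegral_mul₀' hF]
  · rfl
  · exact (hu.integrable_tilt l y).aestronglyMeasurable.aemeasurable.ennreal_ofReal

theorem tiltDensity_rpow_mul_rpow (ht : 0 < t) (hs : 0 < s) (l : ℝ) (y₁ y₂ x₁ x₂ : 𝔼) :
    tiltDensity l F u y₁ x₁ ^ t * tiltDensity l F u y₂ x₂ ^ s = F x₁ ^ t * F x₂ ^ s *
      eexp (t * (l * inner ℝ x₁ y₁ - u x₁) + s * (l * inner ℝ x₂ y₂ - u x₂)) := by
  simp only [tiltDensity]
  rw [ENNReal.mul_rpow_of_nonneg _ _ ht.le, ENNReal.mul_rpow_of_nonneg _ _ hs.le,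
    eexp_rpow, eexp_rpow, eexp_add]
  ring

theorem LogSemiconvex.tiltDensity_combo_le {b α : ℝ} (hF : LogSemiconvex b F)
    (hu : Semiconcave α u) (hK : 0 < α + b) (ht : 0 < t) (hs : 0 < s) (hts : t + s = 1) {l : ℝ}
    {x₁ x₂ y₁ y₂ : 𝔼} (hx : x₁ - x₂ = (l / (α + b)) • (y₁ - y₂)) :
    tiltDensity l F u (t • y₁ + s • y₂) (t • x₁ + s • x₂) ≤
      eexp (-(l ^ 2 / (α + b) / 2 * (t * s) * ‖y₁ - y₂‖ ^ 2)) *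
        (tiltDensity l F u y₁ x₁ ^ t * tiltDensity l F u y₂ x₂ ^ s) := by
  calc tiltDensity l F u (t • y₁ + s • y₂) (t • x₁ + s • x₂)
      ≤ F x₁ ^ t * F x₂ ^ s * eexp (b / 2 * (t * s) * ‖x₁ - x₂‖ ^ 2) *
          eexp (l * inner ℝ (t • x₁ + s • x₂) (t • y₁ + s • y₂) - u (t • x₁ + s • x₂)) :=
        mul_le_mul_left (hF x₁ x₂ t s ht hs hts) _
    _ ≤ F x₁ ^ t * F x₂ ^ s * eexp (-(l ^ 2 / (α + b) / 2 * (t * s) * ‖y₁ - y₂‖ ^ 2) +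
          (t * (l * inner ℝ x₁ y₁ - u x₁) + s * (l * inner ℝ x₂ y₂ - u x₂))) := by
        rw [mul_assoc, ← eexp_add]
        exact mul_le_mul_right (eexp_mono (hu.tilt_exponent_le hK ht hs hts hx)) _
    _ = _ := by
        rw [tiltDensity_rpow_mul_rpow ht hs, eexp_add]
        ring

theorem LogSemiconcave.tiltDensity_rpow_mul_rpow_le {β κ : ℝ} (hG : LogSemiconcave β G)
    (hv : Semiconvex κ v) (hK : 0 < κ + β) (ht : 0 < t) (hs : 0 < s) (hts : t + s = 1) (l : ℝ)
    (x₁ x₂ y₁ y₂ : 𝔼) :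
    tiltDensity l G v x₁ y₁ ^ t * tiltDensity l G v x₂ y₂ ^ s ≤
      eexp (l ^ 2 / (κ + β) / 2 * (t * s) * ‖x₁ - x₂‖ ^ 2) *
        tiltDensity l G v (t • x₁ + s • x₂) (t • y₁ + s • y₂) := by
  set c := l ^ 2 / (κ + β) / 2 * (t * s) * ‖x₁ - x₂‖ ^ 2
  set e := l * inner ℝ (t • y₁ + s • y₂) (t • x₁ + s • x₂) - v (t • y₁ + s • y₂) with he
  rw [tiltDensity_rpow_mul_rpow ht hs]
  calc _ ≤ G y₁ ^ t * G y₂ ^ s * eexp (β / 2 * (t * s) * ‖y₁ - y₂‖ ^ 2 + (c + e)) :=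
        mul_le_mul_right (eexp_mono (hv.le_tilt_exponent hK ht hs hts l y₁ y₂ x₁ x₂)) _
    _ = G y₁ ^ t * G y₂ ^ s * eexp (β / 2 * (t * s) * ‖y₁ - y₂‖ ^ 2) * eexp (c + e) := by
        rw [eexp_add, ← mul_assoc]
    _ ≤ G (t • y₁ + s • y₂) * eexp (c + e) := mul_le_mul_left (hG y₁ y₂ t s ht hs hts) _
    _ = _ := by
        rw [tiltDensity, ← he, eexp_add]
        ring

/-- Hölder's inequality, applied to the tilted densities after translating them apart by the
optimal vector. -/
theorem LogSemiconvex.semiconvex_logLaplace {b α : ℝ} (hFb : LogSemiconvex b F)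
    (hF : AEMeasurable F) (hu : Semiconcave α u) (hum : Measurable u)
    (hui : ExpIntegrable (volume.withDensity F) u) (hμ : volume.withDensity F ≠ 0) (l : ℝ)
    (hK : 0 < α + b) :
    Semiconvex (l ^ 2 / (α + b)) (logLaplace l (volume.withDensity F) u) := by
  intro y₁ y₂ t s ht hs hts
  set d := (l / (α + b)) • (y₁ - y₂)
  set c := l ^ 2 / (α + b) / 2 * (t * s) * ‖y₁ - y₂‖ ^ 2
  have meas_translate (y e : 𝔼) : AEMeasurable fun x => tiltDensity l F u y (x + e) :=
    (aemeasurable_tiltDensity hF hum l y).comp_quasiMeasurePreserving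
      (measurePreserving_add_right volume e).quasiMeasurePreserving
  have pointwise (x : 𝔼) : tiltDensity l F u (t • y₁ + s • y₂) x ≤ eexp (-c) *
      (tiltDensity l F u y₁ (x + s • d) ^ t * tiltDensity l F u y₂ (x + -t • d) ^ s) := by
    obtain rfl : s = 1 - t := by linarith
    have combination : t • (x + (1 - t) • d) + (1 - t) • (x + -t • d) = x := by module
    have difference : x + (1 - t) • d - (x + -t • d) = d := by module
    simpa only [combination] using hFb.tiltDensity_combo_le hu hK ht hs hts difference
  have bound : eexp (logLaplace l (volume.withDensity F) u (t • y₁ + s • y₂)) ≤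
      eexp (-c) * ((∫⁻ x, tiltDensity l F u y₁ x) ^ t * (∫⁻ x, tiltDensity l F u y₂ x) ^ s) :=
    calc eexp (logLaplace l (volume.withDensity F) u (t • y₁ + s • y₂))
      _ ≤ ∫⁻ x, eexp (-c) *
          (tiltDensity l F u y₁ (x + s • d) ^ t * tiltDensity l F u y₂ (x + -t • d) ^ s) := by
        rw [← lintegral_tiltDensity hF hui hμ]
        exact lintegral_mono pointwise
      _ ≤ eexp (-c) * ((∫⁻ x, tiltDensity l F u y₁ (x + s • d)) ^ t *
          (∫⁻ x, tiltDensity l F u y₂ (x + -t • d)) ^ s) := by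
        rw [lintegral_const_mul' _ _ (eexp_ne_top _)]
        gcongr
        exact ENNReal.lintegral_mul_norm_pow_le (meas_translate _ _) (meas_translate _ _)
          ht.le hs.le hts
      _ = _ := by
        rw [lintegral_add_right_eq_self (tiltDensity l F u y₁),
          lintegral_add_right_eq_self (tiltDensity l F u y₂)]
  rw [lintegral_tiltDensity hF hui hμ, lintegral_tiltDensity hF hui hμ, eexp_rpow, eexp_rpow,
    ← eexp_add, ← eexp_add, eexp_le_eexp] at bound
  linarith

theorem LogSemiconcave.semiconcave_logLaplace {β κ : ℝ} (hGb : LogSemiconcave β G)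
    (hG : AEMeasurable G) (hv : Semiconvex κ v) (hvm : Measurable v)
    (hvi : ExpIntegrable (volume.withDensity G) v) (hν : volume.withDensity G ≠ 0) (l : ℝ)
    (hK : 0 < κ + β) :
    Semiconcave (l ^ 2 / (κ + β)) (logLaplace l (volume.withDensity G) v) := by
  intro x₁ x₂ t s ht hs hts
  have bound := prekopa_leindler ht hs hts
    ((aemeasurable_tiltDensity hG hvm l (t • x₁ + s • x₂)).const_mul
      (eexp (l ^ 2 / (κ + β) / 2 * (t * s) * ‖x₁ - x₂‖ ^ 2)))
    (hGb.tiltDensity_rpow_mul_rpow_le hv hK ht hs hts l x₁ x₂)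
  rw [lintegral_const_mul' _ _ (eexp_ne_top _), lintegral_tiltDensity hG hvi hν,
    lintegral_tiltDensity hG hvi hν, lintegral_tiltDensity hG hvi hν, eexp_rpow, eexp_rpow,
    ← eexp_add, ← eexp_add, eexp_le_eexp] at bound
  linarith

end Regularity

section ExpIntegrable

open scoped NNReal

variable {E : Type*} [NormedAddCommGroup E] [MeasurableSpace E] [BorelSpace E] {μ ν : Measure E}
  {u v : E → ℝ}

theorem ExpIntegrable.integrable_norm (hμ : ExpIntegrable μ 0) :
    Integrable (fun x : E => ‖x‖) μ := by
  refine (hμ 1).mono' continuous_norm.aestronglyMeasurable (.of_forall fun x => ?_)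
  simp only [norm_norm, one_mul, Pi.zero_apply, sub_zero]
  linarith [Real.add_one_le_exp ‖x‖]

theorem ExpIntegrable.of_lipschitzWith {L : ℝ≥0} (hμ : ExpIntegrable μ 0)
    (hu : LipschitzWith L u) : ExpIntegrable μ u := by
  have := hu.continuous.measurable
  intro c
  refine ((hμ (c + L)).const_mul (Real.exp (-u 0))).mono'
    (Measurable.aestronglyMeasurable (by fun_prop)) (.of_forall fun x => ?_)
  rw [Real.norm_of_nonneg (Real.exp_pos _).le, ← Real.exp_add, Real.exp_le_exp, Pi.zero_apply]
  have le_at := (Real.dist_eq _ _ ▸ hu.dist_le_mul 0 x).trans' (le_abs_self _)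
  rw [dist_zero_left] at le_at
  linarith

theorem ExpIntegrable.integrable_of_lipschitzWith [IsFiniteMeasure μ] {L : ℝ≥0}
    (hμ : ExpIntegrable μ 0) (hu : LipschitzWith L u) : Integrable u μ := by
  refine ((integrable_const |u 0|).add (hμ.integrable_norm.const_mul L)).mono'
    hu.continuous.measurable.aestronglyMeasurable (.of_forall fun x => ?_)
  have dist_le := Real.dist_eq _ _ ▸ hu.dist_le_mul x 0
  rw [dist_zero_right] at dist_le
  simp only [Pi.add_apply, Real.norm_eq_abs]
  linarith [abs_sub_abs_le_abs_sub (u x) (u 0)]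

theorem expIntegrable_of_ae_bounded [IsFiniteMeasure ν] {R M : ℝ} (hν : ∀ᵐ y ∂ν, ‖y‖ ≤ R)
    (hv : Measurable v) (hM : ∀ᵐ y ∂ν, |v y| ≤ M) : ExpIntegrable ν v := by
  intro c
  refine (integrable_const (Real.exp (|c| * R + M))).mono'
    (Measurable.aestronglyMeasurable (by fun_prop)) ?_
  filter_upwards [hν, hM] with y hy hvy
  rw [Real.norm_of_nonneg (Real.exp_pos _).le, Real.exp_le_exp]
  have : c * ‖y‖ ≤ |c| * R := mul_le_mul (le_abs_self c) hy (norm_nonneg y) (abs_nonneg c)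
  linarith [neg_abs_le (v y)]

end ExpIntegrable

section EntropicKernel

open scoped NNReal

variable {E : Type*} [NormedAddCommGroup E] [InnerProductSpace ℝ E]

theorem abs_mul_inner_le (l : ℝ) {R : ℝ} (x : E) {y : E} (hy : ‖y‖ ≤ R) :
    |l * inner ℝ x y| ≤ |l| * R * ‖x‖ := by
  rw [abs_mul, mul_assoc]
  refine mul_le_mul_of_nonneg_left ((abs_real_inner_le_norm x y).trans ?_) (abs_nonneg l)
  rw [mul_comm]
  exact mul_le_mul_of_nonneg_right hy (norm_nonneg x)

theorem exp_kernel_eq_exp_neg_mul_tilt_left (u v : E → ℝ) (l : ℝ) (x y : E) :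
    Real.exp (l * inner ℝ x y - u x - v y) = Real.exp (-v y) * tilt l u y x := by
  rw [tilt, ← Real.exp_add]
  ring_nf

theorem exp_kernel_eq_exp_neg_mul_tilt_right (u v : E → ℝ) (l : ℝ) (x y : E) :
    Real.exp (l * inner ℝ x y - u x - v y) = Real.exp (-u x) * tilt l v x y := by
  rw [tilt, ← Real.exp_add, real_inner_comm]
  ring_nf

variable [MeasurableSpace E] [BorelSpace E] {μ ν : Measure E} {u v : E → ℝ}

theorem exists_abs_logLaplace_le (hμ : μ ≠ 0) (hu : ExpIntegrable μ u) (l R : ℝ) :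
    ∃ M, ∀ y, ‖y‖ ≤ R → |logLaplace l μ u y| ≤ M := by
  have : NeZero μ := ⟨hμ⟩
  have int_upper := hu (|l| * R)
  have int_lower := hu (-(|l| * R))
  set upper := ∫ x, Real.exp (|l| * R * ‖x‖ - u x) ∂μ
  set lower := ∫ x, Real.exp (-(|l| * R) * ‖x‖ - u x) ∂μ
  have lower_pos : 0 < lower := integral_exp_pos int_lower
  refine ⟨max |Real.log lower| |Real.log upper|, fun y hy => ?_⟩
  have laplace_le : laplace l μ u y ≤ upper :=
    integral_mono (hu.integrable_tilt l y) int_upper fun x =>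
      Real.exp_le_exp.2 (by linarith [(abs_le.1 (abs_mul_inner_le l x hy)).2])
  have le_laplace : lower ≤ laplace l μ u y :=
    integral_mono int_lower (hu.integrable_tilt l y) fun x =>
      Real.exp_le_exp.2 (by linarith [(abs_le.1 (abs_mul_inner_le l x hy)).1])
  exact (abs_le_max_abs_abs (Real.log_le_log lower_pos le_laplace)
    (Real.log_le_log (lower_pos.trans_le le_laplace) laplace_le))

theorem lipschitzWith_logLaplace {R : ℝ≥0} (hν : ∀ᵐ y ∂ν, ‖y‖ ≤ R) (hν0 : ν ≠ 0)
    (hv : ExpIntegrable ν v) (l : ℝ) : LipschitzWith (‖l‖₊ * R) (logLaplace l ν v) := by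
  refine LipschitzWith.of_le_add_mul _ fun x x' => ?_
  rw [dist_eq_norm, NNReal.coe_mul, coe_nnnorm, Real.norm_eq_abs, ← Real.exp_le_exp, Real.exp_add,
    exp_logLaplace hv hν0, exp_logLaplace hv hν0, laplace, laplace, ← integral_mul_const]
  refine integral_mono_ae (hv.integrable_tilt l x) ((hv.integrable_tilt l x').mul_const _) ?_
  filter_upwards [hν] with y hy
  have abs_le_mul := (abs_le.1 (abs_mul_inner_le l (x - x') hy)).2
  rw [real_inner_comm] at abs_le_mul
  have := tilt_pos l v x' y
  rw [show tilt l v x y = tilt l v x' y * Real.exp (l * inner ℝ y (x - x')) by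
    rw [← tilt_add, add_sub_cancel]]
  gcongr

/-- Jensen's inequality for `exp`. -/
theorem logLaplace_ge_neg_integral [IsProbabilityMeasure μ] [SecondCountableTopology E]
    (hμ : ExpIntegrable μ 0) (hu : ExpIntegrable μ u) (hui : Integrable u μ) {R : ℝ} {y : E}
    (hy : ‖y‖ ≤ R) (l : ℝ) :
    -(|l| * R * ∫ x, ‖x‖ ∂μ) - ∫ x, u x ∂μ ≤ logLaplace l μ u y := by
  have int_id : Integrable (fun x : E => x) μ :=
    (integrable_norm_iff continuous_id.aestronglyMeasurable).1 hμ.integrable_norm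
  have int_inner : Integrable (fun x : E => l * inner ℝ x y) μ :=
    (int_id.inner_const (𝕜 := ℝ) y).const_mul l
  have int_norm := hμ.integrable_norm.const_mul (-(|l| * R))
  have jensen : ∫ x, (l * inner ℝ x y - u x) ∂μ ≤ logLaplace l μ u y := by
    rw [← Real.exp_le_exp, exp_logLaplace hu (NeZero.ne μ)]
    exact convexOn_exp.map_integral_le Real.continuous_exp.continuousOn isClosed_univ
      (.of_forall fun _ => Set.mem_univ _) (int_inner.sub hui) (hu.integrable_tilt l y)
  refine le_trans ?_ jensen
  rw [integral_sub int_inner hui, ← neg_mul, ← integral_const_mul]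
  refine sub_le_sub_right (integral_mono int_norm int_inner fun x => ?_) _
  linarith [(abs_le.1 (abs_mul_inner_le l x hy)).1]

variable [SecondCountableTopology E]

theorem measurable_logLaplace [SFinite μ] (hu : Measurable u) (l : ℝ) :
    Measurable (logLaplace l μ u) := by
  refine Real.measurable_log.comp ?_
  have : StronglyMeasurable (fun p : E × E => tilt l u p.1 p.2) := by
    unfold tilt
    exact Measurable.stronglyMeasurable (by fun_prop)
  exact this.integral_prod_right.measurable

theorem integrable_exp_kernel_mul {R : ℝ} (hν : ∀ᵐ y ∂ν, ‖y‖ ≤ R)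
    (hu : ExpIntegrable μ u) (hum : Measurable u) (hv : ExpIntegrable ν v) (hvm : Measurable v)
    {w : E → ℝ} (hw : Measurable w) (hw1 : ∀ y, |w y| ≤ 1)
    (l : ℝ) : Integrable (fun p : E × E => Real.exp (l * inner ℝ p.1 p.2 - u p.1 - v p.2) * w p.2)
      (μ.prod ν) := by
  refine ((hu (|l| * R)).mul_prod (hv 0)).mono' (Measurable.aestronglyMeasurable (by fun_prop)) ?_
  filter_upwards [Measure.quasiMeasurePreserving_snd.ae hν] with p hp
  rw [norm_mul, Real.norm_of_nonneg (Real.exp_pos _).le, ← Real.exp_add]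
  refine (mul_le_of_le_one_right (Real.exp_pos _).le (hw1 _)).trans (Real.exp_le_exp.2 ?_)
  linarith [(abs_le.1 (abs_mul_inner_le l p.1 hp)).2]

section BoundedSupport

variable [IsFiniteMeasure ν] [SFinite μ] {R : ℝ}

theorem integrable_logLaplace (hν : ∀ᵐ y ∂ν, ‖y‖ ≤ R) (hμ : μ ≠ 0)
    (hu : ExpIntegrable μ u) (hum : Measurable u) (l : ℝ) :
    Integrable (logLaplace l μ u) ν := by
  obtain ⟨M, hM⟩ := exists_abs_logLaplace_le hμ hu l R
  exact .of_bound (measurable_logLaplace hum l).aestronglyMeasurable M (hν.mono hM)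

theorem expIntegrable_logLaplace (hν : ∀ᵐ y ∂ν, ‖y‖ ≤ R) (hμ : μ ≠ 0)
    (hu : ExpIntegrable μ u) (hum : Measurable u) (l : ℝ) : ExpIntegrable ν (logLaplace l μ u) := by
  obtain ⟨M, hM⟩ := exists_abs_logLaplace_le hμ hu l R
  exact expIntegrable_of_ae_bounded hν (measurable_logLaplace hum l) (hν.mono hM)

theorem integral_exp_neg_mul_integral_tilt_swap (hν : ∀ᵐ y ∂ν, ‖y‖ ≤ R)
    (hu : ExpIntegrable μ u) (hum : Measurable u) (hv : ExpIntegrable ν v) (hvm : Measurable v)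
    {w : E → ℝ} (hw : Measurable w) (hw1 : ∀ y, |w y| ≤ 1) (l : ℝ) :
    ∫ x, Real.exp (-u x) * ∫ y, tilt l v x y * w y ∂ν ∂μ =
      ∫ y, Real.exp (-v y) * laplace l μ u y * w y ∂ν := by
  calc _ = ∫ x, ∫ y, Real.exp (l * inner ℝ x y - u x - v y) * w y ∂ν ∂μ := by
        simp_rw [← integral_const_mul, exp_kernel_eq_exp_neg_mul_tilt_right, mul_assoc]
    _ = ∫ y, ∫ x, Real.exp (l * inner ℝ x y - u x - v y) * w y ∂μ ∂ν :=
        integral_integral_swap (integrable_exp_kernel_mul hν hu hum hv hvm hw hw1 l)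
    _ = _ := by
        simp_rw [exp_kernel_eq_exp_neg_mul_tilt_left, integral_mul_const, integral_const_mul,
          laplace]

theorem integral_exp_neg_mul_laplace_swap (hν : ∀ᵐ y ∂ν, ‖y‖ ≤ R)
    (hu : ExpIntegrable μ u) (hum : Measurable u) (hv : ExpIntegrable ν v) (hvm : Measurable v)
    (l : ℝ) :
    ∫ x, Real.exp (-u x) * laplace l ν v x ∂μ = ∫ y, Real.exp (-v y) * laplace l μ u y ∂ν := by
  simpa only [mul_one, laplace] using integral_exp_neg_mul_integral_tilt_swap hν hu hum hv hvm
    (w := fun _ => 1) measurable_const (fun _ => abs_one.le) l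

theorem integrable_exp_neg_mul_laplace (hν : ∀ᵐ y ∂ν, ‖y‖ ≤ R)
    (hu : ExpIntegrable μ u) (hum : Measurable u) (hv : ExpIntegrable ν v) (hvm : Measurable v)
    (l : ℝ) :
    Integrable (fun x => Real.exp (-u x) * laplace l ν v x) μ ∧
      Integrable (fun y => Real.exp (-v y) * laplace l μ u y) ν := by
  have int_kernel : Integrable
      (fun p : E × E => Real.exp (l * inner ℝ p.1 p.2 - u p.1 - v p.2)) (μ.prod ν) := by
    simpa only [mul_one] using integrable_exp_kernel_mul hν hu hum hv hvm
      (w := fun _ => 1) measurable_const (fun _ => abs_one.le) l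
  constructor
  · simpa only [exp_kernel_eq_exp_neg_mul_tilt_right, integral_const_mul, laplace]
      using int_kernel.integral_prod_left
  · simpa only [exp_kernel_eq_exp_neg_mul_tilt_left, integral_const_mul, laplace]
      using int_kernel.integral_prod_right

end BoundedSupport

end EntropicKernel

section Bregman

theorem abs_exp_sub_one_le (t : ℝ) {ε : ℝ} (hε : 0 < ε) :
    |Real.exp t - 1| ≤ (Real.exp t - 1 - t) / (2 * ε) + ε * (Real.exp t + 1) := by
  set q := Real.exp (t / 2) with hq
  have q_pos : 0 < q := Real.exp_pos _
  have exp_eq : Real.exp t = q ^ 2 := by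
    rw [← Real.exp_nat_mul]
    push_cast
    ring_nf
  have sq_le : (q - 1) ^ 2 ≤ Real.exp t - 1 - t := by
    rw [exp_eq]
    linarith [Real.add_one_le_exp (t / 2), hq]
  have abs_eq : |Real.exp t - 1| = |q - 1| * (q + 1) := by
    rw [exp_eq, show q ^ 2 - 1 = (q - 1) * (q + 1) by ring, abs_mul,
      abs_of_pos (by linarith : 0 < q + 1)]
  have young : |q - 1| * (q + 1) ≤ (q - 1) ^ 2 / (2 * ε) + ε * (q + 1) ^ 2 / 2 := by
    have complete_square : (q - 1) ^ 2 / (2 * ε) + ε * (q + 1) ^ 2 / 2 - |q - 1| * (q + 1) =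
        (|q - 1| - ε * (q + 1)) ^ 2 / (2 * ε) := by
      rw [← sq_abs (q - 1)]
      field_simp
      ring
    rw [← sub_nonneg, complete_square]
    positivity
  calc |Real.exp t - 1| ≤ (q - 1) ^ 2 / (2 * ε) + ε * (q + 1) ^ 2 / 2 := abs_eq ▸ young
    _ ≤ (Real.exp t - 1 - t) / (2 * ε) + ε * (Real.exp t + 1) := by
      gcongr
      rw [exp_eq]
      nlinarith [mul_nonneg hε.le (sq_nonneg (q - 1))]

/-- A quantitative equality case of Jensen's inequality `∫ d ≤ log ∫ exp d = 0`. -/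
theorem integral_abs_exp_sub_one_le {α : Type*} [MeasurableSpace α] {μ : Measure α}
    [IsProbabilityMeasure μ] {d : α → ℝ} (hd : Integrable d μ)
    (hexp : Integrable (fun x => Real.exp (d x)) μ) (hone : ∫ x, Real.exp (d x) ∂μ = 1) {δ : ℝ}
    (hδ : 0 < δ) (hge : -(δ ^ 2 / 4) ≤ ∫ x, d x ∂μ) : ∫ x, |Real.exp (d x) - 1| ∂μ ≤ δ := by
  have int_sub_one : Integrable (fun x => Real.exp (d x) - 1) μ := hexp.sub (integrable_const _)
  have int_bregman : Integrable (fun x => (Real.exp (d x) - 1 - d x) / (2 * (δ / 4))) μ :=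
    (int_sub_one.sub hd).div_const _
  have int_add_one : Integrable (fun x => δ / 4 * (Real.exp (d x) + 1)) μ :=
    (hexp.add (integrable_const _)).const_mul _
  calc ∫ x, |Real.exp (d x) - 1| ∂μ
      ≤ ∫ x, ((Real.exp (d x) - 1 - d x) / (2 * (δ / 4)) + δ / 4 * (Real.exp (d x) + 1)) ∂μ :=
        integral_mono_of_nonneg (.of_forall fun x => abs_nonneg _) (int_bregman.add int_add_one)
          (.of_forall fun x => abs_exp_sub_one_le _ (by positivity))
    _ = -(∫ x, d x ∂μ) / (2 * (δ / 4)) + δ / 4 * 2 := by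
        rw [integral_add int_bregman int_add_one, integral_div, integral_const_mul,
          integral_sub int_sub_one hd, integral_sub hexp (integrable_const _),
          integral_add hexp (integrable_const _), hone]
        norm_num
    _ ≤ (δ ^ 2 / 4) / (2 * (δ / 4)) + δ / 4 * 2 := by
        gcongr
        linarith
    _ = δ := by
        field_simp
        ring

end Bregman

section Sinkhorn

open scoped NNReal

variable {E : Type*} [NormedAddCommGroup E] [InnerProductSpace ℝ E] [MeasurableSpace E]

/-- One round of Sinkhorn's algorithm for the entropic optimal transport of `μ` to `ν` with cost
`-l ⟪x, y⟫`, acting on the potential of `μ`. -/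
def sinkhorn (l : ℝ) (μ ν : Measure E) (u : E → ℝ) : E → ℝ := logLaplace l ν (logLaplace l μ u)

/-- The dual functional of entropic optimal transport, with the potential of `ν` optimised out. -/
def entropicDual (l : ℝ) (μ ν : Measure E) (u : E → ℝ) : ℝ :=
  ∫ x, u x ∂μ + ∫ y, logLaplace l μ u y ∂ν

variable [BorelSpace E] {μ ν : Measure E} [IsProbabilityMeasure μ] [IsProbabilityMeasure ν]
  {u : E → ℝ} {L R : ℝ≥0}

theorem exp_neg_mul_laplace (hu : ExpIntegrable μ u) (l c : ℝ) (y : E) :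
    Real.exp (-c) * laplace l μ u y = Real.exp (logLaplace l μ u y - c) := by
  rw [← exp_logLaplace hu (NeZero.ne μ), ← Real.exp_add, neg_add_eq_sub]

variable [SecondCountableTopology E]

theorem lipschitzWith_sinkhorn (hν : ∀ᵐ y ∂ν, ‖y‖ ≤ R) (hu : ExpIntegrable μ u)
    (hum : Measurable u) (l : ℝ) : LipschitzWith (‖l‖₊ * R) (sinkhorn l μ ν u) :=
  lipschitzWith_logLaplace hν (NeZero.ne ν)
    (expIntegrable_logLaplace hν (NeZero.ne μ) hu hum l) l

theorem integrable_exp_sinkhorn_sub (hν : ∀ᵐ y ∂ν, ‖y‖ ≤ R) (hu : ExpIntegrable μ u)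
    (hum : Measurable u) (l : ℝ) : Integrable (fun x => Real.exp (sinkhorn l μ ν u x - u x)) μ := by
  have hv := expIntegrable_logLaplace hν (NeZero.ne μ) hu hum l
  simpa only [sinkhorn, exp_neg_mul_laplace hv] using
    (integrable_exp_neg_mul_laplace hν hu hum hv (measurable_logLaplace hum l) l).1

theorem integral_exp_sinkhorn_sub (hν : ∀ᵐ y ∂ν, ‖y‖ ≤ R) (hu : ExpIntegrable μ u)
    (hum : Measurable u) (l : ℝ) : ∫ x, Real.exp (sinkhorn l μ ν u x - u x) ∂μ = 1 := by
  have hv := expIntegrable_logLaplace hν (NeZero.ne μ) hu hum l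
  simpa only [sinkhorn, exp_neg_mul_laplace hv, exp_neg_mul_laplace hu, sub_self, Real.exp_zero,
    integral_const, probReal_univ, one_smul] using
    integral_exp_neg_mul_laplace_swap hν hu hum hv (measurable_logLaplace hum l) l

theorem integral_logLaplace_sinkhorn_le (hμ : ExpIntegrable μ 0) (hν : ∀ᵐ y ∂ν, ‖y‖ ≤ R)
    (hu : ExpIntegrable μ u) (hum : Measurable u) (l : ℝ) :
    ∫ y, logLaplace l μ (sinkhorn l μ ν u) y ∂ν ≤ ∫ y, logLaplace l μ u y ∂ν := by
  set v := logLaplace l μ u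
  set u' := sinkhorn l μ ν u with hu'
  set v' := logLaplace l μ u'
  have lipschitz_u' : LipschitzWith (‖l‖₊ * R) u' := lipschitzWith_sinkhorn hν hu hum l
  have measurable_u' := lipschitz_u'.continuous.measurable
  have exp_u' : ExpIntegrable μ u' := hμ.of_lipschitzWith lipschitz_u'
  have exp_v := expIntegrable_logLaplace hν (NeZero.ne μ) hu hum l
  have int_v : Integrable v ν := integrable_logLaplace hν (NeZero.ne μ) hu hum l
  have int_v' : Integrable v' ν := integrable_logLaplace hν (NeZero.ne μ) exp_u' measurable_u' l
  have int_exp : Integrable (fun y => Real.exp (v' y - v y)) ν := by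
    simpa only [exp_neg_mul_laplace exp_u'] using (integrable_exp_neg_mul_laplace hν exp_u'
      measurable_u' exp_v (measurable_logLaplace hum l) l).2
  have integral_exp : ∫ y, Real.exp (v' y - v y) ∂ν = 1 := by
    have swap := integral_exp_neg_mul_laplace_swap hν exp_u' measurable_u' exp_v
      (measurable_logLaplace hum l) l
    simp only [exp_neg_mul_laplace exp_u', exp_neg_mul_laplace exp_v] at swap
    exact swap.symm.trans <| by
      simp only [hu', sinkhorn, sub_self, Real.exp_zero, integral_const, probReal_univ, one_smul]
  have sub_le : ∫ y, (v' y - v y) ∂ν ≤ ∫ y, (Real.exp (v' y - v y) - 1) ∂ν :=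
    integral_mono (int_v'.sub int_v) (int_exp.sub (integrable_const _)) fun y => by
      linarith [Real.add_one_le_exp (v' y - v y)]
  rw [integral_sub int_v' int_v, integral_sub int_exp (integrable_const _), integral_exp,
    integral_const, probReal_univ, one_smul] at sub_le
  linarith

theorem neg_integral_norm_le_entropicDual (hμ : ExpIntegrable μ 0) (hν : ∀ᵐ y ∂ν, ‖y‖ ≤ R)
    (hu : LipschitzWith L u) (l : ℝ) : -(|l| * R * ∫ x, ‖x‖ ∂μ) ≤ entropicDual l μ ν u := by
  have exp_u := hμ.of_lipschitzWith hu
  have int_u := hμ.integrable_of_lipschitzWith hu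
  have lower : ∫ _, (-(|l| * R * ∫ x, ‖x‖ ∂μ) - ∫ x, u x ∂μ) ∂ν ≤ ∫ y, logLaplace l μ u y ∂ν := by
    refine integral_mono_ae (integrable_const _)
      (integrable_logLaplace hν (NeZero.ne μ) exp_u hu.continuous.measurable l) ?_
    filter_upwards [hν] with y hy using logLaplace_ge_neg_integral hμ exp_u int_u hy l
  rw [integral_const, probReal_univ, one_smul] at lower
  rw [entropicDual]
  linarith

/-- A near-minimiser of the dual functional is nearly a fixed point of the Sinkhorn map, because
the map decreases the functional. -/
theorem exists_integral_abs_exp_sinkhorn_sub_le (hμ : ExpIntegrable μ 0)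
    (hν : ∀ᵐ y ∂ν, ‖y‖ ≤ R) (l : ℝ) {𝒞 : Set (E → ℝ)} (hne : 𝒞.Nonempty)
    (hL : ∀ u ∈ 𝒞, LipschitzWith L u) (hcl : ∀ u ∈ 𝒞, sinkhorn l μ ν u ∈ 𝒞) {δ : ℝ}
    (hδ : 0 < δ) : ∃ u ∈ 𝒞, ∫ x, |Real.exp (sinkhorn l μ ν u x - u x) - 1| ∂μ ≤ δ := by
  have bddBelow : BddBelow (entropicDual l μ ν '' 𝒞) :=
    ⟨_, Set.forall_mem_image.2 fun u hu => neg_integral_norm_le_entropicDual hμ hν (hL u hu) l⟩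
  obtain ⟨_, ⟨u, hu, rfl⟩, near_min⟩ := exists_lt_of_csInf_lt (hne.image (entropicDual l μ ν))
    (lt_add_of_pos_right (sInf (entropicDual l μ ν '' 𝒞)) (by positivity : 0 < δ ^ 2 / 4))
  have exp_u := hμ.of_lipschitzWith (hL u hu)
  have measurable_u := (hL u hu).continuous.measurable
  have int_u := hμ.integrable_of_lipschitzWith (hL u hu)
  have int_u' := hμ.integrable_of_lipschitzWith (hL _ (hcl u hu))
  refine ⟨u, hu, integral_abs_exp_sub_one_le (int_u'.sub int_u)
    (integrable_exp_sinkhorn_sub hν exp_u measurable_u l)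
    (integral_exp_sinkhorn_sub hν exp_u measurable_u l) hδ ?_⟩
  have inf_le := csInf_le bddBelow ⟨_, hcl u hu, rfl⟩
  have second_decreases := integral_logLaplace_sinkhorn_le hμ hν exp_u measurable_u l
  rw [integral_sub' int_u' int_u]
  rw [entropicDual] at near_min inf_le
  linarith

end Sinkhorn

section TiltAverage

variable {E : Type*} [NormedAddCommGroup E] [InnerProductSpace ℝ E] [MeasurableSpace E]

/-- The average of `w` under the probability measure proportional to `tilt l v x • ν`. -/
def tiltAverage (l : ℝ) (ν : Measure E) (v w : E → ℝ) (x : E) : ℝ :=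
  (laplace l ν v x)⁻¹ * ∫ y, tilt l v x y * w y ∂ν

variable [BorelSpace E] {ν : Measure E} {v w : E → ℝ} {l : ℝ}

theorem abs_tiltAverage_le_one (hν : ν ≠ 0) (hv : ExpIntegrable ν v) (hw : ∀ y, |w y| ≤ 1)
    (l : ℝ) (x : E) : |tiltAverage l ν v w x| ≤ 1 := by
  have laplace_x_pos := laplace_pos hv hν l x
  rw [tiltAverage, abs_mul, abs_of_pos (inv_pos.2 laplace_x_pos),
    inv_mul_le_iff₀ laplace_x_pos, mul_one]
  refine abs_integral_le_integral_abs.trans (integral_mono_of_nonneg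
    (.of_forall fun y => abs_nonneg _) (hv.integrable_tilt l x) (.of_forall fun y => ?_))
  simp only [abs_mul, abs_of_pos (tilt_pos l v x y)]
  exact mul_le_of_le_one_right (tilt_pos l v x y).le (hw y)

theorem measurable_tiltAverage [SecondCountableTopology E] [SFinite ν] (hv : Measurable v)
    (hw : Measurable w) (l : ℝ) : Measurable (tiltAverage l ν v w) := by
  have measurable_kernel : StronglyMeasurable (fun p : E × E => tilt l v p.1 p.2) := by
    unfold tilt
    exact Measurable.stronglyMeasurable (by fun_prop)
  have measurable_weighted := measurable_kernel.mul (hw.comp measurable_snd).stronglyMeasurable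
  exact measurable_kernel.integral_prod_right.measurable.inv.mul
    measurable_weighted.integral_prod_right.measurable

theorem tiltAverage_sub_const (hν : ν ≠ 0) (hv : ExpIntegrable ν v) {x : E}
    (hw : Integrable (fun y => tilt l v x y * w y) ν) (c : ℝ) :
    tiltAverage l ν v (fun y => w y - c) x = tiltAverage l ν v w x - c := by
  simp_rw [tiltAverage, mul_sub]
  rw [integral_sub hw ((hv.integrable_tilt l x).mul_const c), integral_mul_const, ← laplace,
    mul_sub, inv_mul_cancel_left₀ (laplace_pos hv hν l x).ne']

theorem le_sq_div_add_half (t : ℝ) {c : ℝ} (hc : 0 < c) : t ≤ t ^ 2 / (2 * c) + c / 2 := by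
  have complete_square : t ^ 2 / (2 * c) + c / 2 - t = (t - c) ^ 2 / (2 * c) := by
    field_simp
    ring
  rw [← sub_nonneg, complete_square]
  positivity

theorem abs_tiltAverage_sub_le (hν : ν ≠ 0) (hv : ExpIntegrable ν v) {x p : E} {c : ℝ}
    (hc : 0 < c) (hvar : ∫ y, tilt l v x y * ‖y - p‖ ^ 2 ∂ν ≤ laplace l ν v x * c ^ 2)
    (hw : LipschitzWith 1 w) (hw1 : ∀ y, |w y| ≤ 1) : |tiltAverage l ν v w x - w p| ≤ c := by
  have laplace_x_pos := laplace_pos hv hν l x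
  have int_tilt_w : Integrable (fun y => tilt l v x y * w y) ν :=
    (hv.integrable_tilt l x).mul_bdd hw.continuous.aestronglyMeasurable (.of_forall hw1)
  have int_var := (hv.integrable_tilt_mul_norm_sub_sq l x p).div_const (2 * c)
  have int_half := (hv.integrable_tilt l x).mul_const (c / 2)
  rw [← tiltAverage_sub_const hν hv int_tilt_w, tiltAverage, abs_mul,
    abs_of_pos (inv_pos.2 laplace_x_pos), inv_mul_le_iff₀ laplace_x_pos]
  calc |∫ y, tilt l v x y * (w y - w p) ∂ν|
      ≤ ∫ y, |tilt l v x y * (w y - w p)| ∂ν := abs_integral_le_integral_abs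
    _ ≤ ∫ y, (tilt l v x y * ‖y - p‖ ^ 2 / (2 * c) + tilt l v x y * (c / 2)) ∂ν := by
        refine integral_mono_of_nonneg (.of_forall fun y => abs_nonneg _) (int_var.add int_half)
          (.of_forall fun y => ?_)
        have lipschitz_at := hw.dist_le_mul y p
        rw [Real.dist_eq, dist_eq_norm, NNReal.coe_one, one_mul] at lipschitz_at
        simp only [abs_mul, abs_of_pos (tilt_pos l v x y), mul_div_assoc, ← mul_add]
        exact mul_le_mul_of_nonneg_left (lipschitz_at.trans (le_sq_div_add_half _ hc))
          (tilt_pos l v x y).le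
    _ = (∫ y, tilt l v x y * ‖y - p‖ ^ 2 ∂ν) / (2 * c) + laplace l ν v x * (c / 2) := by
        rw [integral_add int_var int_half, integral_div, integral_mul_const, laplace]
    _ ≤ laplace l ν v x * c ^ 2 / (2 * c) + laplace l ν v x * (c / 2) := by gcongr
    _ = laplace l ν v x * c := by
        field_simp
        ring

theorem integral_exp_sinkhorn_sub_mul_tiltAverage [SecondCountableTopology E] {μ : Measure E}
    [IsProbabilityMeasure μ] [IsProbabilityMeasure ν] {R : ℝ} (hν : ∀ᵐ y ∂ν, ‖y‖ ≤ R) {u : E → ℝ}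
    (hu : ExpIntegrable μ u) (hum : Measurable u) (hw : Measurable w) (hw1 : ∀ y, |w y| ≤ 1)
    (l : ℝ) :
    ∫ x, Real.exp (sinkhorn l μ ν u x - u x) * tiltAverage l ν (logLaplace l μ u) w x ∂μ =
      ∫ y, w y ∂ν := by
  have hv := expIntegrable_logLaplace hν (NeZero.ne μ) hu hum l
  calc _ = ∫ x, Real.exp (-u x) * ∫ y, tilt l (logLaplace l μ u) x y * w y ∂ν ∂μ := by
        congr 1 with x
        rw [sinkhorn, ← exp_neg_mul_laplace hv, tiltAverage, mul_assoc,
          mul_inv_cancel_left₀ (laplace_pos hv (NeZero.ne ν) l x).ne']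
    _ = ∫ y, Real.exp (-logLaplace l μ u y) * laplace l μ u y * w y ∂ν :=
        integral_exp_neg_mul_integral_tilt_swap hν hu hum hv (measurable_logLaplace hum l) hw hw1 l
    _ = ∫ y, w y ∂ν := by
        simp only [exp_neg_mul_laplace hu, sub_self, Real.exp_zero, one_mul]

end TiltAverage

section TiltVariance

variable {E : Type*} [NormedAddCommGroup E] [InnerProductSpace ℝ E] [MeasurableSpace E]
  [BorelSpace E] {ν : Measure E} {v : E → ℝ} {l a : ℝ}

theorem IsSmoothConvexGrad.laplace_add_le (hl : 0 < l) (hν : ν ≠ 0) (hv : ExpIntegrable ν v)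
    (hT : IsSmoothConvexGrad a (fun x => logLaplace l ν v x / l) (tiltMean l ν v)) (x h : E) :
    Real.exp (-(l * inner ℝ (tiltMean l ν v x) h)) * laplace l ν v (x + h) ≤
      laplace l ν v x * Real.exp (a / 2 * (l * ‖h‖ ^ 2)) := by
  rw [← exp_logLaplace hv hν, ← exp_logLaplace hv hν, ← Real.exp_add, ← Real.exp_add,
    Real.exp_le_exp]
  have upper := (div_le_iff₀ hl).1 (hT x h).2
  rw [add_mul, add_mul, div_mul_cancel₀ _ hl.ne'] at upper
  linarith

theorem integral_tilt_mul_inner_sub_tiltMean_sq_le (hl : 0 < l) (hν : ν ≠ 0)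
    (hv : ExpIntegrable ν v)
    (hT : IsSmoothConvexGrad a (fun x => logLaplace l ν v x / l) (tiltMean l ν v)) (x : E) {e : E}
    (he : ‖e‖ = 1) :
    ∫ y, tilt l v x y * (inner ℝ (y - tiltMean l ν v x) e) ^ 2 ∂ν ≤
      laplace l ν v x * (2 * (Real.exp (a / 2) - 1) / l) := by
  set p := tiltMean l ν v x with hp
  -- second difference of the Laplace transform at the scale where the quadratic term is `a / 2`
  set h : E := (1 / √l) • e with hh
  have sq_sqrt : √l ^ 2 = l := Real.sq_sqrt hl.le
  have norm_h : l * ‖h‖ ^ 2 = 1 := by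
    rw [hh, norm_smul, he, mul_one, Real.norm_eq_abs, sq_abs, div_pow, sq_sqrt]
    field_simp
  have rescale (y : E) : tilt l v x y * (l * inner ℝ (y - p) h) ^ 2 =
      l * (tilt l v x y * (inner ℝ (y - p) e) ^ 2) := by
    rw [hh, inner_smul_right, mul_pow, mul_pow, div_pow, sq_sqrt]
    field_simp
  have second_difference := integral_tilt_mul_inner_sub_sq_le hv l x h p
  simp_rw [rescale, integral_const_mul] at second_difference
  have forward := hT.laplace_add_le hl hν hv x h
  have backward := hT.laplace_add_le hl hν hv x (-h)
  rw [norm_neg, norm_h, ← hp, inner_neg_right, mul_neg, neg_neg, ← sub_eq_add_neg] at backward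
  rw [norm_h, ← hp] at forward
  rw [mul_one] at forward backward
  rw [mul_div_assoc', le_div_iff₀ hl]
  linarith

theorem integral_tilt_mul_norm_sub_tiltMean_sq_le [FiniteDimensional ℝ E] (hl : 0 < l)
    (hν : ν ≠ 0) (hv : ExpIntegrable ν v)
    (hT : IsSmoothConvexGrad a (fun x => logLaplace l ν v x / l) (tiltMean l ν v)) (x : E) :
    ∫ y, tilt l v x y * ‖y - tiltMean l ν v x‖ ^ 2 ∂ν ≤
      laplace l ν v x * (Module.finrank ℝ E * (2 * (Real.exp (a / 2) - 1) / l)) := by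
  let b := stdOrthonormalBasis ℝ E
  set p := tiltMean l ν v x
  have parseval (y : E) :
      tilt l v x y * ‖y - p‖ ^ 2 = ∑ i, tilt l v x y * (inner ℝ (y - p) (b i)) ^ 2 := by
    simp only [← b.sum_sq_norm_inner_left (y - p), Finset.mul_sum, Real.norm_eq_abs, sq_abs]
  have integrable_coord (i) :
      Integrable (fun y => tilt l v x y * (inner ℝ (y - p) (b i)) ^ 2) ν := by
    refine (hv.integrable_tilt_mul_norm_sub_sq l x p).mono'
      ((hv.integrable_tilt l x).aestronglyMeasurable.mul
        (Continuous.aestronglyMeasurable (by fun_prop))) (.of_forall fun y => ?_)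
    have := (tilt_pos l v x y).le
    rw [Real.norm_of_nonneg (by positivity), parseval]
    exact Finset.single_le_sum (f := fun i => tilt l v x y * (inner ℝ (y - p) (b i)) ^ 2)
      (fun i _ => by positivity) (Finset.mem_univ i)
  simp_rw [parseval]
  rw [integral_finsetSum _ fun i _ => integrable_coord i]
  refine (Finset.sum_le_sum fun i _ =>
    integral_tilt_mul_inner_sub_tiltMean_sq_le hl hν hv hT x (b.norm_eq_one i)).trans_eq ?_
  rw [Finset.sum_const, Finset.card_univ, Fintype.card_fin, nsmul_eq_mul, mul_left_comm]

theorem isSmoothConvexGrad_logLaplace_div [SecondCountableTopology E] [CompleteSpace E]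
    (hl : 0 < l) (hν : ν ≠ 0) (hv : ExpIntegrable ν v)
    (hsc : Semiconcave (l * a) (logLaplace l ν v)) :
    IsSmoothConvexGrad a (fun x => logLaplace l ν v x / l) (tiltMean l ν v) := by
  intro x h
  have subgradient (h : E) :
      logLaplace l ν v x + inner ℝ (l • tiltMean l ν v x) h ≤ logLaplace l ν v (x + h) := by
    rw [real_inner_smul_left]
    exact logLaplace_add_ge hv hν l x h
  have lower := subgradient h
  have upper := hsc.le_add_of_subgradient subgradient h
  rw [real_inner_smul_left] at lower upper
  constructor
  · rw [le_div_iff₀ hl, add_mul, div_mul_cancel₀ _ hl.ne']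
    linarith
  · rw [div_le_iff₀ hl, add_mul, add_mul, div_mul_cancel₀ _ hl.ne']
    linarith

end TiltVariance

section ApproxTransport

open scoped NNReal

theorem abs_integral_mul_sub_integral_le {α : Type*} [MeasurableSpace α] {μ : Measure α}
    [IsProbabilityMeasure μ] {ρ W f : α → ℝ} (hρ : Integrable ρ μ) (hW : Measurable W)
    (hW1 : ∀ x, |W x| ≤ 1) (hf : Integrable f μ) {ε : ℝ} (hWf : ∀ x, |W x - f x| ≤ ε) :
    |∫ x, ρ x * W x ∂μ - ∫ x, f x ∂μ| ≤ ∫ x, |ρ x - 1| ∂μ + ε := by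
  have int_mul : Integrable (fun x => ρ x * W x) μ :=
    hρ.mul_bdd hW.aestronglyMeasurable (.of_forall hW1)
  have int_abs : Integrable (fun x => |ρ x - 1|) μ := (hρ.sub (integrable_const 1)).abs
  rw [← integral_sub int_mul hf]
  calc |∫ x, (ρ x * W x - f x) ∂μ| ≤ ∫ x, |ρ x * W x - f x| ∂μ := abs_integral_le_integral_abs
    _ ≤ ∫ x, (|ρ x - 1| + ε) ∂μ := by
        refine integral_mono (int_mul.sub hf).abs (int_abs.add (integrable_const _)) fun x => ?_
        calc |ρ x * W x - f x| = |(ρ x - 1) * W x + (W x - f x)| := by ring_nf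
          _ ≤ |(ρ x - 1) * W x| + |W x - f x| := abs_add_le _ _
          _ ≤ |ρ x - 1| + ε := add_le_add (by
              rw [abs_mul]
              exact mul_le_of_le_one_right (abs_nonneg _) (hW1 x)) (hWf x)
    _ = ∫ x, |ρ x - 1| ∂μ + ε := by
        rw [integral_add int_abs (integrable_const _), integral_const, probReal_univ, one_smul]

theorem exists_pos_div_le {A δ : ℝ} (hA : 0 ≤ A) (hδ : 0 < δ) : ∃ l : ℝ, 0 < l ∧ A / l ≤ δ := by
  refine ⟨(A + 1) / δ, by positivity, ?_⟩
  rw [div_div_eq_mul_div, div_le_iff₀ (by positivity), mul_comm]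
  gcongr
  linarith

variable {k : ℕ}

local notation "𝔼" => EuclideanSpace ℝ (Fin k)

/-- The semiconcavity constant `l * a` is propagated by the Sinkhorn map: it becomes
`l ^ 2 / (l * a + β * a)` after the first transform and at most `l * a` after the second. -/
theorem semiconcave_sinkhorn {F G : 𝔼 → ℝ≥0∞} (hF : AEMeasurable F) (hG : AEMeasurable G)
    [IsProbabilityMeasure (volume.withDensity F)] [IsProbabilityMeasure (volume.withDensity G)]
    {β a R l : ℝ} (hβ : 0 < β) (ha : 1 ≤ a) (hl : 0 < l) (hFb : LogSemiconvex (β * a) F)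
    (hGb : LogSemiconcave β G) (hR : ∀ᵐ y ∂(volume.withDensity G), ‖y‖ ≤ R) {u : 𝔼 → ℝ}
    (hu : Semiconcave (l * a) u) (hum : Measurable u)
    (hui : ExpIntegrable (volume.withDensity F) u) :
    Semiconcave (l * a) (sinkhorn l (volume.withDensity F) (volume.withDensity G) u) := by
  have exp_v := expIntegrable_logLaplace hR (NeZero.ne (volume.withDensity F)) hui hum l
  have semiconvex_v := hFb.semiconvex_logLaplace hF hu hum hui (NeZero.ne _) l (by positivity)
  refine (hGb.semiconcave_logLaplace hG semiconvex_v (measurable_logLaplace hum l) exp_v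
    (NeZero.ne _) l (by positivity)).mono ?_
  have quotient_le : l / (l + β) ≤ a := (div_le_one (by positivity)).2 (by linarith) |>.trans ha
  have expand : l * a * (l ^ 2 / (l * a + β * a) + β) = l ^ 2 + l * β * (a - l / (l + β)) := by
    field_simp
    ring
  rw [div_le_iff₀ (by positivity), expand, le_add_iff_nonneg_right]
  exact mul_nonneg (by positivity) (sub_nonneg.2 quotient_le)

theorem exists_integral_abs_exp_sinkhorn_sub_le_of_logSemiconvex {F G : 𝔼 → ℝ≥0∞}
    (hF : AEMeasurable F) (hG : AEMeasurable G) [IsProbabilityMeasure (volume.withDensity F)]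
    [IsProbabilityMeasure (volume.withDensity G)] {β a l : ℝ} {R : ℝ≥0} (hβ : 0 < β) (ha : 1 ≤ a)
    (hl : 0 < l) (hFb : LogSemiconvex (β * a) F) (hGb : LogSemiconcave β G)
    (hμ : ExpIntegrable (volume.withDensity F) 0)
    (hR : ∀ᵐ y ∂(volume.withDensity G), ‖y‖ ≤ R) {δ : ℝ} (hδ : 0 < δ) :
    ∃ u, LipschitzWith (‖l‖₊ * R) u ∧ Semiconcave (l * a) u ∧
      ∫ x, |Real.exp (sinkhorn l (volume.withDensity F) (volume.withDensity G) u x - u x) - 1|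
        ∂(volume.withDensity F) ≤ δ := by
  have semiconcave_zero : Semiconcave (l * a) (0 : 𝔼 → ℝ) := fun x y t s ht hs _ => by
    simp only [Pi.zero_apply, mul_zero, add_zero, zero_sub, Left.neg_nonpos_iff]
    positivity
  obtain ⟨u, hu, near_fixed⟩ := exists_integral_abs_exp_sinkhorn_sub_le hμ hR l
    (𝒞 := {u | LipschitzWith (‖l‖₊ * R) u ∧ Semiconcave (l * a) u})
    ⟨0, LipschitzWith.const' 0, semiconcave_zero⟩ (fun _ hu => hu.1) (fun u hu => by
      have exp_u := hμ.of_lipschitzWith hu.1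
      have measurable_u := hu.1.continuous.measurable
      exact ⟨lipschitzWith_sinkhorn hR exp_u measurable_u l,
        semiconcave_sinkhorn hF hG hβ ha hl hFb hGb hR hu.2 measurable_u exp_u⟩) hδ
  exact ⟨u, hu.1, hu.2, near_fixed⟩

theorem exists_approx_transport_of_bounded_support {F G : 𝔼 → ℝ≥0∞} (hF : AEMeasurable F)
    (hG : AEMeasurable G) [IsProbabilityMeasure (volume.withDensity F)]
    [IsProbabilityMeasure (volume.withDensity G)] {β a : ℝ} {R : ℝ≥0} (hβ : 0 < β) (ha : 1 ≤ a)
    (hFb : LogSemiconvex (β * a) F) (hGb : LogSemiconcave β G)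
    (hμ : ExpIntegrable (volume.withDensity F) 0)
    (hR : ∀ᵐ y ∂(volume.withDensity G), ‖y‖ ≤ R) {ε : ℝ} (hε : 0 < ε) :
    ∃ φ T, IsSmoothConvexGrad a φ T ∧ ∀ w : 𝔼 → ℝ, (∀ x, |w x| ≤ 1) → LipschitzWith 1 w →
      |∫ y, w y ∂(volume.withDensity G) - ∫ x, w (T x) ∂(volume.withDensity F)| ≤ ε := by
  obtain ⟨l, hl, variance_small⟩ := exists_pos_div_le
    (A := Module.finrank ℝ 𝔼 * (2 * (Real.exp (a / 2) - 1)))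
    (mul_nonneg (Nat.cast_nonneg _)
      (by linarith [Real.one_le_exp (by linarith : 0 ≤ a / 2)])) (by positivity : 0 < (ε / 2) ^ 2)
  obtain ⟨u, lipschitz_u, semiconcave_u, near_fixed⟩ :=
    exists_integral_abs_exp_sinkhorn_sub_le_of_logSemiconvex hF hG hβ ha hl hFb hGb hμ hR
      (half_pos hε)
  set μ := volume.withDensity F
  set ν := volume.withDensity G
  have measurable_u := lipschitz_u.continuous.measurable
  have exp_u := hμ.of_lipschitzWith lipschitz_u
  set v := logLaplace l μ u
  have measurable_v : Measurable v := measurable_logLaplace measurable_u l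
  have exp_v : ExpIntegrable ν v :=
    expIntegrable_logLaplace hR (NeZero.ne μ) exp_u measurable_u l
  have gradient : IsSmoothConvexGrad a (fun x => logLaplace l ν v x / l) (tiltMean l ν v) :=
    isSmoothConvexGrad_logLaplace_div hl (NeZero.ne ν) exp_v
      (semiconcave_sinkhorn hF hG hβ ha hl hFb hGb hR semiconcave_u measurable_u exp_u)
  refine ⟨_, _, gradient, fun w hw1 hw => ?_⟩
  have concentrated (x : 𝔼) : |tiltAverage l ν v w x - w (tiltMean l ν v x)| ≤ ε / 2 := by
    refine abs_tiltAverage_sub_le (NeZero.ne ν) exp_v (half_pos hε) ?_ hw hw1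
    refine (integral_tilt_mul_norm_sub_tiltMean_sq_le hl (NeZero.ne ν) exp_v gradient x).trans ?_
    rw [mul_div_assoc']
    exact mul_le_mul_of_nonneg_left variance_small (laplace_pos exp_v (NeZero.ne ν) l x).le
  have int_w_T : Integrable (fun x => w (tiltMean l ν v x)) μ :=
    .of_bound (hw.continuous.comp (gradient.lipschitzWith (by linarith)).continuous
      ).aestronglyMeasurable 1 (.of_forall fun x => hw1 _)
  rw [← integral_exp_sinkhorn_sub_mul_tiltAverage hR exp_u measurable_u hw.continuous.measurable
    hw1 l]
  refine (abs_integral_mul_sub_integral_le (integrable_exp_sinkhorn_sub hR exp_u measurable_u l)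
    (measurable_tiltAverage measurable_v hw.continuous.measurable l)
    (abs_tiltAverage_le_one (NeZero.ne ν) exp_v hw1 l) int_w_T concentrated).trans ?_
  linarith

end ApproxTransport

section Truncation

open scoped NNReal

section SubmeasureApproximation

variable {α : Type*} [MeasurableSpace α] {μ μ' : Measure α} [IsFiniteMeasure μ] {h : α → ℝ}

theorem abs_integral_sub_integral_le_of_le (hle : μ' ≤ μ) (hm : AEStronglyMeasurable h μ)
    (h1 : ∀ x, |h x| ≤ 1) :
    |∫ x, h x ∂μ - ∫ x, h x ∂μ'| ≤ μ.real Set.univ - μ'.real Set.univ := by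
  have : IsFiniteMeasure μ' := isFiniteMeasure_of_le μ hle
  have int_h : Integrable h μ := .of_bound hm 1 (.of_forall h1)
  have int_h' : Integrable h μ' := int_h.mono_measure hle
  have one_sub_mono : ∫ x, (1 - h x) ∂μ' ≤ ∫ x, (1 - h x) ∂μ :=
    integral_mono_measure hle (.of_forall fun x => sub_nonneg.2 (abs_le.1 (h1 x)).2)
      ((integrable_const _).sub int_h)
  have one_add_mono : ∫ x, (1 + h x) ∂μ' ≤ ∫ x, (1 + h x) ∂μ :=
    integral_mono_measure hle
      (.of_forall fun x => neg_le_iff_add_nonneg'.1 (abs_le.1 (h1 x)).1)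
      ((integrable_const _).add int_h)
  rw [integral_sub (integrable_const _) int_h, integral_sub (integrable_const _) int_h',
    integral_const, integral_const, smul_eq_mul, smul_eq_mul, mul_one, mul_one] at one_sub_mono
  rw [integral_add (integrable_const _) int_h, integral_add (integrable_const _) int_h',
    integral_const, integral_const, smul_eq_mul, smul_eq_mul, mul_one, mul_one] at one_add_mono
  exact abs_le.2 ⟨by linarith, by linarith⟩

theorem abs_integral_sub_integral_inv_smul_le (h1 : ∀ x, |h x| ≤ 1) (hμ : μ.real Set.univ ≤ 1) :
    |∫ x, h x ∂μ - ∫ x, h x ∂((μ Set.univ)⁻¹ • μ)| ≤ 1 - μ.real Set.univ := by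
  rcases eq_zero_or_neZero μ with rfl | hμ0
  · simp
  rw [integral_smul_measure, ENNReal.toReal_inv, ← measureReal_def, smul_eq_mul]
  set m := μ.real Set.univ
  have m_pos : 0 < m := measureReal_univ_pos
  have abs_integral_le : |∫ x, h x ∂μ| ≤ m := by
    simpa using norm_integral_le_of_norm_le_const (μ := μ) (f := h) (C := 1) (.of_forall h1)
  calc |∫ x, h x ∂μ - m⁻¹ * ∫ x, h x ∂μ| = (m⁻¹ - 1) * |∫ x, h x ∂μ| := by
        rw [← one_sub_mul, abs_mul, abs_sub_comm,
          abs_of_nonneg (sub_nonneg.2 (one_le_inv_iff₀.2 ⟨m_pos, hμ⟩))]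
    _ ≤ (m⁻¹ - 1) * m := mul_le_mul_of_nonneg_left abs_integral_le
        (sub_nonneg.2 (one_le_inv_iff₀.2 ⟨m_pos, hμ⟩))
    _ = 1 - m := by rw [sub_mul, inv_mul_cancel₀ m_pos.ne', one_mul]

theorem abs_integral_sub_integral_normalized_le {δ : ℝ} [IsProbabilityMeasure μ] (hle : μ' ≤ μ)
    (hδ : ENNReal.ofReal (1 - δ) < μ' Set.univ) (hm : AEStronglyMeasurable h μ)
    (h1 : ∀ x, |h x| ≤ 1) :
    |∫ x, h x ∂μ - ∫ x, h x ∂((μ' Set.univ)⁻¹ • μ')| ≤ 2 * δ := by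
  have : IsFiniteMeasure μ' := isFiniteMeasure_of_le μ hle
  have mass_ge : 1 - δ ≤ μ'.real Set.univ :=
    (ENNReal.ofReal_le_iff_le_toReal (measure_ne_top _ _)).1 hδ.le
  have mass_le : μ'.real Set.univ ≤ 1 :=
    (ENNReal.toReal_mono (measure_ne_top _ _) (hle _)).trans_eq probReal_univ
  have drop := abs_integral_sub_integral_le_of_le hle hm h1
  rw [probReal_univ] at drop
  refine (abs_sub_le _ (∫ x, h x ∂μ') _).trans ?_
  linarith [abs_integral_sub_integral_inv_smul_le h1 mass_le]

end SubmeasureApproximation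

theorem norm_combo_sq {E : Type*} [NormedAddCommGroup E] [InnerProductSpace ℝ E]
    {t s : ℝ} (hts : t + s = 1) (x y : E) :
    ‖t • x + s • y‖ ^ 2 = t * ‖x‖ ^ 2 + s * ‖y‖ ^ 2 - t * s * ‖x - y‖ ^ 2 := by
  simpa only [real_inner_self_eq_norm_sq] using (inner_combo_combo hts x y x y)

theorem const_mul_rpow_mul_const_mul_rpow {t s : ℝ} (ht : 0 < t) (hs : 0 < s) (hts : t + s = 1)
    (C a b : ℝ≥0∞) : (C * a) ^ t * (C * b) ^ s = C * (a ^ t * b ^ s) := by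
  rw [ENNReal.mul_rpow_of_nonneg _ _ ht.le, ENNReal.mul_rpow_of_nonneg _ _ hs.le,
    mul_mul_mul_comm, ← ENNReal.rpow_add_of_nonneg t s ht.le hs.le, hts, ENNReal.rpow_one]

theorem eexp_zero : eexp 0 = 1 := by simp [eexp]

theorem eexp_le_one {r : ℝ} (hr : r ≤ 0) : eexp r ≤ 1 :=
  eexp_zero ▸ eexp_mono hr

theorem continuous_eexp : Continuous eexp := ENNReal.continuous_ofReal.comp Real.continuous_exp

theorem mul_eexp_neg_norm_sq_le {E : Type*} [NormedAddCommGroup E] (F : E → ℝ≥0∞) {c : ℝ}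
    (hc : 0 ≤ c) (x : E) : F x * eexp (-(c / 2 * ‖x‖ ^ 2)) ≤ F x :=
  mul_le_of_le_one_right zero_le (eexp_le_one (neg_nonpos.2 (by positivity)))

variable {k : ℕ}

local notation "𝔼" => EuclideanSpace ℝ (Fin k)

section Closure

variable {F G : EuclideanSpace ℝ (Fin k) → ℝ≥0∞} {b : ℝ}

theorem LogSemiconvex.const_mul (hF : LogSemiconvex b F) (C : ℝ≥0∞) :
    LogSemiconvex b fun x => C * F x := by
  intro x y t s ht hs hts
  simp only [const_mul_rpow_mul_const_mul_rpow ht hs hts, mul_assoc C]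
  gcongr
  exact hF x y t s ht hs hts

theorem LogSemiconcave.const_mul (hG : LogSemiconcave b G) (C : ℝ≥0∞) :
    LogSemiconcave b fun x => C * G x := by
  intro x y t s ht hs hts
  simp only [const_mul_rpow_mul_const_mul_rpow ht hs hts, mul_assoc C]
  gcongr
  exact hG x y t s ht hs hts

theorem LogSemiconvex.mono (hF : LogSemiconvex b F) {b' : ℝ} (hb : b ≤ b') :
    LogSemiconvex b' F := by
  intro x y t s ht hs hts
  refine (hF x y t s ht hs hts).trans (mul_le_mul_right (eexp_mono ?_) _)
  gcongr

theorem LogSemiconvex.mul_eexp_neg_norm_sq (hF : LogSemiconvex b F) (c : ℝ) :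
    LogSemiconvex (b + c) fun x => F x * eexp (-(c / 2 * ‖x‖ ^ 2)) := by
  intro x y t s ht hs hts
  have exponent : -(c / 2 * ‖t • x + s • y‖ ^ 2) =
      t * -(c / 2 * ‖x‖ ^ 2) + (s * -(c / 2 * ‖y‖ ^ 2) + c / 2 * (t * s) * ‖x - y‖ ^ 2) := by
    rw [norm_combo_sq hts]
    ring
  simp only
  rw [ENNReal.mul_rpow_of_nonneg _ _ ht.le, ENNReal.mul_rpow_of_nonneg _ _ hs.le, exponent,
    eexp_add, eexp_add, eexp_rpow, eexp_rpow, add_div, add_mul, add_mul, eexp_add]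
  calc _ ≤ F x ^ t * F y ^ s * eexp (b / 2 * (t * s) * ‖x - y‖ ^ 2) *
        (eexp (t * -(c / 2 * ‖x‖ ^ 2)) *
          (eexp (s * -(c / 2 * ‖y‖ ^ 2)) * eexp (c / 2 * (t * s) * ‖x - y‖ ^ 2))) := by
        gcongr
        exact hF x y t s ht hs hts
    _ = _ := by ring

theorem LogSemiconcave.indicator (hG : LogSemiconcave b G) {S : Set 𝔼} (hS : Convex ℝ S) :
    LogSemiconcave b (S.indicator G) := by
  intro x y t s ht hs hts
  by_cases hx : x ∈ S
  · by_cases hy : y ∈ S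
    · rw [Set.indicator_of_mem hx, Set.indicator_of_mem hy,
        Set.indicator_of_mem (hS hx hy ht.le hs.le hts)]
      exact hG x y t s ht hs hts
    · simp [Set.indicator_of_notMem hy, ENNReal.zero_rpow_of_pos hs]
  · simp [Set.indicator_of_notMem hx, ENNReal.zero_rpow_of_pos ht]

end Closure

theorem expIntegrable_withDensity_mul_eexp {F : 𝔼 → ℝ≥0∞} (hF : AEMeasurable F)
    (hF_fin : ∫⁻ x, F x ≠ ∞) {c : ℝ} (hc : 0 < c) :
    ExpIntegrable (volume.withDensity fun x : 𝔼 => F x * eexp (-(c / 2 * ‖x‖ ^ 2))) 0 := by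
  intro r
  have aemeasurable_damped : AEMeasurable fun x : 𝔼 => F x * eexp (-(c / 2 * ‖x‖ ^ 2)) :=
    hF.mul (Measurable.aemeasurable (by fun_prop))
  refine ⟨Continuous.aestronglyMeasurable (by simp only [Pi.zero_apply]; fun_prop), ?_⟩
  rw [HasFiniteIntegral, lintegral_withDensity_eq_lintegral_mul₀ aemeasurable_damped
    (Measurable.aemeasurable (by simp only [Pi.zero_apply]; fun_prop))]
  have bound (x : 𝔼) : F x * eexp (-(c / 2 * ‖x‖ ^ 2)) * ‖Real.exp (r * ‖x‖ - 0)‖ₑ ≤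
      F x * eexp (r ^ 2 / (2 * c)) := by
    have complete_square : r ^ 2 / (2 * c) - (-(c / 2 * ‖x‖ ^ 2) + r * ‖x‖) =
        (r - c * ‖x‖) ^ 2 / (2 * c) := by
      field_simp
      ring
    rw [sub_zero, Real.enorm_of_nonneg (Real.exp_pos _).le, ← eexp, mul_assoc, ← eexp_add]
    refine mul_le_mul_right (eexp_mono ?_) _
    rw [← sub_nonneg, complete_square]
    positivity
  refine (lintegral_mono bound).trans_lt ?_
  rw [lintegral_mul_const'' _ hF]
  exact ENNReal.mul_lt_top hF_fin.lt_top (eexp_ne_top _).lt_top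

theorem exists_lt_lintegral_mul_eexp {F : 𝔼 → ℝ≥0∞} (hF : AEMeasurable F)
    (hF_fin : ∫⁻ x, F x ≠ ∞) {m : ℝ≥0∞} (hm : m < ∫⁻ x, F x) {c₀ : ℝ} (hc₀ : 0 < c₀) :
    ∃ c, 0 < c ∧ c ≤ c₀ ∧ m < ∫⁻ x, F x * eexp (-(c / 2 * ‖x‖ ^ 2)) := by
  have damping_tendsto : Filter.Tendsto
      (fun n : ℕ => ∫⁻ x, F x * eexp (-(1 / ((n : ℝ) + 1) / 2 * ‖x‖ ^ 2)))
      Filter.atTop (nhds (∫⁻ x, F x)) := by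
    refine tendsto_lintegral_of_dominated_convergence' F
      (fun n => hF.mul (Measurable.aemeasurable (by fun_prop)))
      (fun n => .of_forall (mul_eexp_neg_norm_sq_le F (by positivity))) hF_fin
      (.of_forall fun x => ?_)
    have eexp_tendsto : Filter.Tendsto (fun n : ℕ => eexp (-(1 / ((n : ℝ) + 1) / 2 * ‖x‖ ^ 2)))
        Filter.atTop (nhds (eexp (-(0 / 2 * ‖x‖ ^ 2)))) :=
      (continuous_eexp.tendsto _).comp
        ((tendsto_one_div_add_atTop_nhds_zero_nat.div_const 2).mul_const _).neg
    rw [zero_div, zero_mul, neg_zero, eexp_zero] at eexp_tendsto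
    simpa only [mul_one] using
      ENNReal.Tendsto.const_mul (a := F x) eexp_tendsto (Or.inl one_ne_zero)
  obtain ⟨n, hn_lintegral, hn_small⟩ := ((damping_tendsto.eventually (lt_mem_nhds hm)).and
    (tendsto_one_div_add_atTop_nhds_zero_nat.eventually (gt_mem_nhds hc₀))).exists
  exact ⟨_, by positivity, hn_small.le, hn_lintegral⟩

theorem exists_lt_measure_closedBall {X : Type*} [PseudoMetricSpace X] [MeasurableSpace X]
    (ν : Measure X) (x : X) {m : ℝ≥0∞} (hm : m < ν Set.univ) :
    ∃ R : ℝ≥0, m < ν (Metric.closedBall x R) := by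
  have exhaustion : Filter.Tendsto (fun n : ℕ => ν (Metric.closedBall x n)) Filter.atTop
      (nhds (ν (⋃ n : ℕ, Metric.closedBall x n))) :=
    tendsto_measure_iUnion_atTop fun a b hab =>
      Metric.closedBall_subset_closedBall (Nat.cast_le.2 hab)
  rw [Metric.iUnion_closedBall_nat] at exhaustion
  obtain ⟨n, hn⟩ := (exhaustion.eventually (lt_mem_nhds hm)).exists
  exact ⟨n, by rwa [NNReal.coe_natCast]⟩

theorem inv_univ_smul_withDensity {X : Type*} [MeasurableSpace X] (μ : Measure X) (F : X → ℝ≥0∞)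
    [NeZero (μ.withDensity F)] : (μ.withDensity F Set.univ)⁻¹ • μ.withDensity F =
      μ.withDensity fun x => (μ.withDensity F Set.univ)⁻¹ * F x :=
  (withDensity_smul' _ _ (ENNReal.inv_ne_top.2 (NeZero.ne _))).symm

theorem exists_approx_transport_normalized {F G : 𝔼 → ℝ≥0∞} (hF : AEMeasurable F)
    (hG : AEMeasurable G) [NeZero (volume.withDensity F)] [NeZero (volume.withDensity G)]
    [IsFiniteMeasure (volume.withDensity F)] [IsFiniteMeasure (volume.withDensity G)]
    {β a : ℝ} {R : ℝ≥0} (hβ : 0 < β) (ha : 1 ≤ a) (hFb : LogSemiconvex (β * a) F)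
    (hGb : LogSemiconcave β G) (hμ : ExpIntegrable (volume.withDensity F) 0)
    (hR : ∀ᵐ y ∂(volume.withDensity G), ‖y‖ ≤ R) {ε : ℝ} (hε : 0 < ε) :
    ∃ φ T, IsSmoothConvexGrad a φ T ∧ ∀ w : 𝔼 → ℝ, (∀ x, |w x| ≤ 1) → LipschitzWith 1 w →
      |∫ y, w y ∂((volume.withDensity G Set.univ)⁻¹ • volume.withDensity G) -
        ∫ x, w (T x) ∂((volume.withDensity F Set.univ)⁻¹ • volume.withDensity F)| ≤ ε := by
  have prob_F : IsProbabilityMeasure ((volume.withDensity F Set.univ)⁻¹ • volume.withDensity F) :=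
    inferInstance
  have prob_G : IsProbabilityMeasure ((volume.withDensity G Set.univ)⁻¹ • volume.withDensity G) :=
    inferInstance
  have exp_F : ExpIntegrable ((volume.withDensity F Set.univ)⁻¹ • volume.withDensity F) 0 :=
    fun c => (hμ c).smul_measure (ENNReal.inv_ne_top.2 (NeZero.ne _))
  have bounded_G := Measure.ae_smul_measure hR (volume.withDensity G Set.univ)⁻¹
  rw [inv_univ_smul_withDensity] at prob_F prob_G exp_F bounded_G
  rw [inv_univ_smul_withDensity, inv_univ_smul_withDensity]
  exact exists_approx_transport_of_bounded_support (hF.const_mul _) (hG.const_mul _) hβ ha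
    (hFb.const_mul _) (hGb.const_mul _) exp_F bounded_G hε

theorem LogSemiconvex.exists_le_expIntegrable {F : 𝔼 → ℝ≥0∞} {β b : ℝ}
    (hFb : LogSemiconvex β F) (hF : AEMeasurable F) (hF_fin : ∫⁻ x, F x ≠ ∞) (hb : β < b)
    {m : ℝ≥0∞} (hm : m < ∫⁻ x, F x) :
    ∃ F' ≤ F, AEMeasurable F' ∧ LogSemiconvex b F' ∧ ExpIntegrable (volume.withDensity F') 0 ∧
      m < ∫⁻ x, F' x := by
  obtain ⟨c, c_pos, c_le, hc⟩ := exists_lt_lintegral_mul_eexp hF hF_fin hm (sub_pos.2 hb)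
  exact ⟨_, mul_eexp_neg_norm_sq_le F c_pos.le, hF.mul (Measurable.aemeasurable (by fun_prop)),
    (hFb.mul_eexp_neg_norm_sq c).mono (le_sub_iff_add_le'.1 c_le),
    expIntegrable_withDensity_mul_eexp hF hF_fin c_pos, hc⟩

theorem LogSemiconcave.exists_le_bounded {G : 𝔼 → ℝ≥0∞} {β : ℝ} (hGb : LogSemiconcave β G)
    (hG : AEMeasurable G) {m : ℝ≥0∞} (hm : m < ∫⁻ y, G y) :
    ∃ G' ≤ G, AEMeasurable G' ∧ LogSemiconcave β G' ∧
      (∃ R : ℝ≥0, ∀ᵐ y ∂volume.withDensity G', ‖y‖ ≤ R) ∧ m < ∫⁻ y, G' y := by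
  rw [← setLIntegral_univ, ← withDensity_apply _ MeasurableSet.univ] at hm
  obtain ⟨R, hR⟩ := exists_lt_measure_closedBall (volume.withDensity G) 0 hm
  have ball_measurable : MeasurableSet (Metric.closedBall (0 : 𝔼) R) :=
    Metric.isClosed_closedBall.measurableSet
  refine ⟨(Metric.closedBall 0 R).indicator G, Set.indicator_le_self _ _,
    hG.indicator ball_measurable, hGb.indicator (convex_closedBall 0 _), ⟨R, ?_⟩, ?_⟩
  · rw [withDensity_indicator ball_measurable, ← restrict_withDensity ball_measurable]
    filter_upwards [ae_restrict_mem ball_measurable] with y hy using mem_closedBall_zero_iff.1 hy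
  · rwa [lintegral_indicator ball_measurable, ← withDensity_apply _ ball_measurable]

theorem exists_approx_transport {F G : 𝔼 → ℝ≥0∞} (hF : AEMeasurable F)
    (hG : AEMeasurable G) [IsProbabilityMeasure (volume.withDensity F)]
    [IsProbabilityMeasure (volume.withDensity G)] {β : ℝ} (hβ : 0 < β)
    (hFb : LogSemiconvex β F) (hGb : LogSemiconcave β G) {ε : ℝ} (hε : 0 < ε) :
    ∃ φ T, IsSmoothConvexGrad (1 + ε) φ T ∧ ∀ w : 𝔼 → ℝ, (∀ x, |w x| ≤ 1) → LipschitzWith 1 w →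
      |∫ y, w y ∂(volume.withDensity G) - ∫ x, w (T x) ∂(volume.withDensity F)| ≤ ε := by
  have lintegral_eq (H : 𝔼 → ℝ≥0∞) : ∫⁻ x, H x = volume.withDensity H Set.univ := by
    rw [← setLIntegral_univ, ← withDensity_apply _ MeasurableSet.univ]
  have mass_lt (H : 𝔼 → ℝ≥0∞) [IsProbabilityMeasure (volume.withDensity H)] :
      ENNReal.ofReal (1 - ε / 6) < ∫⁻ x, H x := by
    rw [lintegral_eq, measure_univ]
    exact ENNReal.ofReal_lt_one.2 (by linarith)
  obtain ⟨F', F'_le, hF', hFb', exp_F', mass_F'⟩ := hFb.exists_le_expIntegrable hF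
    (lintegral_eq F ▸ measure_ne_top _ _) (lt_mul_right hβ (lt_add_of_pos_right 1 hε)) (mass_lt F)
  obtain ⟨G', G'_le, hG', hGb', ⟨R, bounded_G'⟩, mass_G'⟩ := hGb.exists_le_bounded hG (mass_lt G)
  rw [lintegral_eq] at mass_F' mass_G'
  have damped_le := withDensity_mono (μ := volume) (.of_forall F'_le)
  have truncated_le := withDensity_mono (μ := volume) (.of_forall G'_le)
  have : NeZero (volume.withDensity F') := ⟨Measure.measure_univ_ne_zero.1 mass_F'.ne_bot⟩
  have : NeZero (volume.withDensity G') := ⟨Measure.measure_univ_ne_zero.1 mass_G'.ne_bot⟩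
  have : IsFiniteMeasure (volume.withDensity F') := isFiniteMeasure_of_le _ damped_le
  have : IsFiniteMeasure (volume.withDensity G') := isFiniteMeasure_of_le _ truncated_le
  obtain ⟨φ, T, hT, close⟩ := exists_approx_transport_normalized hF' hG' hβ
    (le_add_of_nonneg_right hε.le) hFb' hGb' exp_F' bounded_G' (by positivity : 0 < ε / 3)
  refine ⟨φ, T, hT, fun w hw1 hw => ?_⟩
  have target_error := abs_integral_sub_integral_normalized_le truncated_le mass_G'
    hw.continuous.aestronglyMeasurable hw1
  have source_error := abs_integral_sub_integral_normalized_le (h := fun x => w (T x)) damped_le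
    mass_F' (hw.continuous.comp (hT.lipschitzWith (by positivity)).continuous).aestronglyMeasurable
    fun x => hw1 (T x)
  have middle_error := close w hw1 hw
  rw [abs_le] at target_error source_error middle_error ⊢
  constructor <;> linarith

end Truncation

section TransportLimit

open Filter Topology

theorem integral_eq_of_forall_integral_eq_of_lipschitz {X : Type*} [PseudoEMetricSpace X]
    [MeasurableSpace X] {μ ν : Measure X}
    (h : ∀ w : X → ℝ, (∀ x, |w x| ≤ 1) → LipschitzWith 1 w → ∫ x, w x ∂μ = ∫ x, w x ∂ν)
    {f : X → ℝ} {C L : NNReal} (hC : ∀ x, |f x| ≤ C) (hL : LipschitzWith L f) :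
    ∫ x, f x ∂μ = ∫ x, f x ∂ν := by
  set c : ℝ := (C + L + 1)⁻¹
  have c_pos : 0 < c := by positivity
  have bounded (x : X) : |c * f x| ≤ 1 := by
    rw [abs_mul, abs_of_pos c_pos]
    exact inv_mul_le_one_of_le₀ (by linarith [hC x, L.coe_nonneg]) (by positivity)
  have lipschitz : LipschitzWith 1 fun x => c * f x := by
    refine ((lipschitzWith_smul c).comp hL).weaken ?_
    rw [← NNReal.coe_le_coe, NNReal.coe_mul, coe_nnnorm, Real.norm_of_nonneg c_pos.le]
    exact inv_mul_le_one_of_le₀ (by linarith [C.coe_nonneg]) (by positivity)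
  have scaled := h _ bounded lipschitz
  rw [integral_const_mul, integral_const_mul] at scaled
  exact mul_left_cancel₀ c_pos.ne' scaled

theorem measure_eq_of_forall_integral_eq_of_lipschitz {X : Type*} [PseudoEMetricSpace X]
    [MeasurableSpace X] [BorelSpace X] {μ ν : Measure X} [IsProbabilityMeasure μ]
    [IsProbabilityMeasure ν]
    (h : ∀ w : X → ℝ, (∀ x, |w x| ≤ 1) → LipschitzWith 1 w → ∫ x, w x ∂μ = ∫ x, w x ∂ν) :
    μ = ν := by
  let μ' : ProbabilityMeasure X := ⟨μ, inferInstance⟩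
  let ν' : ProbabilityMeasure X := ⟨ν, inferInstance⟩
  have const_tendsto : Tendsto (fun _ : ℕ => μ') atTop (𝓝 ν') := by
    rw [tendsto_iff_forall_lipschitz_integral_tendsto]
    rintro f ⟨C, hC⟩ ⟨L, hL⟩
    rcases isEmpty_or_nonempty X with _ | ⟨⟨x₀⟩⟩
    · simp [integral_of_isEmpty]
    have bounded (x : X) : |f x| ≤ (C + |f x₀|).toNNReal :=
      (sub_le_iff_le_add.1 ((abs_sub_abs_le_abs_sub _ _).trans (hC x x₀))).trans
        (Real.le_coe_toNNReal _)
    exact (integral_eq_of_forall_integral_eq_of_lipschitz h bounded hL) ▸ tendsto_const_nhds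
  have eq : μ' = ν' := tendsto_nhds_unique tendsto_const_nhds const_tendsto
  exact congrArg Subtype.val eq

variable {E : Type*} [NormedAddCommGroup E]

theorem norm_le_of_lipschitzWith {F : Type*} [NormedAddCommGroup F] {L : NNReal} {f : E → F}
    (hf : LipschitzWith L f) (x : E) : ‖f x‖ ≤ ‖f 0‖ + L * ‖x‖ := by
  refine (norm_le_norm_add_norm_sub' (f x) (f 0)).trans ?_
  gcongr
  simpa using hf.norm_sub_le x 0

theorem isCompact_setOf_lipschitzWith_and_norm_le [ProperSpace E] (L : NNReal) (R : ℝ) :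
    IsCompact {f : C(E, E) | LipschitzWith L f ∧ ‖f 0‖ ≤ R} := by
  set K := {f : C(E, E) | LipschitzWith L f ∧ ‖f 0‖ ≤ R}
  refine ArzelaAscoli.isCompact_of_equicontinuous K ?_
    (LipschitzWith.uniformEquicontinuous _ L fun f : K => f.2.1).equicontinuous
  have image_eq : ContinuousMap.toFun '' K =
      {f : E → E | LipschitzWith L f} ∩ {f | ‖f 0‖ ≤ R} := by
    ext f
    exact ⟨fun ⟨_, hg, hgf⟩ => hgf ▸ hg, fun ⟨hL, hR⟩ => ⟨⟨f, hL.continuous⟩, ⟨hL, hR⟩, rfl⟩⟩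
  rw [image_eq]
  refine (isCompact_univ_pi fun x : E =>
    isCompact_closedBall (0 : E) (R + L * ‖x‖)).of_isClosed_subset
    ((isClosed_setOfPred_lipschitzWith L).inter
      (isClosed_le (continuous_apply 0).norm continuous_const)) ?_
  rintro f ⟨hL, hR⟩ x -
  exact mem_closedBall_zero_iff.2 ((norm_le_of_lipschitzWith hL x).trans (by gcongr; exact hR))

theorem exists_subseq_tendsto_of_lipschitzWith [ProperSpace E] {T : ℕ → E → E} {L : NNReal}
    {R : ℝ} (hL : ∀ n, LipschitzWith L (T n)) (hR : ∀ n, ‖T n 0‖ ≤ R) :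
    ∃ (S : E → E) (σ : ℕ → ℕ), StrictMono σ ∧
      ∀ x, Tendsto (fun n => T (σ n) x) atTop (𝓝 (S x)) := by
  obtain ⟨f, -, σ, hσ, hf⟩ := (isCompact_setOf_lipschitzWith_and_norm_le L R).tendsto_subseq
    (x := fun n => (⟨T n, (hL n).continuous⟩ : C(E, E))) fun n => ⟨hL n, hR n⟩
  exact ⟨f, σ, hσ, fun x => ((ContinuousEvalConst.continuous_eval_const x).tendsto f).comp hf⟩

/-- A `1`-Lipschitz cutoff, equal to `1` on the ball of radius `R` about the origin and to `0` off
the ball of radius `R + 1`. -/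
def ballCutoff (R : ℝ) (y : E) : ℝ := max 0 (min 1 (1 + R - ‖y‖))

theorem ballCutoff_nonneg (R : ℝ) (y : E) : 0 ≤ ballCutoff R y := le_max_left _ _

theorem ballCutoff_le_one (R : ℝ) (y : E) : ballCutoff R y ≤ 1 :=
  max_le zero_le_one (min_le_left _ _)

theorem abs_ballCutoff_le_one (R : ℝ) (y : E) : |ballCutoff R y| ≤ 1 :=
  (abs_of_nonneg (ballCutoff_nonneg R y)).trans_le (ballCutoff_le_one R y)

theorem one_le_ballCutoff {R : ℝ} {y : E} (hy : ‖y‖ ≤ R) : 1 ≤ ballCutoff R y :=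
  le_max_of_le_right (le_min le_rfl (by linarith))

theorem ballCutoff_nonpos {R : ℝ} {y : E} (hy : R + 1 ≤ ‖y‖) : ballCutoff R y ≤ 0 :=
  max_le le_rfl (min_le_of_right_le (by linarith))

theorem lipschitzWith_ballCutoff (R : ℝ) : LipschitzWith 1 (ballCutoff R : E → ℝ) := by
  refine LipschitzWith.const_max (LipschitzWith.const_min (.of_dist_le_mul fun x y => ?_) _) _
  rw [Real.dist_eq, NNReal.coe_one, one_mul, dist_eq_norm, sub_sub_sub_cancel_left, norm_sub_rev]
  exact abs_norm_sub_norm_le _ _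

theorem exists_lt_measureReal_closedBall {X : Type*} [PseudoMetricSpace X] [MeasurableSpace X]
    (μ : Measure X) [IsFiniteMeasure μ] (x : X) {c : ℝ} (hc : c < μ.real Set.univ) :
    ∃ R : NNReal, c < μ.real (Metric.closedBall x R) := by
  rcases lt_or_ge c 0 with c_neg | c_nonneg
  · exact ⟨0, c_neg.trans_le measureReal_nonneg⟩
  obtain ⟨R, hR⟩ := exists_lt_measure_closedBall μ x
    ((ENNReal.ofReal_lt_iff_lt_toReal c_nonneg (measure_ne_top _ _)).2 hc)
  exact ⟨R, (ENNReal.ofReal_lt_iff_lt_toReal c_nonneg (measure_ne_top _ _)).1 hR⟩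

theorem measureReal_le_integral_of_one_le {X : Type*} [MeasurableSpace X] {μ : Measure X}
    [IsFiniteMeasure μ] {f : X → ℝ} (hf : Integrable f μ) (hf0 : ∀ x, 0 ≤ f x) {s : Set X}
    (hs : ∀ x ∈ s, 1 ≤ f x) : μ.real s ≤ ∫ x, f x ∂μ :=
  (measureReal_mono hs).trans
    ((one_mul _).symm.trans_le (mul_meas_ge_le_integral_of_nonneg (.of_forall hf0) hf 1))

-- If `T 0` were far away, `T` would send most of `μ` off a ball carrying most of `ν`.
theorem exists_norm_le_of_approx_transport [MeasurableSpace E] [BorelSpace E]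
    [SecondCountableTopology E] (μ ν : Measure E) [IsProbabilityMeasure μ]
    [IsProbabilityMeasure ν] (L : NNReal) : ∃ R, ∀ T : E → E, LipschitzWith L T →
      (∀ w : E → ℝ, (∀ x, |w x| ≤ 1) → LipschitzWith 1 w →
        |∫ y, w y ∂ν - ∫ x, w (T x) ∂μ| ≤ 1 / 3) → ‖T 0‖ ≤ R := by
  obtain ⟨r, hr⟩ := exists_lt_measureReal_closedBall μ 0 (c := 2 / 3)
    (by rw [probReal_univ]; norm_num)
  obtain ⟨R, hR⟩ := exists_lt_measureReal_closedBall ν 0 (c := 2 / 3)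
    (by rw [probReal_univ]; norm_num)
  refine ⟨R + 1 + L * r, fun T hT hw => ?_⟩
  by_contra! far
  have integrable_cutoff : Integrable (ballCutoff R) ν :=
    .of_bound (lipschitzWith_ballCutoff R).continuous.aestronglyMeasurable 1
      (.of_forall (abs_ballCutoff_le_one _))
  have integrable_cutoff_comp : Integrable (fun x => ballCutoff R (T x)) μ :=
    .of_bound ((lipschitzWith_ballCutoff R).continuous.comp hT.continuous).aestronglyMeasurable 1
      (.of_forall fun _ => abs_ballCutoff_le_one _ _)
  have cutoff_integral := measureReal_le_integral_of_one_le integrable_cutoff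
    (ballCutoff_nonneg _) fun y hy => one_le_ballCutoff (mem_closedBall_zero_iff.1 hy)
  have off_cutoff (x : E) (hx : x ∈ Metric.closedBall 0 (r : ℝ)) :
      1 ≤ 1 - ballCutoff R (T x) := by
    rw [le_sub_self_iff]
    refine ballCutoff_nonpos ?_
    have displacement : ‖T x - T 0‖ ≤ L * r := by
      refine (hT.norm_sub_le x 0).trans ?_
      rw [sub_zero]
      gcongr
      exact mem_closedBall_zero_iff.1 hx
    linarith [norm_le_norm_add_norm_sub (T x) (T 0)]
  have off_cutoff_integral := measureReal_le_integral_of_one_le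
    (f := fun x => 1 - ballCutoff R (T x)) ((integrable_const 1).sub integrable_cutoff_comp)
    (fun x => sub_nonneg.2 (ballCutoff_le_one R (T x))) off_cutoff
  rw [integral_sub (integrable_const _) integrable_cutoff_comp, integral_const, probReal_univ,
    one_smul] at off_cutoff_integral
  linarith [(abs_le.1 (hw _ (abs_ballCutoff_le_one R) (lipschitzWith_ballCutoff R))).2]

section LimitOfGradients

variable [InnerProductSpace ℝ E] {a : ℕ → ℝ} {φ : ℕ → E → ℝ} {T : ℕ → E → E} {α : ℝ} {S : E → E}

-- The potentials converge along an ultrafilter, which spares a diagonal extraction.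
theorem exists_tendsto_hyperfilter_potential (h : ∀ n, IsSmoothConvexGrad (a n) (φ n) (T n))
    (ha : Tendsto a atTop (𝓝 α)) (hS : Tendsto (fun n => T n 0) atTop (𝓝 (S 0))) (x : E) :
    ∃ y, Tendsto (fun n => φ n x - φ n 0) (hyperfilter ℕ) (𝓝 y) := by
  have lower_tendsto : Tendsto (fun n => inner ℝ (T n 0) x) atTop (𝓝 (inner ℝ (S 0) x)) :=
    hS.inner tendsto_const_nhds
  have upper_tendsto : Tendsto (fun n => inner ℝ (T n 0) x + a n / 2 * ‖x‖ ^ 2) atTop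
      (𝓝 (inner ℝ (S 0) x + α / 2 * ‖x‖ ^ 2)) :=
    lower_tendsto.add ((ha.div_const 2).mul_const _)
  have eventually_mem_Icc : ∀ᶠ n in hyperfilter ℕ, φ n x - φ n 0 ∈
      Set.Icc (inner ℝ (S 0) x - 1) (inner ℝ (S 0) x + α / 2 * ‖x‖ ^ 2 + 1) := by
    refine Eventually.filter_mono Nat.hyperfilter_le_atTop ?_
    filter_upwards [lower_tendsto.eventually (lt_mem_nhds (sub_one_lt _)),
      upper_tendsto.eventually (gt_mem_nhds (lt_add_one _))] with n lower upper
    have grad_at_zero := h n 0 x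
    rw [zero_add] at grad_at_zero
    constructor <;> linarith [grad_at_zero.1, grad_at_zero.2]
  obtain ⟨y, -, hy⟩ := isCompact_Icc.ultrafilter_le_nhds
    ((hyperfilter ℕ).map fun n => φ n x - φ n 0) (le_principal_iff.2 eventually_mem_Icc)
  exact ⟨y, hy⟩

theorem exists_isSmoothConvexGrad_of_tendsto (h : ∀ n, IsSmoothConvexGrad (a n) (φ n) (T n))
    (ha : Tendsto a atTop (𝓝 α)) (hS : ∀ x, Tendsto (fun n => T n x) atTop (𝓝 (S x))) :
    ∃ ψ, IsSmoothConvexGrad α ψ S := by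
  choose ψ hψ using exists_tendsto_hyperfilter_potential h ha (hS 0)
  refine ⟨ψ, fun x y => ?_⟩
  have affine_tendsto : Tendsto (fun n => φ n x - φ n 0 + inner ℝ (T n x) y) (hyperfilter ℕ)
      (𝓝 (ψ x + inner ℝ (S x) y)) :=
    (hψ x).add (((hS x).mono_left Nat.hyperfilter_le_atTop).inner tendsto_const_nhds)
  have quadratic_tendsto : Tendsto (fun n => a n / 2 * ‖y‖ ^ 2) (hyperfilter ℕ)
      (𝓝 (α / 2 * ‖y‖ ^ 2)) :=
    ((ha.mono_left Nat.hyperfilter_le_atTop).div_const 2).mul_const _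
  constructor
  · exact le_of_tendsto_of_tendsto' affine_tendsto (hψ (x + y)) fun n => by
      linarith [(h n x y).1]
  · exact le_of_tendsto_of_tendsto' (hψ (x + y)) (affine_tendsto.add quadratic_tendsto) fun n => by
      linarith [(h n x y).2]

end LimitOfGradients

theorem map_eq_of_tendsto_of_approx_transport [MeasurableSpace E] [BorelSpace E]
    [SecondCountableTopology E] {μ ν : Measure E} [IsProbabilityMeasure μ] [IsProbabilityMeasure ν]
    {T : ℕ → E → E} {S : E → E} (hT : ∀ n, Continuous (T n)) (hS : Continuous S)
    (hTS : ∀ x, Tendsto (fun n => T n x) atTop (𝓝 (S x))) {ε : ℕ → ℝ}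
    (hε : Tendsto ε atTop (𝓝 0))
    (h : ∀ n, ∀ w : E → ℝ, (∀ x, |w x| ≤ 1) → LipschitzWith 1 w →
      |∫ y, w y ∂ν - ∫ x, w (T n x) ∂μ| ≤ ε n) :
    μ.map S = ν := by
  have : IsProbabilityMeasure (μ.map S) := Measure.isProbabilityMeasure_map hS.aemeasurable
  refine measure_eq_of_forall_integral_eq_of_lipschitz fun w hw1 hw => ?_
  rw [integral_map hS.aemeasurable hw.continuous.aestronglyMeasurable]
  have tendsto_limit_map : Tendsto (fun n => ∫ x, w (T n x) ∂μ) atTop (𝓝 (∫ x, w (S x) ∂μ)) :=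
    tendsto_integral_of_dominated_convergence (fun _ => 1)
      (fun n => (hw.continuous.comp (hT n)).aestronglyMeasurable) (integrable_const _)
      (fun n => .of_forall fun x => hw1 _)
      (.of_forall fun x => (hw.continuous.tendsto _).comp (hTS x))
  have tendsto_target : Tendsto (fun n => ∫ x, w (T n x) ∂μ) atTop (𝓝 (∫ y, w y ∂ν)) := by
    rw [tendsto_iff_dist_tendsto_zero]
    refine squeeze_zero (fun _ => dist_nonneg) (fun n => ?_) hε
    rw [dist_comm, Real.dist_eq]
    exact h n w hw1 hw
  exact tendsto_nhds_unique tendsto_limit_map tendsto_target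

-- Caffarelli's contraction theorem: the approximate transports are uniformly Lipschitz, hence have
-- a limit point.
theorem exists_contracting_transport {k : ℕ} {F G : EuclideanSpace ℝ (Fin k) → ℝ≥0∞}
    (hF : AEMeasurable F) (hG : AEMeasurable G) [IsProbabilityMeasure (volume.withDensity F)]
    [IsProbabilityMeasure (volume.withDensity G)] {β : ℝ} (hβ : 0 < β)
    (hFb : LogSemiconvex β F) (hGb : LogSemiconcave β G) :
    ∃ φ T, IsSmoothConvexGrad 1 φ T ∧
      (volume.withDensity F).map T = volume.withDensity G := by
  set ε : ℕ → ℝ := fun n => 1 / ((n : ℝ) + 1) / 3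
  have ε_pos (n : ℕ) : 0 < ε n := by positivity
  have ε_le (n : ℕ) : ε n ≤ 1 / 3 := by
    have : 1 / ((n : ℝ) + 1) ≤ 1 :=
      (div_le_one (by positivity)).2 (by linarith [n.cast_nonneg (α := ℝ)])
    exact div_le_div_of_nonneg_right this (by norm_num)
  have ε_tendsto : Tendsto ε atTop (𝓝 0) := by
    simpa only [zero_div] using (tendsto_one_div_add_atTop_nhds_zero_nat (𝕜 := ℝ)).div_const 3
  choose φ T hφT close using fun n => exists_approx_transport hF hG hβ hFb hGb (ε_pos n)
  have lipschitz (n : ℕ) : LipschitzWith (Real.toNNReal 2) (T n) :=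
    ((hφT n).mono (by linarith [ε_le n])).lipschitzWith two_pos
  obtain ⟨R, hR⟩ := exists_norm_le_of_approx_transport (volume.withDensity F)
    (volume.withDensity G) (Real.toNNReal 2)
  obtain ⟨S, σ, hσ, hS⟩ := exists_subseq_tendsto_of_lipschitzWith lipschitz fun n =>
    hR (T n) (lipschitz n) fun w hw1 hw => (close n w hw1 hw).trans (ε_le n)
  have ε_subseq_tendsto := ε_tendsto.comp hσ.tendsto_atTop
  obtain ⟨ψ, hψ⟩ := exists_isSmoothConvexGrad_of_tendsto (fun n => hφT (σ n)) (α := 1)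
    (by simpa using ε_subseq_tendsto.const_add 1) hS
  exact ⟨ψ, S, hψ, map_eq_of_tendsto_of_approx_transport
    (fun n => (lipschitz (σ n)).continuous) (hψ.lipschitzWith one_pos).continuous hS
    ε_subseq_tendsto fun n => close (σ n)⟩

end TransportLimit

section MongeAmpere

open Filter Topology

variable {E : Type*} [NormedAddCommGroup E] [InnerProductSpace ℝ E]

theorem eq_zero_of_det_ne_zero_of_apply_eq_zero [FiniteDimensional ℝ E] {A : E →L[ℝ] E}
    (hA : A.det ≠ 0) {v : E} (hv : A v = 0) : v = 0 := by
  have ker_eq_bot := not_ne_iff.1 (mt LinearMap.det_eq_zero_iff_ker_ne_bot.2 hA)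
  exact LinearMap.ker_eq_bot'.1 ker_eq_bot v hv

namespace IsSmoothConvexGrad

variable {a : ℝ} {φ : E → ℝ} {T : E → E}

theorem hasFDerivAt (h : IsSmoothConvexGrad a φ T) (x : E) :
    HasFDerivAt φ (innerSL ℝ (T x)) x := by
  rw [hasFDerivAt_iff_isLittleO_nhds_zero]
  have remainder_isBigO :
      (fun v : E => φ (x + v) - φ x - innerSL ℝ (T x) v) =O[𝓝 0] fun v => ‖v‖ ^ 2 := by
    refine Asymptotics.IsBigO.of_bound (a / 2) (.of_forall fun v => ?_)
    rw [innerSL_apply_apply, Real.norm_of_nonneg (sq_nonneg ‖v‖),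
      Real.norm_of_nonneg (by linarith [(h x v).1])]
    linarith [(h x v).2]
  exact remainder_isBigO.trans_isLittleO (Asymptotics.isLittleO_norm_pow_id one_lt_two)

section Derivative

variable {x : E} {A : E →L[ℝ] E}

theorem fderiv_symmetric (h : IsSmoothConvexGrad a φ T) (hA : HasFDerivAt T A x) (v w : E) :
    inner ℝ (A v) w = inner ℝ v (A w) := by
  have second_derivative : HasFDerivAt (fun y => innerSL ℝ (T y)) ((innerSL ℝ).comp A) x :=
    (innerSL ℝ (E := E)).hasFDerivAt.comp x hA
  have symmetric := second_derivative_symmetric h.hasFDerivAt second_derivative v w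
  simp only [ContinuousLinearMap.comp_apply, innerSL_apply_apply] at symmetric
  rw [symmetric, real_inner_comm]

theorem norm_fderiv_sq_le (h : IsSmoothConvexGrad a φ T) (ha : 0 < a) (hA : HasFDerivAt T A x)
    (v : E) : ‖A v‖ ^ 2 ≤ a * inner ℝ (A v) v := by
  have quotient_tendsto := hA.lim_real v
  refine le_of_tendsto_of_tendsto (quotient_tendsto.norm.pow 2)
    ((quotient_tendsto.inner tendsto_const_nhds).const_mul a) ?_
  filter_upwards [eventually_gt_atTop 0] with c hc
  have cocoercive := h.norm_sub_sq_le ha (x + c⁻¹ • v) x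
  rw [add_sub_cancel_left, inner_smul_right] at cocoercive
  rw [norm_smul, mul_pow, Real.norm_of_nonneg hc.le, real_inner_smul_left]
  calc c ^ 2 * ‖T (x + c⁻¹ • v) - T x‖ ^ 2
      ≤ c ^ 2 * (a * (c⁻¹ * inner ℝ (T (x + c⁻¹ • v) - T x) v)) := by gcongr
    _ = a * (c * inner ℝ (T (x + c⁻¹ • v) - T x) v) := by field_simp

theorem inner_fderiv_le (h : IsSmoothConvexGrad a φ T) (ha : 0 < a) (hA : HasFDerivAt T A x)
    (v : E) : inner ℝ (A v) v ≤ a * ‖v‖ ^ 2 := by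
  have norm_le : ‖A v‖ ≤ a * ‖v‖ := by
    refine le_of_tendsto (hA.lim_real v).norm ?_
    filter_upwards [eventually_gt_atTop 0] with c hc
    rw [norm_smul, Real.norm_of_nonneg hc.le]
    refine (mul_le_mul_of_nonneg_left (h.norm_sub_le ha _ _) hc.le).trans_eq ?_
    rw [add_sub_cancel_left, norm_smul, norm_inv, Real.norm_of_nonneg hc.le]
    field_simp
  calc inner ℝ (A v) v ≤ ‖A v‖ * ‖v‖ := real_inner_le_norm _ _
    _ ≤ a * ‖v‖ * ‖v‖ := by gcongr
    _ = a * ‖v‖ ^ 2 := by ring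

theorem inner_fderiv_pos [FiniteDimensional ℝ E] (h : IsSmoothConvexGrad a φ T) (ha : 0 < a)
    (hA : HasFDerivAt T A x) (hdet : A.det ≠ 0) {v : E} (hv : v ≠ 0) : 0 < inner ℝ (A v) v := by
  have apply_ne_zero : A v ≠ 0 := mt (eq_zero_of_det_ne_zero_of_apply_eq_zero hdet) hv
  exact pos_of_mul_pos_right
    ((by positivity : 0 < ‖A v‖ ^ 2).trans_le (h.norm_fderiv_sq_le ha hA v)) ha.le

end Derivative

theorem apply_add_smul_sub_eq (h : IsSmoothConvexGrad a φ T) (ha : 0 < a) {x y : E}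
    (hxy : T x = T y) {t : ℝ} (ht : 0 ≤ t) (ht1 : t ≤ 1) : T (x + t • (y - x)) = T x := by
  set z := x + t • (y - x) with hz
  have from_x := h.norm_sub_sq_le ha z x
  have from_y := h.norm_sub_sq_le ha z y
  have sub_x : z - x = t • (y - x) := add_sub_cancel_left _ _
  have sub_y : z - y = -((1 - t) • (y - x)) := by rw [hz]; module
  rw [sub_x, inner_smul_right] at from_x
  rw [sub_y, ← hxy, inner_neg_right, inner_smul_right] at from_y
  have weighted := add_le_add (mul_le_mul_of_nonneg_left from_x (sub_nonneg.2 ht1))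
    (mul_le_mul_of_nonneg_left from_y ht)
  have norm_sq_le : ‖T z - T x‖ ^ 2 ≤ 0 := by linarith
  exact sub_eq_zero.1 (norm_eq_zero.1 (sq_nonpos_iff _ |>.1 norm_sq_le))

theorem eq_of_apply_eq [FiniteDimensional ℝ E] (h : IsSmoothConvexGrad a φ T) (ha : 0 < a)
    {x y : E} {A : E →L[ℝ] E} (hA : HasFDerivAt T A x) (hdet : A.det ≠ 0) (hxy : T x = T y) :
    x = y := by
  -- `T` is constant on the segment `[x, y]`, so its derivative kills the direction `y - x`
  have apply_eq_zero : A (y - x) = 0 := by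
    refine tendsto_nhds_unique (hA.lim_real (y - x)) (tendsto_const_nhds.congr' ?_)
    filter_upwards [eventually_ge_atTop 1] with c hc
    rw [h.apply_add_smul_sub_eq ha hxy (by positivity) (inv_le_one_of_one_le₀ hc), sub_self,
      smul_zero]
  exact (sub_eq_zero.1 (eq_zero_of_det_ne_zero_of_apply_eq_zero hdet apply_eq_zero)).symm

end IsSmoothConvexGrad

/-- The points where `T` is differentiable with invertible derivative. -/
def regularPoints (T : E → E) : Set E :=
  {x | DifferentiableAt ℝ T x ∧ (fderiv ℝ T x).det ≠ 0}

variable [FiniteDimensional ℝ E] [MeasurableSpace E] [BorelSpace E]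

theorem measurable_det_fderiv (T : E → E) : Measurable fun x => (fderiv ℝ T x).det :=
  ContinuousLinearMap.continuous_det.measurable.comp (measurable_fderiv ℝ T)

theorem measurableSet_regularPoints (T : E → E) : MeasurableSet (regularPoints T) :=
  (measurableSet_of_differentiableAt ℝ T).inter
    (measurable_det_fderiv T (measurableSet_singleton 0).compl)

theorem ae_mem_regularPoints {T : E → E} {L : NNReal} (hT : LipschitzWith L T)
    (hq : Measure.QuasiMeasurePreserving T) : ∀ᵐ x, x ∈ regularPoints T := by
  set N : Set E := {x | DifferentiableAt ℝ T x ∧ (fderiv ℝ T x).det = 0}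
  have image_null : volume (T '' N) = 0 :=
    addHaar_image_eq_zero_of_det_fderivWithin_eq_zero volume (f' := fun x => fderiv ℝ T x)
      (fun x hx => hx.1.hasFDerivAt.hasFDerivWithinAt) fun x hx => hx.2
  have critical_null : volume N = 0 :=
    measure_mono_null (Set.subset_preimage_image T N) (hq.preimage_null image_null)
  filter_upwards [hT.ae_differentiableAt (μ := volume),
    measure_eq_zero_iff_ae_notMem.1 critical_null] with x differentiable notMem
  exact ⟨differentiable, fun hdet => notMem ⟨differentiable, hdet⟩⟩

theorem measure_map_compl_image_eq_zero {X Y : Type*} [MeasurableSpace X] [MeasurableSpace Y]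
    {μ : Measure X} {T : X → Y} (hT : Measurable T) {D : Set X} (hD : μ Dᶜ = 0)
    (hTD : MeasurableSet (T '' D)) : μ.map T (T '' D)ᶜ = 0 := by
  rw [Measure.map_apply hT hTD.compl, Set.preimage_compl]
  exact measure_mono_null (Set.compl_subset_compl.2 (Set.subset_preimage_image _ _)) hD

section Transport

variable {F G : E → ℝ≥0∞} {a : ℝ} {φ : E → ℝ} {T : E → E}

theorem quasiMeasurePreserving_of_map_withDensity_eq (hF : AEMeasurable F) (hF0 : ∀ x, F x ≠ 0)
    (hT : Measurable T) (hmap : (volume.withDensity F).map T = volume.withDensity G) :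
    Measure.QuasiMeasurePreserving T := by
  refine ⟨hT, ?_⟩
  have map_absolutelyContinuous : (volume : Measure E).map T ≪ (volume.withDensity F).map T :=
    (withDensity_absolutelyContinuous' hF (.of_forall hF0)).map hT
  exact map_absolutelyContinuous.trans (hmap ▸ withDensity_absolutelyContinuous _ _)

theorem setLIntegral_eq_setLIntegral_det_mul_comp (hT : IsSmoothConvexGrad a φ T) (ha : 0 < a)
    (hmap : (volume.withDensity F).map T = volume.withDensity G) {s : Set E}
    (hs : MeasurableSet s) (hsD : s ⊆ regularPoints T) :
    ∫⁻ x in s, F x = ∫⁻ x in s, ENNReal.ofReal |(fderiv ℝ T x).det| * G (T x) := by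
  have eq_of_apply_eq : ∀ x ∈ s, ∀ y, T x = T y → x = y := fun x hx y =>
    hT.eq_of_apply_eq ha (hsD hx).1.hasFDerivAt (hsD hx).2
  have injOn : Set.InjOn T s := fun x hx y _ => eq_of_apply_eq x hx y
  have hasDeriv : ∀ x ∈ s, HasFDerivWithinAt T (fderiv ℝ T x) s x := fun x hx =>
    (hsD hx).1.hasFDerivAt.hasFDerivWithinAt
  have image_measurable := measurable_image_of_fderivWithin hs hasDeriv injOn
  have preimage_image : T ⁻¹' (T '' s) = s :=
    (Set.subset_preimage_image T s).antisymm' fun x ⟨y, hy, hyx⟩ => eq_of_apply_eq y hy x hyx ▸ hy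
  calc ∫⁻ x in s, F x = volume.withDensity F (T ⁻¹' (T '' s)) := by
        rw [preimage_image, withDensity_apply _ hs]
    _ = ∫⁻ y in T '' s, G y := by
        rw [← Measure.map_apply (hT.lipschitzWith ha).continuous.measurable image_measurable, hmap,
          withDensity_apply _ image_measurable]
    _ = _ := lintegral_image_eq_lintegral_abs_det_fderiv_mul volume hs hasDeriv injOn G

theorem monge_ampere_ae (hF : AEMeasurable F) (hF0 : ∀ x, F x ≠ 0) (hG : AEMeasurable G)
    (hT : IsSmoothConvexGrad a φ T) (ha : 0 < a)
    (hmap : (volume.withDensity F).map T = volume.withDensity G) :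
    F =ᵐ[volume] fun x => ENNReal.ofReal |(fderiv ℝ T x).det| * G (T x) := by
  have hq := quasiMeasurePreserving_of_map_withDensity_eq hF hF0
    (hT.lipschitzWith ha).continuous.measurable hmap
  refine ae_eq_of_forall_setLIntegral_eq_of_sigmaFinite₀ hF
    ((measurable_det_fderiv T).norm.ennreal_ofReal.aemeasurable.mul
      (hG.comp_quasiMeasurePreserving hq)) fun s hs _ => ?_
  have restrict_eq : (volume : Measure E).restrict s = volume.restrict (s ∩ regularPoints T) :=
    Measure.restrict_congr_set
      (inter_ae_eq_left_of_ae_eq_univ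
        (eventuallyEq_univ.2 (ae_mem_regularPoints (hT.lipschitzWith ha) hq))).symm
  rw [restrict_eq]
  exact setLIntegral_eq_setLIntegral_det_mul_comp hT ha hmap
    (hs.inter (measurableSet_regularPoints T)) Set.inter_subset_right

theorem exists_monge_ampere (hF : AEMeasurable F) (hF0 : ∀ x, F x ≠ 0) (hG : AEMeasurable G)
    (hT : IsSmoothConvexGrad a φ T) (ha : 0 < a)
    (hmap : (volume.withDensity F).map T = volume.withDensity G) :
    ∃ D ⊆ regularPoints T, MeasurableSet D ∧ volume Dᶜ = 0 ∧
      (∀ x ∈ D, F x = ENNReal.ofReal |(fderiv ℝ T x).det| * G (T x)) ∧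
      ((∀ x, G x ≠ 0) → volume (T '' D)ᶜ = 0) := by
  have T_measurable := (hT.lipschitzWith ha).continuous.measurable
  have regular_ae := ae_mem_regularPoints (hT.lipschitzWith ha)
    (quasiMeasurePreserving_of_map_withDensity_eq hF hF0 T_measurable hmap)
  obtain ⟨N, hN, N_measurable, N_null⟩ := exists_measurable_superset_of_null
    (ae_iff.1 ((monge_ampere_ae hF hF0 hG hT ha hmap).and regular_ae))
  have mem_of_notMem : ∀ x ∈ Nᶜ, _ := fun x hx => not_not.1 (mt (@hN x) hx)
  refine ⟨Nᶜ, fun x hx => (mem_of_notMem x hx).2, N_measurable.compl, by rwa [compl_compl],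
    fun x hx => (mem_of_notMem x hx).1, fun hG0 => ?_⟩
  have image_measurable : MeasurableSet (T '' Nᶜ) :=
    measurable_image_of_fderivWithin N_measurable.compl
      (fun x hx => (mem_of_notMem x hx).2.1.hasFDerivAt.hasFDerivWithinAt) fun x hx y _ =>
        hT.eq_of_apply_eq ha (mem_of_notMem x hx).2.1.hasFDerivAt (mem_of_notMem x hx).2.2
  refine withDensity_absolutelyContinuous' hG (.of_forall hG0) ?_
  rw [← hmap]
  refine measure_map_compl_image_eq_zero T_measurable ?_ image_measurable
  rw [compl_compl]
  exact withDensity_absolutelyContinuous _ _ N_null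

end Transport

end MongeAmpere

section LinearAlgebra

variable {ι : Type*} [Fintype ι]

section Forms

variable {A B : Matrix ι ι ℝ}

theorem mulVec_dotProduct_pos_of_posDef (hA : A.PosDef) {x : ι → ℝ} (hx : x ≠ 0) :
    0 < A *ᵥ x ⬝ᵥ x := by
  simpa only [star_trivial, dotProduct_comm] using hA.dotProduct_mulVec_pos hx

theorem mulVec_dotProduct_nonneg_of_posSemidef (hA : A.PosSemidef) (x : ι → ℝ) :
    0 ≤ A *ᵥ x ⬝ᵥ x := by
  simpa only [star_trivial, dotProduct_comm] using hA.dotProduct_mulVec_nonneg x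

theorem mulVec_dotProduct_le_of_posSemidef_sub (h : (B - A).PosSemidef) (x : ι → ℝ) :
    A *ᵥ x ⬝ᵥ x ≤ B *ᵥ x ⬝ᵥ x := by
  have nonneg := mulVec_dotProduct_nonneg_of_posSemidef h x
  rwa [sub_mulVec, sub_dotProduct, sub_nonneg] at nonneg

theorem mulVec_combo_dotProduct_combo (A : Matrix ι ι ℝ) (x y : ι → ℝ) {t s : ℝ}
    (hts : t + s = 1) : A *ᵥ (t • x + s • y) ⬝ᵥ (t • x + s • y) =
      t * (A *ᵥ x ⬝ᵥ x) + s * (A *ᵥ y ⬝ᵥ y) - t * s * (A *ᵥ (x - y) ⬝ᵥ (x - y)) := by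
  simp only [mulVec_add, mulVec_sub, mulVec_smul, add_dotProduct, dotProduct_add, sub_dotProduct,
    dotProduct_sub, smul_dotProduct, dotProduct_smul, smul_eq_mul]
  obtain rfl : s = 1 - t := by linarith
  ring

theorem mulVec_dotProduct_mulVec (A B : Matrix ι ι ℝ) (x y : ι → ℝ) :
    A *ᵥ x ⬝ᵥ B *ᵥ y = (Bᵀ * A) *ᵥ x ⬝ᵥ y := by
  rw [dotProduct_mulVec, ← mulVec_transpose, mulVec_mulVec]

theorem mulVec_dotProduct_of_isHermitian (hA : A.IsHermitian) (x y : ι → ℝ) :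
    A *ᵥ x ⬝ᵥ y = x ⬝ᵥ A *ᵥ y := by
  rw [IsHermitian, conjTranspose_eq_transpose_of_trivial] at hA
  rw [dotProduct_mulVec, ← mulVec_transpose, hA]

theorem isHermitian_of_mulVec_dotProduct (h : ∀ v w, A *ᵥ v ⬝ᵥ w = v ⬝ᵥ A *ᵥ w) :
    A.IsHermitian := by
  classical
  ext i j
  simpa using h (Pi.single i 1) (Pi.single j 1)

variable [DecidableEq ι]

theorem exists_transpose_mul_self_eq_of_posDef (hA : A.PosDef) :
    ∃ L : Matrix ι ι ℝ, L.det ≠ 0 ∧ Lᵀ * L = A := by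
  open scoped MatrixOrder in
  obtain ⟨L, rfl⟩ := CStarAlgebra.nonneg_iff_eq_star_mul_self.mp hA.posSemidef.nonneg
  refine ⟨L, fun det_eq_zero => hA.det_pos.ne' ?_, ?_⟩
  · rw [det_mul, det_eq_zero, mul_zero]
  · rw [star_eq_conjTranspose, conjTranspose_eq_transpose_of_trivial]

theorem posSemidef_inv_sub_inv (hA : A.PosDef) (hB : B.PosDef) (h : (B - A).PosSemidef) :
    (A⁻¹ - B⁻¹).PosSemidef := by
  refine PosSemidef.of_dotProduct_mulVec_nonneg (hA.inv.isHermitian.sub hB.inv.isHermitian)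
    fun v => ?_
  set a := A⁻¹ *ᵥ v with ha
  set b := B⁻¹ *ᵥ v with hb
  have A_mulVec : A *ᵥ a = v := by
    rw [ha, mulVec_mulVec, mul_nonsing_inv _ hA.det_pos.ne'.isUnit, one_mulVec]
  have B_mulVec : B *ᵥ b = v := by
    rw [hb, mulVec_mulVec, mul_nonsing_inv _ hB.det_pos.ne'.isUnit, one_mulVec]
  have cross : A *ᵥ b ⬝ᵥ a = v ⬝ᵥ b := by
    rw [mulVec_dotProduct_of_isHermitian hA.isHermitian, A_mulVec, dotProduct_comm]
  have square_nonneg := mulVec_dotProduct_nonneg_of_posSemidef hA.posSemidef (a - b)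
  have A_le_B := mulVec_dotProduct_le_of_posSemidef_sub h b
  simp only [mulVec_sub, sub_dotProduct, dotProduct_sub, A_mulVec, cross] at square_nonneg
  rw [B_mulVec] at A_le_B
  rw [star_trivial, sub_mulVec, dotProduct_sub]
  linarith

end Forms

theorem dotProduct_eq_inner (v w : ι → ℝ) :
    v ⬝ᵥ w = inner ℝ (WithLp.toLp 2 v) (WithLp.toLp 2 w) := by
  rw [EuclideanSpace.inner_toLp_toLp, star_trivial, dotProduct_comm]

theorem dotProduct_self_eq_norm_toLp_sq (v : ι → ℝ) : v ⬝ᵥ v = ‖WithLp.toLp 2 v‖ ^ 2 := by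
  rw [dotProduct_eq_inner, real_inner_self_eq_norm_sq]

/-- Multiplication by a matrix, as a continuous linear map between the spaces of coordinate
vectors. -/
def mulVecCLM {κ : Type*} (A : Matrix κ ι ℝ) : (ι → ℝ) →L[ℝ] (κ → ℝ) :=
  LinearMap.toContinuousLinearMap A.mulVecLin

theorem mulVecCLM_apply {κ : Type*} (A : Matrix κ ι ℝ) (v : ι → ℝ) : mulVecCLM A v = A *ᵥ v :=
  rfl

section Invertible

variable [DecidableEq ι]

theorem det_mulVecCLM (A : Matrix ι ι ℝ) : (mulVecCLM A).det = A.det :=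
  LinearMap.det_toLin' A

theorem det_toEuclideanCLM (A : Matrix ι ι ℝ) : (toEuclideanCLM (𝕜 := ℝ) A).det = A.det := by
  rw [← LinearMap.det_toLin', ← LinearMap.det_conj _ (WithLp.linearEquiv 2 ℝ (ι → ℝ)).symm]
  rfl

variable {L : Matrix ι ι ℝ}

theorem measurableEmbedding_mulVec (hL : L.det ≠ 0) :
    MeasurableEmbedding fun x : ι → ℝ => L *ᵥ x :=
  (mulVecCLM L).continuous.measurableEmbedding (mulVec_injective_of_det_ne_zero hL)

theorem map_mulVec_volume (hL : L.det ≠ 0) :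
    (volume : Measure (ι → ℝ)).map (fun x => L *ᵥ x) = ENNReal.ofReal |L.det|⁻¹ • volume := by
  rw [← abs_inv]
  exact Real.map_matrix_volume_pi_eq_smul_volume_pi hL

theorem lintegral_comp_mulVec (hL : L.det ≠ 0) (f : (ι → ℝ) → ℝ≥0∞) :
    ∫⁻ x, f (L *ᵥ x) = ENNReal.ofReal |L.det|⁻¹ * ∫⁻ x, f x := by
  rw [← (measurableEmbedding_mulVec hL).lintegral_map, map_mulVec_volume hL,
    lintegral_smul_measure, smul_eq_mul]

theorem quasiMeasurePreserving_mulVec (hL : L.det ≠ 0) :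
    Measure.QuasiMeasurePreserving (fun x : ι → ℝ => L *ᵥ x) := by
  refine ⟨(measurableEmbedding_mulVec hL).measurable, ?_⟩
  rw [map_mulVec_volume hL]
  exact Measure.smul_absolutelyContinuous

theorem quasiMeasurePreserving_toLp_mulVec (hL : L.det ≠ 0) :
    Measure.QuasiMeasurePreserving fun x : ι → ℝ => WithLp.toLp 2 (L *ᵥ x) :=
  (PiLp.volume_preserving_toLp ι).quasiMeasurePreserving.comp (quasiMeasurePreserving_mulVec hL)

theorem quasiMeasurePreserving_mulVec_ofLp (hL : L.det ≠ 0) :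
    Measure.QuasiMeasurePreserving fun z : EuclideanSpace ℝ ι => L *ᵥ z.ofLp :=
  (quasiMeasurePreserving_mulVec hL).comp (PiLp.volume_preserving_ofLp ι).quasiMeasurePreserving

end Invertible

end LinearAlgebra

section QuadraticTransport

variable {k : ℕ}

local notation "𝔼" => EuclideanSpace ℝ (Fin k)

/-- `f · g_M⁻¹` is log-convex, where `g_M = gaussFn M`; stated multiplicatively, to allow the
values `0`, `∞`. -/
def QuadLogConvex (M : Matrix (Fin k) (Fin k) ℝ) (f : (Fin k → ℝ) → ℝ≥0∞) : Prop :=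
  ∀ x y, ∀ t s : ℝ, 0 < t → 0 < s → t + s = 1 →
    f (t • x + s • y) ≤
      f x ^ t * f y ^ s * eexp (Real.pi * (t * s) * (M *ᵥ (x - y) ⬝ᵥ (x - y)))

/-- `f · g_M⁻¹` is log-concave, where `g_M = gaussFn M`; stated multiplicatively, to allow the
values `0`, `∞`. -/
def QuadLogConcave (M : Matrix (Fin k) (Fin k) ℝ) (f : (Fin k → ℝ) → ℝ≥0∞) : Prop :=
  ∀ x y, ∀ t s : ℝ, 0 < t → 0 < s → t + s = 1 →
    f x ^ t * f y ^ s * eexp (Real.pi * (t * s) * (M *ᵥ (x - y) ⬝ᵥ (x - y))) ≤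
      f (t • x + s • y)

/-- The density on Euclidean space whose image under `z ↦ L z` is the density `f`. -/
def euclideanDensity (L : Matrix (Fin k) (Fin k) ℝ) (f : (Fin k → ℝ) → ℝ≥0∞) (z : 𝔼) : ℝ≥0∞ :=
  ENNReal.ofReal |L.det| * f (L *ᵥ z.ofLp)

/-- The map `Lᵀ ∘ T ∘ L`, for a map `T` of Euclidean space and a matrix `L`. If `T` is the gradient
of `φ`, this is the gradient of `φ ∘ L`. -/
def matrixConj (L : Matrix (Fin k) (Fin k) ℝ) (T : 𝔼 → 𝔼) (x : Fin k → ℝ) : Fin k → ℝ :=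
  Lᵀ *ᵥ (T (WithLp.toLp 2 (L *ᵥ x))).ofLp

section EuclideanDensity

variable {L M : Matrix (Fin k) (Fin k) ℝ} {f : (Fin k → ℝ) → ℝ≥0∞}

theorem euclideanDensity_ne_zero (hL : L.det ≠ 0) (hf : ∀ x, f x ≠ 0) (z : 𝔼) :
    euclideanDensity L f z ≠ 0 :=
  mul_ne_zero (ENNReal.ofReal_pos.2 (abs_pos.2 hL)).ne' (hf _)

theorem aemeasurable_euclideanDensity (hL : L.det ≠ 0) (hf : AEMeasurable f) :
    AEMeasurable (euclideanDensity L f) :=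
  (hf.comp_quasiMeasurePreserving (quasiMeasurePreserving_mulVec_ofLp hL)).const_mul _

theorem lintegral_euclideanDensity (hL : L.det ≠ 0) (f : (Fin k → ℝ) → ℝ≥0∞) :
    ∫⁻ z, euclideanDensity L f z = ∫⁻ x, f x := by
  have lintegral_ofLp : ∫⁻ z : 𝔼, f (L *ᵥ z.ofLp) = ∫⁻ x, f (L *ᵥ x) :=
    (PiLp.volume_preserving_ofLp (Fin k)).lintegral_comp_emb
      (MeasurableEquiv.toLp 2 (Fin k → ℝ)).symm.measurableEmbedding fun x => f (L *ᵥ x)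
  simp only [euclideanDensity]
  rw [lintegral_const_mul' _ _ ENNReal.ofReal_ne_top, lintegral_ofLp, lintegral_comp_mulVec hL,
    ← mul_assoc, ← ENNReal.ofReal_mul (abs_nonneg _), mul_inv_cancel₀ (abs_ne_zero.2 hL),
    ENNReal.ofReal_one, one_mul]

theorem isProbabilityMeasure_euclideanDensity (hL : L.det ≠ 0) (hf : ∫⁻ x, f x = 1) :
    IsProbabilityMeasure (volume.withDensity (euclideanDensity L f)) :=
  ⟨by rw [withDensity_apply _ MeasurableSet.univ, setLIntegral_univ,
    lintegral_euclideanDensity hL, hf]⟩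

theorem mulVec_ofLp_combo (L : Matrix (Fin k) (Fin k) ℝ) (t s : ℝ) (x y : 𝔼) :
    L *ᵥ (t • x + s • y).ofLp = t • L *ᵥ x.ofLp + s • L *ᵥ y.ofLp := by
  rw [WithLp.ofLp_add, WithLp.ofLp_smul, WithLp.ofLp_smul, mulVec_add, mulVec_smul, mulVec_smul]

theorem mulVec_sub_dotProduct_sub_eq_norm_sq (hL : Lᵀ * M * L = 1) (x y : 𝔼) :
    M *ᵥ (L *ᵥ x.ofLp - L *ᵥ y.ofLp) ⬝ᵥ (L *ᵥ x.ofLp - L *ᵥ y.ofLp) = ‖x - y‖ ^ 2 := by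
  rw [← mulVec_sub, ← WithLp.ofLp_sub, mulVec_dotProduct_mulVec, mulVec_mulVec, hL, one_mulVec,
    dotProduct_self_eq_norm_toLp_sq, WithLp.toLp_ofLp]

theorem QuadLogConvex.logSemiconvex_euclideanDensity (hf : QuadLogConvex M f)
    (hL : Lᵀ * M * L = 1) : LogSemiconvex (2 * Real.pi) (euclideanDensity L f) := by
  refine LogSemiconvex.const_mul (fun x y t s ht hs hts => ?_) _
  simpa only [mulVec_ofLp_combo, mulVec_sub_dotProduct_sub_eq_norm_sq hL,
    mul_div_cancel_left₀ Real.pi two_ne_zero] using hf (L *ᵥ x.ofLp) (L *ᵥ y.ofLp) t s ht hs hts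

theorem QuadLogConcave.logSemiconcave_euclideanDensity (hf : QuadLogConcave M f)
    (hL : Lᵀ * M * L = 1) : LogSemiconcave (2 * Real.pi) (euclideanDensity L f) := by
  refine LogSemiconcave.const_mul (fun x y t s ht hs hts => ?_) _
  simpa only [mulVec_ofLp_combo, mulVec_sub_dotProduct_sub_eq_norm_sq hL,
    mul_div_cancel_left₀ Real.pi two_ne_zero] using hf (L *ᵥ x.ofLp) (L *ᵥ y.ofLp) t s ht hs hts

end EuclideanDensity

section MatrixConj

variable {L A : Matrix (Fin k) (Fin k) ℝ} {a : ℝ} {φ : EuclideanSpace ℝ (Fin k) → ℝ}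
  {T : EuclideanSpace ℝ (Fin k) → EuclideanSpace ℝ (Fin k)}

theorem continuous_matrixConj (L : Matrix (Fin k) (Fin k) ℝ) (hT : Continuous T) :
    Continuous (matrixConj L T) := by
  unfold matrixConj
  fun_prop

theorem matrixConj_sub_dotProduct (L : Matrix (Fin k) (Fin k) ℝ) (T : 𝔼 → 𝔼) (x y : Fin k → ℝ) :
    (matrixConj L T x - matrixConj L T y) ⬝ᵥ (x - y) =
      inner ℝ (T (WithLp.toLp 2 (L *ᵥ x)) - T (WithLp.toLp 2 (L *ᵥ y)))
        (WithLp.toLp 2 (L *ᵥ x) - WithLp.toLp 2 (L *ᵥ y)) := by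
  rw [matrixConj, matrixConj, ← mulVec_sub, mulVec_transpose, ← dotProduct_mulVec, mulVec_sub,
    dotProduct_eq_inner]
  rfl

theorem hasFDerivAt_matrixConj {x : Fin k → ℝ}
    (hT : HasFDerivAt T (toEuclideanCLM (𝕜 := ℝ) A) (WithLp.toLp 2 (L *ᵥ x))) :
    HasFDerivAt (matrixConj L T) (mulVecCLM (Lᵀ * A * L)) x := by
  set toLp := (PiLp.continuousLinearEquiv 2 ℝ (fun _ : Fin k => ℝ)).symm
  have inner_map := toLp.hasFDerivAt.comp x (mulVecCLM L).hasFDerivAt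
  have outer_map := (mulVecCLM Lᵀ).hasFDerivAt.comp x
    (toLp.symm.hasFDerivAt.comp x (hT.comp x inner_map))
  refine outer_map.congr_fderiv (ContinuousLinearMap.ext fun v => ?_)
  rw [mulVecCLM_apply, ← mulVec_mulVec, ← mulVec_mulVec]
  rfl

theorem measure_compl_image_matrixConj_eq_zero (hL : L.det ≠ 0) {D : Set 𝔼}
    (hD : volume (T '' D)ᶜ = 0) :
    volume (matrixConj L T '' ((fun x => WithLp.toLp 2 (L *ᵥ x)) ⁻¹' D))ᶜ = 0 := by
  have det_ne_zero : (Lᵀ)⁻¹.det ≠ 0 :=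
    (isUnit_nonsing_inv_det _ (by rwa [det_transpose, isUnit_iff_ne_zero])).ne_zero
  refine measure_mono_null ?_ ((quasiMeasurePreserving_toLp_mulVec det_ne_zero).preimage_null hD)
  rw [Set.preimage_compl, Set.compl_subset_compl]
  rintro y ⟨z, hz, hzy⟩
  have toLp_mulVec : WithLp.toLp 2 (L *ᵥ (L⁻¹ *ᵥ z.ofLp)) = z := by
    rw [mulVec_mulVec, mul_nonsing_inv _ hL.isUnit, one_mulVec, WithLp.toLp_ofLp]
  refine ⟨L⁻¹ *ᵥ z.ofLp, by rwa [Set.mem_preimage, toLp_mulVec], ?_⟩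
  rw [matrixConj, toLp_mulVec, hzy, mulVec_mulVec,
    mul_nonsing_inv _ (by rwa [det_transpose, isUnit_iff_ne_zero]), one_mulVec]

theorem eq_ofReal_det_mul_of_euclideanDensity_eq (hL : L.det ≠ 0) (hA : 0 < A.det)
    {f g : (Fin k → ℝ) → ℝ≥0∞} {x : Fin k → ℝ}
    (h : euclideanDensity L⁻¹ f (WithLp.toLp 2 (L *ᵥ x)) =
      ENNReal.ofReal |A.det| * euclideanDensity Lᵀ g (T (WithLp.toLp 2 (L *ᵥ x)))) :
    f x = ENNReal.ofReal (Lᵀ * A * L).det * g (matrixConj L T x) := by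
  have inv_mulVec : L⁻¹ *ᵥ (L *ᵥ x) = x := by
    rw [mulVec_mulVec, nonsing_inv_mul _ hL.isUnit, one_mulVec]
  have ofReal_cancel : ENNReal.ofReal |L.det| * ENNReal.ofReal |L.det|⁻¹ = 1 := by
    rw [← ENNReal.ofReal_mul (abs_nonneg _), mul_inv_cancel₀ (abs_ne_zero.2 hL),
      ENNReal.ofReal_one]
  have det_eq : (Lᵀ * A * L).det = |L.det| * (A.det * |L.det|) := by
    rw [det_mul, det_mul, det_transpose, mul_right_comm, ← abs_mul_abs_self, mul_right_comm,
      mul_assoc]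
  rw [euclideanDensity, euclideanDensity, det_nonsing_inv, Ring.inverse_eq_inv', det_transpose,
    abs_inv, inv_mulVec, abs_of_pos hA] at h
  calc f x = ENNReal.ofReal |L.det| * (ENNReal.ofReal |L.det|⁻¹ * f x) := by
        rw [← mul_assoc, ofReal_cancel, one_mul]
    _ = ENNReal.ofReal |L.det| * (ENNReal.ofReal A.det *
          (ENNReal.ofReal |L.det| * g (matrixConj L T x))) := by rw [h, matrixConj]
    _ = ENNReal.ofReal (Lᵀ * A * L).det * g (matrixConj L T x) := by
        rw [det_eq, ENNReal.ofReal_mul (abs_nonneg _), ENNReal.ofReal_mul hA.le, mul_assoc,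
          mul_assoc]

namespace IsSmoothConvexGrad

section Derivative

variable {x : EuclideanSpace ℝ (Fin k)}

theorem isHermitian_of_hasFDerivAt (h : IsSmoothConvexGrad a φ T)
    (hA : HasFDerivAt T (toEuclideanCLM (𝕜 := ℝ) A) x) : A.IsHermitian :=
  isHermitian_of_mulVec_dotProduct fun v w => by
    simpa only [toEuclideanCLM_toLp, ← dotProduct_eq_inner] using
      h.fderiv_symmetric hA (WithLp.toLp 2 v) (WithLp.toLp 2 w)

theorem posDef_of_hasFDerivAt (h : IsSmoothConvexGrad a φ T) (ha : 0 < a)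
    (hA : HasFDerivAt T (toEuclideanCLM (𝕜 := ℝ) A) x) (hdet : A.det ≠ 0) : A.PosDef := by
  refine PosDef.of_dotProduct_mulVec_pos (h.isHermitian_of_hasFDerivAt hA) fun v hv => ?_
  rw [star_trivial, dotProduct_comm, dotProduct_eq_inner, ← toEuclideanCLM_toLp]
  exact h.inner_fderiv_pos ha hA (by rwa [det_toEuclideanCLM])
    ((WithLp.toLp_eq_zero 2).not.2 hv)

theorem posSemidef_smul_one_sub_of_hasFDerivAt (h : IsSmoothConvexGrad a φ T) (ha : 0 < a)
    (hA : HasFDerivAt T (toEuclideanCLM (𝕜 := ℝ) A) x) :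
    (a • (1 : Matrix (Fin k) (Fin k) ℝ) - A).PosSemidef := by
  refine PosSemidef.of_dotProduct_mulVec_nonneg
    ((isHermitian_one.smul (IsSelfAdjoint.all a)).sub (h.isHermitian_of_hasFDerivAt hA))
    fun v => ?_
  rw [star_trivial, sub_mulVec, smul_mulVec, one_mulVec, dotProduct_sub, dotProduct_smul,
    dotProduct_comm v (A *ᵥ v), dotProduct_self_eq_norm_toLp_sq, dotProduct_eq_inner,
    ← toEuclideanCLM_toLp, sub_nonneg]
  exact h.inner_fderiv_le ha hA _

end Derivative

theorem matrixConj_monotone (h : IsSmoothConvexGrad a φ T) (ha : 0 < a)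
    (L : Matrix (Fin k) (Fin k) ℝ) (x y : Fin k → ℝ) :
    0 ≤ (matrixConj L T x - matrixConj L T y) ⬝ᵥ (x - y) := by
  rw [matrixConj_sub_dotProduct]
  exact nonneg_of_mul_nonneg_right ((sq_nonneg _).trans (h.norm_sub_sq_le ha _ _)) ha

theorem matrixConj_strictMono (h : IsSmoothConvexGrad a φ T) (ha : 0 < a) (hL : L.det ≠ 0)
    {x y : Fin k → ℝ} (hx : WithLp.toLp 2 (L *ᵥ x) ∈ regularPoints T) (hxy : x ≠ y) :
    0 < (matrixConj L T x - matrixConj L T y) ⬝ᵥ (x - y) := by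
  rw [matrixConj_sub_dotProduct]
  refine pos_of_mul_pos_right (lt_of_lt_of_le ?_ (h.norm_sub_sq_le ha _ _)) ha.le
  refine pow_pos (norm_pos_iff.2 (sub_ne_zero.2 fun apply_eq => hxy ?_)) 2
  have toLp_eq := h.eq_of_apply_eq ha hx.1.hasFDerivAt hx.2 apply_eq
  exact mulVec_injective_of_det_ne_zero hL (WithLp.toLp_injective 2 toLp_eq)

end IsSmoothConvexGrad

end MatrixConj

/-- `T` is a continuous monotone map transporting the density `f` to the density `g`, with symmetric
Jacobian matrix `0 < T' ≤ M` on the set `D` of full measure, where the Monge–Ampère equation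
`f = det T' · (g ∘ T)` holds. -/
structure QuadTransport (M : Matrix (Fin k) (Fin k) ℝ) (f g : (Fin k → ℝ) → ℝ≥0∞)
    (T : (Fin k → ℝ) → Fin k → ℝ) (T' : (Fin k → ℝ) → Matrix (Fin k) (Fin k) ℝ)
    (D : Set (Fin k → ℝ)) : Prop where
  continuous : Continuous T
  monotone : ∀ x y, 0 ≤ (T x - T y) ⬝ᵥ (x - y)
  measurableSet : MeasurableSet D
  measure_compl : volume Dᶜ = 0
  hasFDerivAt : ∀ x ∈ D, HasFDerivAt T (mulVecCLM (T' x)) x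
  posDef : ∀ x ∈ D, (T' x).PosDef
  posSemidef_sub : ∀ x ∈ D, (M - T' x).PosSemidef
  monge_ampere : ∀ x ∈ D, f x = ENNReal.ofReal (T' x).det * g (T x)
  strictMono : ∀ x ∈ D, ∀ y, x ≠ y → 0 < (T x - T y) ⬝ᵥ (x - y)
  measure_compl_image : (∀ x, g x ≠ 0) → volume (T '' D)ᶜ = 0

theorem IsSmoothConvexGrad.exists_quadTransport_matrixConj {L : Matrix (Fin k) (Fin k) ℝ}
    (hL : L.det ≠ 0) {f g : (Fin k → ℝ) → ℝ≥0∞} (hf0 : ∀ x, f x ≠ 0)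
    (hF : AEMeasurable (euclideanDensity L⁻¹ f)) (hG : AEMeasurable (euclideanDensity Lᵀ g))
    {φ : 𝔼 → ℝ} {T : 𝔼 → 𝔼} (hT : IsSmoothConvexGrad 1 φ T)
    (hmap : (volume.withDensity (euclideanDensity L⁻¹ f)).map T =
      volume.withDensity (euclideanDensity Lᵀ g)) :
    ∃ T' D, QuadTransport (Lᵀ * L) f g (matrixConj L T) T' D := by
  obtain ⟨D, hDT, hD, hD0, hDeq, hTD⟩ := exists_monge_ampere hF
    (euclideanDensity_ne_zero (isUnit_nonsing_inv_det _ hL.isUnit).ne_zero hf0) hG hT one_pos hmap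
  set Λ : (Fin k → ℝ) → 𝔼 := fun x => WithLp.toLp 2 (L *ᵥ x)
  have hΛ := quasiMeasurePreserving_toLp_mulVec hL
  obtain ⟨A, hA⟩ : ∃ A : 𝔼 → Matrix (Fin k) (Fin k) ℝ,
      ∀ z, toEuclideanCLM (𝕜 := ℝ) (A z) = fderiv ℝ T z :=
    ⟨_, fun z => (toEuclideanCLM (𝕜 := ℝ)).apply_symm_apply (fderiv ℝ T z)⟩
  have hTA : ∀ z ∈ D, HasFDerivAt T (toEuclideanCLM (𝕜 := ℝ) (A z)) z := fun z hz => by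
    rw [hA]
    exact (hDT hz).1.hasFDerivAt
  have hA_det : ∀ z, (fderiv ℝ T z).det = (A z).det := fun z => by
    rw [← hA, det_toEuclideanCLM]
  have hA_posDef : ∀ z ∈ D, (A z).PosDef := fun z hz =>
    hT.posDef_of_hasFDerivAt one_pos (hTA z hz) (hA_det z ▸ (hDT hz).2)
  refine ⟨fun x => Lᵀ * A (Λ x) * L, Λ ⁻¹' D,
    { continuous := continuous_matrixConj L (hT.lipschitzWith one_pos).continuous
      monotone := hT.matrixConj_monotone one_pos L
      measurableSet := hΛ.measurable hD
      measure_compl := hΛ.preimage_null hD0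
      hasFDerivAt := fun x hx => hasFDerivAt_matrixConj (hTA _ hx)
      posDef := fun x hx => ?_
      posSemidef_sub := fun x hx => ?_
      monge_ampere := fun x hx => eq_ofReal_det_mul_of_euclideanDensity_eq hL
        (hA_posDef _ hx).det_pos (by rw [← hA_det]; exact hDeq _ hx)
      strictMono := fun x hx y => hT.matrixConj_strictMono one_pos hL (hDT hx)
      measure_compl_image := fun hg0 => measure_compl_image_matrixConj_eq_zero hL
        (hTD (euclideanDensity_ne_zero (by rwa [det_transpose]) hg0)) }⟩
  · simpa only [conjTranspose_eq_transpose_of_trivial] using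
      (hA_posDef _ hx).conjTranspose_mul_mul_same (mulVec_injective_of_det_ne_zero hL)
  · simpa only [conjTranspose_eq_transpose_of_trivial, one_smul, Matrix.mul_sub, Matrix.sub_mul,
      Matrix.mul_one] using
      (hT.posSemidef_smul_one_sub_of_hasFDerivAt one_pos (hTA _ hx)).conjTranspose_mul_mul_same L

theorem exists_quadTransport {M : Matrix (Fin k) (Fin k) ℝ} (hM : M.PosDef)
    {f g : (Fin k → ℝ) → ℝ≥0∞} (hf : AEMeasurable f) (hf0 : ∀ x, f x ≠ 0)
    (hf1 : ∫⁻ x, f x = 1) (hfM : QuadLogConvex M f) (hg : AEMeasurable g)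
    (hg1 : ∫⁻ x, g x = 1) (hgM : QuadLogConcave M⁻¹ g) :
    ∃ T T' D, QuadTransport M f g T T' D := by
  -- the linear changes of variables `L` and `Lᵀ⁻¹` reduce to the case `M = 1`
  obtain ⟨L, hL, rfl⟩ := exists_transpose_mul_self_eq_of_posDef hM
  have mul_inv : L * L⁻¹ = 1 := mul_nonsing_inv _ hL.isUnit
  have transpose_mul_inv : (L⁻¹)ᵀ * Lᵀ = 1 := by rw [← transpose_mul, mul_inv, transpose_one]
  have hLi : L⁻¹.det ≠ 0 := (isUnit_nonsing_inv_det _ hL.isUnit).ne_zero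
  have hLt : Lᵀ.det ≠ 0 := by rwa [det_transpose]
  have hF := aemeasurable_euclideanDensity hLi hf
  have hG := aemeasurable_euclideanDensity hLt hg
  have := isProbabilityMeasure_euclideanDensity hLi hf1
  have := isProbabilityMeasure_euclideanDensity hLt hg1
  obtain ⟨φ, T, hT, hmap⟩ := exists_contracting_transport hF hG Real.two_pi_pos
    (hfM.logSemiconvex_euclideanDensity (by
      rw [← Matrix.mul_assoc, transpose_mul_inv, Matrix.one_mul, mul_inv]))
    (hgM.logSemiconcave_euclideanDensity (by
      rw [transpose_transpose, Matrix.mul_inv_rev, ← Matrix.mul_assoc, mul_inv, Matrix.one_mul,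
        nonsing_inv_mul _ hLt.isUnit]))
  exact ⟨matrixConj L T, hT.exists_quadTransport_matrixConj hL hf0 hF hG hmap⟩

end QuadraticTransport

section Gaussian

theorem lintegral_ofReal_exp_neg_pi_mul_dotProduct_self (ι : Type*) [Fintype ι] :
    ∫⁻ x : ι → ℝ, ENNReal.ofReal (Real.exp (-Real.pi * (x ⬝ᵥ x))) = 1 := by
  have integral_eq_one : ∫ z : EuclideanSpace ℝ ι, Real.exp (-Real.pi * ‖z‖ ^ 2) = 1 := by
    rw [GaussianFourier.integral_rexp_neg_mul_sq_norm Real.pi_pos, div_self Real.pi_pos.ne',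
      Real.one_rpow]
  have integrable : Integrable fun z : EuclideanSpace ℝ ι => Real.exp (-Real.pi * ‖z‖ ^ 2) :=
    Integrable.of_integral_ne_zero (integral_eq_one ▸ one_ne_zero)
  calc ∫⁻ x : ι → ℝ, ENNReal.ofReal (Real.exp (-Real.pi * (x ⬝ᵥ x)))
      = ∫⁻ z : EuclideanSpace ℝ ι, ENNReal.ofReal (Real.exp (-Real.pi * ‖z‖ ^ 2)) := by
        rw [← (PiLp.volume_preserving_toLp ι).lintegral_comp (by fun_prop)]
        simp_rw [dotProduct_self_eq_norm_toLp_sq]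
    _ = 1 := by
        rw [← ofReal_integral_eq_lintegral_ofReal integrable
          (Filter.Eventually.of_forall fun _ => (Real.exp_pos _).le), integral_eq_one,
          ENNReal.ofReal_one]

variable {k : ℕ} {B : Matrix (Fin k) (Fin k) ℝ}

theorem gaussFn_pos (B : Matrix (Fin k) (Fin k) ℝ) (x : Fin k → ℝ) : 0 < gaussFn B x :=
  Real.exp_pos _

theorem measurable_gaussFn (B : Matrix (Fin k) (Fin k) ℝ) : Measurable (gaussFn B) := by
  unfold gaussFn
  simp only [dotProduct, mulVec]
  fun_prop

theorem gaussFn_combo (B : Matrix (Fin k) (Fin k) ℝ) (x y : Fin k → ℝ) {t s : ℝ}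
    (hts : t + s = 1) : gaussFn B (t • x + s • y) = gaussFn B x ^ t * gaussFn B y ^ s *
      Real.exp (Real.pi * (t * s) * (B *ᵥ (x - y) ⬝ᵥ (x - y))) := by
  rw [gaussFn, gaussFn, gaussFn, mulVec_combo_dotProduct_combo B x y hts, ← Real.exp_mul,
    ← Real.exp_mul, ← Real.exp_add, ← Real.exp_add]
  congr 1
  ring

theorem lintegral_ofReal_gaussFn (hB : B.PosDef) :
    ∫⁻ x, ENNReal.ofReal (gaussFn B x) = ENNReal.ofReal (√B.det)⁻¹ := by
  obtain ⟨L, hL, rfl⟩ := exists_transpose_mul_self_eq_of_posDef hB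
  rw [det_mul, det_transpose, ← sq, Real.sqrt_sq_eq_abs]
  simp_rw [gaussFn, ← mulVec_dotProduct_mulVec]
  rw [lintegral_comp_mulVec hL fun y => ENNReal.ofReal (Real.exp (-Real.pi * (y ⬝ᵥ y))),
    lintegral_ofReal_exp_neg_pi_mul_dotProduct_self, mul_one]

/-- The centered Gaussian probability density proportional to `gaussFn B`, for `B` positive
definite. -/
def gaussDensity (B : Matrix (Fin k) (Fin k) ℝ) (x : Fin k → ℝ) : ℝ :=
  gaussFn B x * √B.det

theorem gaussDensity_pos (hB : B.PosDef) (x : Fin k → ℝ) : 0 < gaussDensity B x :=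
  mul_pos (gaussFn_pos B x) (Real.sqrt_pos.2 hB.det_pos)

theorem measurable_gaussDensity (B : Matrix (Fin k) (Fin k) ℝ) : Measurable (gaussDensity B) :=
  (measurable_gaussFn B).mul_const _

theorem lintegral_ofReal_gaussDensity (hB : B.PosDef) :
    ∫⁻ x, ENNReal.ofReal (gaussDensity B x) = 1 := by
  have sqrt_det_pos : 0 < √B.det := Real.sqrt_pos.2 hB.det_pos
  simp only [gaussDensity, ENNReal.ofReal_mul (gaussFn_pos B _).le]
  rw [lintegral_mul_const _ (measurable_gaussFn B).ennreal_ofReal, lintegral_ofReal_gaussFn hB,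
    ← ENNReal.ofReal_mul (by positivity), inv_mul_cancel₀ sqrt_det_pos.ne', ENNReal.ofReal_one]

end Gaussian

section MoreLogConvexConcave

variable {k : ℕ} {A B M : Matrix (Fin k) (Fin k) ℝ} {f h : (Fin k → ℝ) → ℝ} {c : ℝ}

theorem const_mul_rpow_mul_const_mul_rpow_real (hc : 0 < c) {u v : ℝ} (hu : 0 ≤ u) (hv : 0 ≤ v)
    {a b : ℝ} (hab : a + b = 1) : (c * u) ^ a * (c * v) ^ b = c * (u ^ a * v ^ b) := by
  rw [Real.mul_rpow hc.le hu, Real.mul_rpow hc.le hv, mul_mul_mul_comm, ← Real.rpow_add hc, hab,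
    Real.rpow_one]

theorem LogConvexFun.const_mul (hh : LogConvexFun h) (hc : 0 < c) :
    LogConvexFun fun x => c * h x := by
  refine ⟨fun x => mul_nonneg hc.le (hh.1 x), fun x y a b ha hb hab => ?_⟩
  rw [const_mul_rpow_mul_const_mul_rpow_real hc (hh.1 x) (hh.1 y) hab]
  exact mul_le_mul_of_nonneg_left (hh.2 x y a b ha hb hab) hc.le

theorem LogConcaveFun.const_mul (hh : LogConcaveFun h) (hc : 0 < c) :
    LogConcaveFun fun x => c * h x := by
  refine ⟨fun x => mul_nonneg hc.le (hh.1 x), fun x y a b ha hb hab => ?_⟩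
  rw [const_mul_rpow_mul_const_mul_rpow_real hc (hh.1 x) (hh.1 y) hab]
  exact mul_le_mul_of_nonneg_left (hh.2 x y a b ha hb hab) hc.le

theorem logConvexFun_const (hc : 0 < c) : LogConvexFun fun _ : Fin k → ℝ => c :=
  ⟨fun _ => hc.le, fun _ _ a b _ _ hab => by rw [← Real.rpow_add hc, hab, Real.rpow_one]⟩

theorem logConcaveFun_const (hc : 0 < c) : LogConcaveFun fun _ : Fin k → ℝ => c :=
  ⟨fun _ => hc.le, fun _ _ a b _ _ hab => by rw [← Real.rpow_add hc, hab, Real.rpow_one]⟩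

theorem LogConvexFun.pos_of_ne_zero (hh : LogConvexFun h) {z : Fin k → ℝ} (hz : h z ≠ 0)
    (x : Fin k → ℝ) : 0 < h x := by
  refine (hh.1 x).lt_of_ne' fun h_eq_zero => hz (le_antisymm ?_ (hh.1 z))
  -- `z` is the midpoint of `x` and its reflection in `z`
  have midpoint : (1 / 2 : ℝ) • x + (1 / 2 : ℝ) • ((2 : ℝ) • z - x) = z := by module
  have le := hh.2 x ((2 : ℝ) • z - x) (1 / 2) (1 / 2) (by norm_num) (by norm_num) (by norm_num)
  rwa [midpoint, h_eq_zero, Real.zero_rpow (by norm_num), zero_mul] at le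

theorem MoreLogConvex.nonneg (hf : MoreLogConvex f A) (x : Fin k → ℝ) : 0 ≤ f x := by
  obtain ⟨h, hh, rfl⟩ := hf
  exact mul_nonneg (gaussFn_pos A x).le (hh.1 x)

theorem MoreLogConcave.nonneg (hf : MoreLogConcave f A) (x : Fin k → ℝ) : 0 ≤ f x := by
  obtain ⟨h, hh, rfl⟩ := hf
  exact mul_nonneg (gaussFn_pos A x).le (hh.1 x)

theorem MoreLogConvex.pos_of_ne_zero (hf : MoreLogConvex f A) {z : Fin k → ℝ} (hz : f z ≠ 0)
    (x : Fin k → ℝ) : 0 < f x := by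
  obtain ⟨h, hh, rfl⟩ := hf
  exact mul_pos (gaussFn_pos A x) (hh.pos_of_ne_zero (right_ne_zero_of_mul hz) x)

theorem MoreLogConvex.const_mul (hf : MoreLogConvex f A) (hc : 0 < c) :
    MoreLogConvex (fun x => c * f x) A := by
  obtain ⟨h, hh, rfl⟩ := hf
  exact ⟨_, hh.const_mul hc, funext fun x => mul_left_comm c (gaussFn A x) (h x)⟩

theorem MoreLogConcave.const_mul (hf : MoreLogConcave f A) (hc : 0 < c) :
    MoreLogConcave (fun x => c * f x) A := by
  obtain ⟨h, hh, rfl⟩ := hf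
  exact ⟨_, hh.const_mul hc, funext fun x => mul_left_comm c (gaussFn A x) (h x)⟩

theorem moreLogConvex_gaussDensity (hB : B.PosDef) : MoreLogConvex (gaussDensity B) B :=
  ⟨_, logConvexFun_const (Real.sqrt_pos.2 hB.det_pos), rfl⟩

theorem moreLogConcave_gaussDensity (hB : B.PosDef) : MoreLogConcave (gaussDensity B) B :=
  ⟨_, logConcaveFun_const (Real.sqrt_pos.2 hB.det_pos), rfl⟩

theorem ofReal_gaussFn_mul_rpow_mul_eexp (A : Matrix (Fin k) (Fin k) ℝ) (hh : ∀ x, 0 ≤ h x)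
    (x y : Fin k → ℝ) {t s : ℝ} (ht : 0 ≤ t) (hs : 0 ≤ s) (r : ℝ) :
    ENNReal.ofReal (gaussFn A x * h x) ^ t * ENNReal.ofReal (gaussFn A y * h y) ^ s * eexp r =
      ENNReal.ofReal (gaussFn A x ^ t * gaussFn A y ^ s * Real.exp r * (h x ^ t * h y ^ s)) := by
  have gx_nonneg := (gaussFn_pos A x).le
  have gy_nonneg := (gaussFn_pos A y).le
  have hx_nonneg := hh x
  have hy_nonneg := hh y
  rw [ENNReal.ofReal_rpow_of_nonneg (by positivity) ht,
    ENNReal.ofReal_rpow_of_nonneg (by positivity) hs, eexp,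
    ← ENNReal.ofReal_mul (by positivity), ← ENNReal.ofReal_mul (by positivity),
    Real.mul_rpow gx_nonneg hx_nonneg, Real.mul_rpow gy_nonneg hy_nonneg]
  congr 1
  ring

theorem MoreLogConvex.quadLogConvex (hf : MoreLogConvex f A) (hAM : (M - A).PosSemidef) :
    QuadLogConvex M fun x => ENNReal.ofReal (f x) := by
  obtain ⟨h, hh, rfl⟩ := hf
  intro x y t s ht hs hts
  beta_reduce
  rw [ofReal_gaussFn_mul_rpow_mul_eexp A hh.1 x y ht.le hs.le, gaussFn_combo A x y hts]
  have gx_nonneg := (gaussFn_pos A x).le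
  have gy_nonneg := (gaussFn_pos A y).le
  have h_nonneg := hh.1 (t • x + s • y)
  gcongr
  · exact mulVec_dotProduct_le_of_posSemidef_sub hAM _
  · exact hh.2 x y t s ht.le hs.le hts

theorem MoreLogConcave.quadLogConcave (hf : MoreLogConcave f A) (hAM : (A - M).PosSemidef) :
    QuadLogConcave M fun x => ENNReal.ofReal (f x) := by
  obtain ⟨h, hh, rfl⟩ := hf
  intro x y t s ht hs hts
  beta_reduce
  rw [ofReal_gaussFn_mul_rpow_mul_eexp A hh.1 x y ht.le hs.le, gaussFn_combo A x y hts]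
  have gx_nonneg := (gaussFn_pos A x).le
  have gy_nonneg := (gaussFn_pos A y).le
  have hx_nonneg := hh.1 x
  have hy_nonneg := hh.1 y
  gcongr
  · exact mulVec_dotProduct_le_of_posSemidef_sub hAM _
  · exact hh.2 x y t s ht.le hs.le hts

end MoreLogConvexConcave

section MonotoneInverse

open Filter Topology

variable {ι : Type*} [Fintype ι] {S : (ι → ℝ) → ι → ℝ} {x : ι → ℝ}

theorem dotProduct_le_sum_abs_mul_norm (a b : ι → ℝ) : a ⬝ᵥ b ≤ (∑ i, |a i|) * ‖b‖ := by
  rw [dotProduct, Finset.sum_mul]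
  refine Finset.sum_le_sum fun i _ => (le_abs_self _).trans ?_
  rw [abs_mul]
  exact mul_le_mul_of_nonneg_left (norm_le_pi_norm b i) (abs_nonneg _)

theorem sub_dotProduct_sub_le_of_monotone (hS : ∀ x y, 0 ≤ (S x - S y) ⬝ᵥ (x - y))
    (x v : ι → ℝ) {r : ℝ} (hr : 1 ≤ r) :
    (S x - S (x + v)) ⬝ᵥ (x - (x + v)) ≤ (S (x + r • v) - S x) ⬝ᵥ v := by
  have nonneg : 0 ≤ (S (x + r • v) - S (x + v)) ⬝ᵥ v := by
    rcases hr.eq_or_lt with rfl | one_lt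
    · rw [one_smul, sub_self, zero_dotProduct]
    · have mono := hS (x + r • v) (x + v)
      rw [show x + r • v - (x + v) = (r - 1) • v by module, dotProduct_smul, smul_eq_mul] at mono
      exact nonneg_of_mul_nonneg_right mono (sub_pos.2 one_lt)
  simp only [sub_dotProduct, dotProduct_sub, dotProduct_add] at nonneg ⊢
  linarith

theorem tendsto_of_tendsto_monotone (hS : Continuous S)
    (hmono : ∀ x y, 0 ≤ (S x - S y) ⬝ᵥ (x - y))
    (hx : ∀ y, x ≠ y → 0 < (S x - S y) ⬝ᵥ (x - y)) {α : Type*} {l : Filter α} {R : α → ι → ℝ}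
    (hR : Tendsto (fun a => S (R a)) l (𝓝 (S x))) : Tendsto R l (𝓝 x) := by
  rw [Metric.tendsto_nhds]
  intro ε hε
  obtain ⟨c, hc, le_of_mem_sphere⟩ := (isCompact_sphere x ε).exists_forall_le'
    (f := fun z => (S x - S z) ⬝ᵥ (x - z)) (a := 0)
    (by simp only [dotProduct]; fun_prop)
    fun z hz => hx z (Metric.ne_of_mem_sphere hz hε.ne').symm
  have lim : Tendsto (fun a => (∑ j, |(S (R a) - S x) j|) * ε) l (𝓝 0) := by
    have coord : ∀ j, Tendsto (fun a => |(S (R a) - S x) j|) l (𝓝 0) := fun j => by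
      simpa only [sub_self, Pi.zero_apply, abs_zero] using
        ((tendsto_pi_nhds.1 (hR.sub_const (S x))) j).abs
    simpa only [Finset.sum_const_zero, zero_mul] using
      (tendsto_finsetSum Finset.univ fun j _ => coord j).mul_const ε
  filter_upwards [lim.eventually_lt_const hc] with a small
  by_contra! far
  -- push `R a` back along the ray from `x` to the point `x + v` of the sphere of radius `ε`
  have dist_pos : 0 < dist (R a) x := hε.trans_le far
  set v := (ε / dist (R a) x) • (R a - x) with hv
  have norm_v : ‖v‖ = ε := by
    rw [hv, norm_smul, ← dist_eq_norm, Real.norm_of_nonneg (by positivity),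
      div_mul_cancel₀ _ dist_pos.ne']
  have R_eq : x + (dist (R a) x / ε) • v = R a := by
    rw [hv, smul_smul, div_mul_div_cancel₀ hε.ne', div_self dist_pos.ne', one_smul,
      add_sub_cancel]
  have c_le : c ≤ (S (R a) - S x) ⬝ᵥ v :=
    calc c ≤ (S x - S (x + v)) ⬝ᵥ (x - (x + v)) :=
          le_of_mem_sphere _ (by rw [mem_sphere_iff_norm, add_sub_cancel_left, norm_v])
      _ ≤ _ := sub_dotProduct_sub_le_of_monotone hmono x v ((one_le_div hε).2 far)
      _ = _ := by rw [R_eq]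
  exact (c_le.trans (dotProduct_le_sum_abs_mul_norm _ _)).not_gt (norm_v ▸ small)

end MonotoneInverse

section MonotoneTransport

open Filter Topology

variable {k : ℕ} {f g : (Fin k → ℝ) → ℝ≥0∞} {T : (Fin k → ℝ) → Fin k → ℝ}
  {T' : (Fin k → ℝ) → Matrix (Fin k) (Fin k) ℝ} {M : Matrix (Fin k) (Fin k) ℝ}
  {s D : Set (Fin k → ℝ)}

/-- `T` is strictly monotone on a conull set `s`, with positive definite derivative `T'` along `s`,
and transports the density `f` to the density `g` in the sense of the Monge–Ampère equation
`f = det T' · (g ∘ T)`. -/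
structure MonotoneTransport (f g : (Fin k → ℝ) → ℝ≥0∞) (T : (Fin k → ℝ) → Fin k → ℝ)
    (T' : (Fin k → ℝ) → Matrix (Fin k) (Fin k) ℝ) (s : Set (Fin k → ℝ)) : Prop where
  measurableSet : MeasurableSet s
  measure_compl : volume sᶜ = 0
  hasFDerivWithinAt : ∀ x ∈ s, HasFDerivWithinAt T (mulVecCLM (T' x)) s x
  posDef : ∀ x ∈ s, (T' x).PosDef
  monge_ampere : ∀ x ∈ s, f x = ENNReal.ofReal (T' x).det * g (T x)
  strictMono : ∀ x ∈ s, ∀ y ∈ s, x ≠ y → 0 < (T x - T y) ⬝ᵥ (x - y)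

theorem MonotoneTransport.const_mul (hT : MonotoneTransport f g T T' s) (c : ℝ≥0∞) :
    MonotoneTransport (fun x => c * f x) (fun x => c * g x) T T' s :=
  { hT with
    monge_ampere := fun x hx => by rw [hT.monge_ampere x hx, mul_left_comm] }

theorem MonotoneTransport.dotProduct_sub_nonneg (hT : MonotoneTransport f g T T' s)
    {x y : Fin k → ℝ} (hx : x ∈ s) (hy : y ∈ s) : 0 ≤ (T x - T y) ⬝ᵥ (x - y) := by
  rcases eq_or_ne x y with rfl | hxy
  · rw [sub_self, zero_dotProduct]
  · exact (hT.strictMono x hx y hy hxy).le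

namespace QuadTransport

theorem monotoneTransport (hT : QuadTransport M f g T T' D) : MonotoneTransport f g T T' D where
  measurableSet := hT.measurableSet
  measure_compl := hT.measure_compl
  hasFDerivWithinAt x hx := (hT.hasFDerivAt x hx).hasFDerivWithinAt
  posDef := hT.posDef
  monge_ampere := hT.monge_ampere
  strictMono x hx y _ hxy := hT.strictMono x hx y hxy

theorem injOn (hT : QuadTransport M f g T T' D) : Set.InjOn T D := fun x hx y _ hxy => by
  by_contra hne
  have pos := hT.strictMono x hx y hne
  rw [hxy, sub_self, zero_dotProduct] at pos
  exact pos.false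

theorem invFunOn_apply (hT : QuadTransport M f g T T' D) {x : Fin k → ℝ} (hx : x ∈ D) :
    Function.invFunOn T D (T x) = x :=
  hT.injOn.leftInvOn_invFunOn hx

theorem hasFDerivWithinAt_invFunOn (hT : QuadTransport M f g T T' D) {x : Fin k → ℝ}
    (hx : x ∈ D) :
    HasFDerivWithinAt (Function.invFunOn T D) (mulVecCLM (T' x)⁻¹) (T '' D) (T x) := by
  have right_inv : T ∘ Function.invFunOn T D =ᶠ[𝓝[T '' D] (T x)] id := by
    filter_upwards [self_mem_nhdsWithin] with y hy
    exact Function.invFunOn_eq hy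
  have lim : Tendsto (Function.invFunOn T D) (𝓝[T '' D] (T x))
      (𝓝[Set.univ] (Function.invFunOn T D (T x))) := by
    rw [nhdsWithin_univ, hT.invFunOn_apply hx]
    exact tendsto_of_tendsto_monotone hT.continuous hT.monotone (hT.strictMono x hx)
      ((tendsto_id.mono_left nhdsWithin_le_nhds).congr' right_inv.symm)
  have hasFDeriv :
      HasFDerivWithinAt T (mulVecCLM (T' x)) Set.univ (Function.invFunOn T D (T x)) := by
    rw [hT.invFunOn_apply hx]
    exact (hT.hasFDerivAt x hx).hasFDerivWithinAt
  have left_inv : ∀ v, mulVecCLM (T' x)⁻¹ (mulVecCLM (T' x) v) = v := fun v => by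
    rw [mulVecCLM_apply, mulVecCLM_apply, mulVec_mulVec,
      nonsing_inv_mul _ (hT.posDef x hx).det_pos.ne'.isUnit, one_mulVec]
  simpa only [ContinuousLinearMap.comp_id] using
    HasFDerivWithinAt.of_comp_of_leftInverse lim hasFDeriv (hasFDerivWithinAt_id _ _) right_inv
      left_inv (Set.mem_image_of_mem T hx)

theorem monotoneTransport_invFunOn (hT : QuadTransport M f g T T' D) (hg : ∀ x, g x ≠ 0) :
    MonotoneTransport g f (Function.invFunOn T D) (fun y => (T' (Function.invFunOn T D y))⁻¹)
      (T '' D) where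
  measurableSet := measurable_image_of_fderivWithin hT.measurableSet
    (fun x hx => (hT.hasFDerivAt x hx).hasFDerivWithinAt) hT.injOn
  measure_compl := hT.measure_compl_image hg
  hasFDerivWithinAt := by
    rintro _ ⟨x, hx, rfl⟩
    rw [hT.invFunOn_apply hx]
    exact hT.hasFDerivWithinAt_invFunOn hx
  posDef := by
    rintro _ ⟨x, hx, rfl⟩
    rw [hT.invFunOn_apply hx]
    exact (hT.posDef x hx).inv
  monge_ampere := by
    rintro _ ⟨x, hx, rfl⟩
    have det_pos := (hT.posDef x hx).det_pos
    rw [hT.invFunOn_apply hx, hT.monge_ampere x hx, ← mul_assoc, det_nonsing_inv,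
      Ring.inverse_eq_inv', ← ENNReal.ofReal_mul (by positivity), inv_mul_cancel₀ det_pos.ne',
      ENNReal.ofReal_one, one_mul]
  strictMono := by
    rintro _ ⟨x, hx, rfl⟩ _ ⟨y, hy, rfl⟩ hxy
    rw [hT.invFunOn_apply hx, hT.invFunOn_apply hy, dotProduct_comm]
    exact hT.strictMono x hx y fun x_eq_y => hxy (congrArg T x_eq_y)

end QuadTransport

section GaussianSource

variable {B Q : Matrix (Fin k) (Fin k) ℝ} {g : (Fin k → ℝ) → ℝ}

theorem lintegral_ofReal_inv_integral_mul (hg : Integrable g) (hg0 : ∀ x, 0 ≤ g x)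
    (hpos : 0 < ∫ y, g y) : ∫⁻ x, ENNReal.ofReal ((∫ y, g y)⁻¹ * g x) = 1 := by
  rw [← ofReal_integral_eq_lintegral_ofReal (hg.const_mul _)
    (Eventually.of_forall fun x => mul_nonneg (by positivity) (hg0 x)), integral_const_mul,
    inv_mul_cancel₀ hpos.ne', ENNReal.ofReal_one]

theorem MonotoneTransport.of_inv_integral_mul (hpos : 0 < ∫ y, g y)
    (hT : MonotoneTransport f (fun x => ENNReal.ofReal ((∫ y, g y)⁻¹ * g x)) T T' s) :
    MonotoneTransport (fun x => ENNReal.ofReal (∫ y, g y) * f x)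
      (fun x => ENNReal.ofReal (g x)) T T' s := by
  have hT' := hT.const_mul (ENNReal.ofReal (∫ y, g y))
  simpa only [← ENNReal.ofReal_mul hpos.le, mul_inv_cancel_left₀ hpos.ne'] using hT'

theorem MoreLogConcave.exists_monotoneTransport (hB : B.PosDef) (hQ : Q.PosDef)
    (hBQ : (Q - B).PosSemidef) (hg : Integrable g) (hgQ : MoreLogConcave g Q⁻¹)
    (hpos : 0 < ∫ y, g y) :
    ∃ T T' s, MonotoneTransport
      (fun x => ENNReal.ofReal (∫ y, g y) * ENNReal.ofReal (gaussDensity B x))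
      (fun x => ENNReal.ofReal (g x)) T T' s ∧ ∀ x ∈ s, (Q - T' x).PosSemidef := by
  obtain ⟨T, T', D, hT⟩ := exists_quadTransport hQ
    (measurable_gaussDensity B).ennreal_ofReal.aemeasurable
    (fun x => (ENNReal.ofReal_pos.2 (gaussDensity_pos hB x)).ne')
    (lintegral_ofReal_gaussDensity hB) ((moreLogConvex_gaussDensity hB).quadLogConvex hBQ)
    (hg.aemeasurable.const_mul _).ennreal_ofReal
    (lintegral_ofReal_inv_integral_mul hg hgQ.nonneg hpos)
    ((hgQ.const_mul (inv_pos.2 hpos)).quadLogConcave (by rw [sub_self]; exact PosSemidef.zero))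
  exact ⟨T, T', D, hT.monotoneTransport.of_inv_integral_mul hpos, hT.posSemidef_sub⟩

-- Here Caffarelli's theorem bounds the transport from `g` to the Gaussian, which is then inverted.
theorem MoreLogConvex.exists_monotoneTransport (hB : B.PosDef) (hQ : Q.PosDef)
    (hBQ : (B - Q).PosSemidef) (hg : Integrable g) (hgQ : MoreLogConvex g Q⁻¹)
    (hpos : 0 < ∫ y, g y) :
    ∃ T T' s, MonotoneTransport
      (fun x => ENNReal.ofReal (∫ y, g y) * ENNReal.ofReal (gaussDensity B x))
      (fun x => ENNReal.ofReal (g x)) T T' s ∧ ∀ x ∈ s, (T' x - Q).PosSemidef := by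
  obtain ⟨z, hz⟩ : ∃ z, g z ≠ 0 := by
    by_contra! g_eq_zero
    simp only [g_eq_zero, integral_zero, lt_self_iff_false] at hpos
  have inv_inv : Q⁻¹⁻¹ = Q := nonsing_inv_nonsing_inv _ hQ.det_pos.ne'.isUnit
  obtain ⟨S, S', D, hS⟩ := exists_quadTransport hQ.inv
    (hg.aemeasurable.const_mul _).ennreal_ofReal
    (fun x => (ENNReal.ofReal_pos.2 (mul_pos (inv_pos.2 hpos) (hgQ.pos_of_ne_zero hz x))).ne')
    (lintegral_ofReal_inv_integral_mul hg hgQ.nonneg hpos)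
    ((hgQ.const_mul (inv_pos.2 hpos)).quadLogConvex (by rw [sub_self]; exact PosSemidef.zero))
    (measurable_gaussDensity B).ennreal_ofReal.aemeasurable (lintegral_ofReal_gaussDensity hB)
    ((moreLogConcave_gaussDensity hB).quadLogConcave (by rwa [inv_inv]))
  refine ⟨_, _, _, (hS.monotoneTransport_invFunOn fun x =>
    (ENNReal.ofReal_pos.2 (gaussDensity_pos hB x)).ne').of_inv_integral_mul hpos, ?_⟩
  rintro _ ⟨x, hx, rfl⟩
  have le := posSemidef_inv_sub_inv (hS.posDef x hx) hQ.inv (hS.posSemidef_sub x hx)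
  rwa [inv_inv, ← hS.invFunOn_apply hx] at le

end GaussianSource

end MonotoneTransport

section BrascampLieb

variable {κ : Type*} {n : ℕ} {d : κ → ℕ} {C : ∀ i, Matrix (Fin (d i)) (Fin n) ℝ}
  {p : κ → ℝ} {B : ∀ i, Matrix (Fin (d i)) (Fin (d i)) ℝ}

section JointPreimage

variable {s : ∀ i, Set (Fin (d i) → ℝ)}

/-- The set of all `x` with `C i x ∈ s i` for every `i`. -/
def jointPreimage (C : ∀ i, Matrix (Fin (d i)) (Fin n) ℝ) (s : ∀ i, Set (Fin (d i) → ℝ)) :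
    Set (Fin n → ℝ) :=
  {x | ∀ i, C i *ᵥ x ∈ s i}

variable [Countable κ]

theorem measurableSet_jointPreimage (hs : ∀ i, MeasurableSet (s i)) :
    MeasurableSet (jointPreimage C s) := by
  rw [jointPreimage, Set.ofPred_forall]
  exact MeasurableSet.iInter fun i => (mulVecCLM (C i)).continuous.measurable (hs i)

theorem ae_mem_jointPreimage (hC : ∀ i, Function.Surjective (C i).mulVec)
    (hs : ∀ i, MeasurableSet (s i)) (hs0 : ∀ i, volume (s i)ᶜ = 0) :
    ∀ᵐ x, x ∈ jointPreimage C s :=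
  ae_all_iff.2 fun i => (ae_comp_linearMap_mem_iff (C i).mulVecLin volume volume (hC i)
    (hs i)).2 (mem_ae_iff.2 (hs0 i))

end JointPreimage

section RegularizedFamilies

variable {I : Finset κ} {Q : ∀ i, Matrix (Fin (d i)) (Fin (d i)) ℝ}
  {g : ∀ i, (Fin (d i) → ℝ) → ℝ}

/-- The families of positive definite matrices `B` with `B i ≤ Q i` for `i ∈ I` and `Q i ≤ B i` for
`i ∉ I`, over which the regularized constant is an infimum. -/
def regularizedFamilies (I : Finset κ) (Q : ∀ i, Matrix (Fin (d i)) (Fin (d i)) ℝ) :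
    Set (∀ i, Matrix (Fin (d i)) (Fin (d i)) ℝ) :=
  {B | (∀ i, (B i).PosDef) ∧ (∀ i ∈ I, (Q i - B i).PosSemidef) ∧
    ∀ i ∉ I, (B i - Q i).PosSemidef}

theorem self_mem_regularizedFamilies (hQ : ∀ i, (Q i).PosDef) : Q ∈ regularizedFamilies I Q :=
  ⟨hQ, fun i _ => by rw [sub_self]; exact PosSemidef.zero,
    fun i _ => by rw [sub_self]; exact PosSemidef.zero⟩

theorem exists_monotoneTransport_of_mem_regularizedFamilies (hQ : ∀ i, (Q i).PosDef)
    (hB : B ∈ regularizedFamilies I Q) (hg : ∀ i, Integrable (g i))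
    (hgI : ∀ i ∈ I, MoreLogConcave (g i) (Q i)⁻¹) (hgIc : ∀ i ∉ I, MoreLogConvex (g i) (Q i)⁻¹)
    (hpos : ∀ i, 0 < ∫ y, g i y) :
    ∃ (T : ∀ i, (Fin (d i) → ℝ) → Fin (d i) → ℝ)
      (T' : ∀ i, (Fin (d i) → ℝ) → Matrix (Fin (d i)) (Fin (d i)) ℝ) (s : ∀ i, Set (Fin (d i) → ℝ)),
      (∀ i, MonotoneTransport
        (fun x => ENNReal.ofReal (∫ y, g i y) * ENNReal.ofReal (gaussDensity (B i) x))
        (fun x => ENNReal.ofReal (g i x)) (T i) (T' i) (s i)) ∧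
      ∀ z : ∀ i, Fin (d i) → ℝ, (∀ i, z i ∈ s i) →
        (fun i => T' i (z i)) ∈ regularizedFamilies I Q := by
  have exists_transport : ∀ i, ∃ T T' s, MonotoneTransport
      (fun x => ENNReal.ofReal (∫ y, g i y) * ENNReal.ofReal (gaussDensity (B i) x))
      (fun x => ENNReal.ofReal (g i x)) T T' s ∧
      ∀ x ∈ s, (i ∈ I → (Q i - T' x).PosSemidef) ∧ (i ∉ I → (T' x - Q i).PosSemidef) := by
    intro i
    by_cases hi : i ∈ I
    · obtain ⟨T, T', s, hT, hT'⟩ := (hgI i hi).exists_monotoneTransport (hB.1 i) (hQ i)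
        (hB.2.1 i hi) (hg i) (hpos i)
      exact ⟨T, T', s, hT, fun x hx => ⟨fun _ => hT' x hx, fun not_mem => absurd hi not_mem⟩⟩
    · obtain ⟨T, T', s, hT, hT'⟩ := (hgIc i hi).exists_monotoneTransport (hB.1 i) (hQ i)
        (hB.2.2 i hi) (hg i) (hpos i)
      exact ⟨T, T', s, hT, fun x hx => ⟨fun mem => absurd mem hi, fun _ => hT' x hx⟩⟩
  choose T T' s hT hT' using exists_transport
  exact ⟨T, T', s, hT, fun z hz => ⟨fun i => (hT i).posDef _ (hz i),
    fun i hi => (hT' i _ (hz i)).1 hi, fun i hi => (hT' i _ (hz i)).2 hi⟩⟩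

end RegularizedFamilies

variable [Fintype κ]

/-- The matrix `∑ pᵢ Cᵢᵀ Bᵢ Cᵢ` of the quadratic form `x ↦ ∑ pᵢ ⟨Bᵢ Cᵢ x, Cᵢ x⟩`. -/
def brascampLiebForm (C : ∀ i, Matrix (Fin (d i)) (Fin n) ℝ) (p : κ → ℝ)
    (B : ∀ i, Matrix (Fin (d i)) (Fin (d i)) ℝ) : Matrix (Fin n) (Fin n) ℝ :=
  ∑ i, p i • ((C i)ᵀ * B i * C i)

/-- The Brascamp–Lieb functional of the Gaussian data `B`, whose infimum is the constant of the
reverse inequality. -/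
def brascampLiebRatio (C : ∀ i, Matrix (Fin (d i)) (Fin n) ℝ) (p : κ → ℝ)
    (B : ∀ i, Matrix (Fin (d i)) (Fin (d i)) ℝ) : ℝ≥0∞ :=
  (ENNReal.ofReal (brascampLiebForm C p B).det / ∏ i, ENNReal.ofReal (B i).det ^ p i) ^ (2 : ℝ)⁻¹

section Gaussian

theorem brascampLiebForm_mulVec (x : Fin n → ℝ) :
    brascampLiebForm C p B *ᵥ x = ∑ i, p i • (C i)ᵀ *ᵥ (B i *ᵥ (C i *ᵥ x)) := by
  rw [brascampLiebForm, sum_mulVec]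
  exact Finset.sum_congr rfl fun i _ => by rw [smul_mulVec, mulVec_mulVec, mulVec_mulVec]

theorem sum_smul_transpose_mulVec_dotProduct (u : ∀ i, Fin (d i) → ℝ) (x : Fin n → ℝ) :
    (∑ i, p i • (C i)ᵀ *ᵥ u i) ⬝ᵥ x = ∑ i, p i * (u i ⬝ᵥ C i *ᵥ x) := by
  rw [sum_dotProduct]
  exact Finset.sum_congr rfl fun i _ => by
    rw [smul_dotProduct, smul_eq_mul, mulVec_transpose, ← dotProduct_mulVec]

theorem brascampLiebForm_posDef (hker : ∀ x, (∀ i, C i *ᵥ x = 0) → x = 0) (hp : ∀ i, 0 < p i)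
    (hB : ∀ i, (B i).PosDef) : (brascampLiebForm C p B).PosDef := by
  have hermitian : (brascampLiebForm C p B).IsHermitian :=
    (posSemidef_sum _ fun i _ =>
      ((hB i).posSemidef.conjTranspose_mul_mul_same (C i)).smul (hp i).le).isHermitian
  refine PosDef.of_dotProduct_mulVec_pos hermitian fun x hx => ?_
  rw [star_trivial, dotProduct_comm, brascampLiebForm_mulVec, sum_smul_transpose_mulVec_dotProduct]
  obtain ⟨i, hi⟩ : ∃ i, C i *ᵥ x ≠ 0 := by
    by_contra! C_mulVec_eq_zero
    exact hx (hker x C_mulVec_eq_zero)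
  exact Finset.sum_pos'
    (fun j _ => mul_nonneg (hp j).le (mulVec_dotProduct_nonneg_of_posSemidef (hB j).posSemidef _))
    ⟨i, Finset.mem_univ i, mul_pos (hp i) (mulVec_dotProduct_pos_of_posDef (hB i) hi)⟩

theorem prod_ofReal_det_rpow_ne_zero (hB : ∀ i, (B i).PosDef) :
    ∏ i, ENNReal.ofReal (B i).det ^ p i ≠ 0 :=
  Finset.prod_ne_zero_iff.2 fun i _ => (ENNReal.rpow_pos
    (ENNReal.ofReal_pos.2 (hB i).det_pos) ENNReal.ofReal_ne_top).ne'

theorem prod_ofReal_rpow_ne_top (hp : ∀ i, 0 ≤ p i) (a : κ → ℝ) :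
    ∏ i, ENNReal.ofReal (a i) ^ p i ≠ ∞ :=
  ENNReal.prod_ne_top fun i _ => ENNReal.rpow_ne_top_of_nonneg (hp i) ENNReal.ofReal_ne_top

theorem brascampLiebRatio_ne_zero (hker : ∀ x, (∀ i, C i *ᵥ x = 0) → x = 0)
    (hp : ∀ i, 0 < p i) (hB : ∀ i, (B i).PosDef) : brascampLiebRatio C p B ≠ 0 :=
  (ENNReal.rpow_pos (ENNReal.div_pos
    (ENNReal.ofReal_pos.2 (brascampLiebForm_posDef hker hp hB).det_pos).ne'
    (prod_ofReal_rpow_ne_top (fun i => (hp i).le) _))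
    (ENNReal.div_ne_top ENNReal.ofReal_ne_top (prod_ofReal_det_rpow_ne_zero hB))).ne'

theorem brascampLiebRatio_ne_top (hB : ∀ i, (B i).PosDef) : brascampLiebRatio C p B ≠ ∞ :=
  ENNReal.rpow_ne_top_of_nonneg (by norm_num)
    (ENNReal.div_ne_top ENNReal.ofReal_ne_top (prod_ofReal_det_rpow_ne_zero hB))

theorem mul_self_mul_prod_le_ofReal_det {E : ℝ≥0∞} (hE : E ≤ brascampLiebRatio C p B) :
    E * E * ∏ i, ENNReal.ofReal (B i).det ^ p i ≤
      ENNReal.ofReal (brascampLiebForm C p B).det := by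
  refine ENNReal.mul_le_of_le_div ((mul_le_mul' hE hE).trans_eq ?_)
  rw [brascampLiebRatio, ← ENNReal.rpow_add_of_nonneg _ _ (by norm_num) (by norm_num),
    ← two_mul, mul_inv_cancel₀ two_ne_zero, ENNReal.rpow_one]

theorem ofReal_sqrt_eq_rpow {a : ℝ} (ha : 0 ≤ a) :
    ENNReal.ofReal √a = ENNReal.ofReal a ^ (2 : ℝ)⁻¹ := by
  rw [Real.sqrt_eq_rpow, ENNReal.ofReal_rpow_of_nonneg ha (by norm_num), one_div]

theorem ofReal_gaussFn_brascampLiebForm (x : Fin n → ℝ) :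
    ENNReal.ofReal (gaussFn (brascampLiebForm C p B) x) =
      ∏ i, ENNReal.ofReal (gaussFn (B i) (C i *ᵥ x)) ^ p i := by
  rw [gaussFn, brascampLiebForm_mulVec, sum_smul_transpose_mulVec_dotProduct, Finset.mul_sum,
    Real.exp_sum, ENNReal.ofReal_prod_of_nonneg fun i _ => (Real.exp_pos _).le]
  refine Finset.prod_congr rfl fun i _ => ?_
  rw [ENNReal.ofReal_rpow_of_pos (gaussFn_pos _ _), gaussFn, ← Real.exp_mul]
  congr 2
  ring

theorem prod_ofReal_gaussDensity_rpow (hp : ∀ i, 0 ≤ p i) (hB : ∀ i, (B i).PosDef)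
    (x : Fin n → ℝ) :
    ∏ i, ENNReal.ofReal (gaussDensity (B i) (C i *ᵥ x)) ^ p i =
      (∏ i, ENNReal.ofReal (B i).det ^ p i) ^ (2 : ℝ)⁻¹ *
        ENNReal.ofReal (gaussFn (brascampLiebForm C p B) x) := by
  rw [ofReal_gaussFn_brascampLiebForm, ← ENNReal.prod_rpow_of_nonneg (by norm_num),
    ← Finset.prod_mul_distrib]
  refine Finset.prod_congr rfl fun i _ => ?_
  rw [gaussDensity, ENNReal.ofReal_mul (gaussFn_pos _ _).le,
    ENNReal.mul_rpow_of_nonneg _ _ (hp i), ofReal_sqrt_eq_rpow (hB i).det_pos.le,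
    ← ENNReal.rpow_mul, ← ENNReal.rpow_mul, mul_comm (2 : ℝ)⁻¹, mul_comm]

theorem lintegral_prod_ofReal_gaussDensity_rpow (hker : ∀ x, (∀ i, C i *ᵥ x = 0) → x = 0)
    (hp : ∀ i, 0 < p i) (hB : ∀ i, (B i).PosDef) :
    ∫⁻ x, ∏ i, ENNReal.ofReal (gaussDensity (B i) (C i *ᵥ x)) ^ p i =
      (brascampLiebRatio C p B)⁻¹ := by
  have form_posDef := brascampLiebForm_posDef hker hp hB
  have hp_nonneg : ∀ i, 0 ≤ p i := fun i => (hp i).le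
  have prod_ne_top := prod_ofReal_rpow_ne_top hp_nonneg fun i => (B i).det
  simp only [prod_ofReal_gaussDensity_rpow hp_nonneg hB]
  rw [lintegral_const_mul _ (measurable_gaussFn _).ennreal_ofReal,
    lintegral_ofReal_gaussFn form_posDef,
    ENNReal.ofReal_inv_of_pos (Real.sqrt_pos.2 form_posDef.det_pos),
    ofReal_sqrt_eq_rpow form_posDef.det_pos.le, brascampLiebRatio,
    ENNReal.div_rpow_of_nonneg _ _ (by norm_num), ← div_eq_mul_inv, ENNReal.inv_div]
  · exact Or.inl (ENNReal.rpow_ne_top_of_nonneg (by norm_num) prod_ne_top)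
  · exact Or.inl (ENNReal.rpow_pos (pos_iff_ne_zero.2 (prod_ofReal_det_rpow_ne_zero hB))
      prod_ne_top).ne'

end Gaussian

section SumTransport

variable {f g : ∀ i, (Fin (d i) → ℝ) → ℝ≥0∞} {T : ∀ i, (Fin (d i) → ℝ) → Fin (d i) → ℝ}
  {T' : ∀ i, (Fin (d i) → ℝ) → Matrix (Fin (d i)) (Fin (d i)) ℝ} {s : ∀ i, Set (Fin (d i) → ℝ)}

/-- Barthe's map `x ↦ ∑ pᵢ Cᵢᵀ Tᵢ(Cᵢ x)`, combining maps `Tᵢ` of the target spaces of the `Cᵢ`. -/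
def sumTransport (C : ∀ i, Matrix (Fin (d i)) (Fin n) ℝ) (p : κ → ℝ)
    (T : ∀ i, (Fin (d i) → ℝ) → Fin (d i) → ℝ) (x : Fin n → ℝ) : Fin n → ℝ :=
  ∑ i, p i • (C i)ᵀ *ᵥ T i (C i *ᵥ x)

theorem hasFDerivWithinAt_sumTransport {x : Fin n → ℝ}
    (hT : ∀ i, HasFDerivWithinAt (T i) (mulVecCLM (B i)) (s i) (C i *ᵥ x)) :
    HasFDerivWithinAt (sumTransport C p T) (mulVecCLM (brascampLiebForm C p B))
      (jointPreimage C s) x := by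
  have summand : ∀ i, HasFDerivWithinAt (fun x => p i • (C i)ᵀ *ᵥ T i (C i *ᵥ x))
      (p i • (mulVecCLM (C i)ᵀ ∘L mulVecCLM (B i) ∘L mulVecCLM (C i))) (jointPreimage C s) x := by
    intro i
    have inner := (hT i).comp x (mulVecCLM (C i)).hasFDerivWithinAt (s := jointPreimage C s)
      fun y hy => hy i
    exact ((mulVecCLM (C i)ᵀ).hasFDerivAt.comp_hasFDerivWithinAt x inner).const_smul (p i)
  refine (HasFDerivWithinAt.fun_sum (u := Finset.univ) fun i _ => summand i).congr_fderiv ?_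
  refine ContinuousLinearMap.ext fun v => ?_
  rw [mulVecCLM_apply, brascampLiebForm_mulVec, _root_.sum_apply]
  rfl

theorem sumTransport_sub_dotProduct (x y : Fin n → ℝ) :
    (sumTransport C p T x - sumTransport C p T y) ⬝ᵥ (x - y) =
      ∑ i, p i * ((T i (C i *ᵥ x) - T i (C i *ᵥ y)) ⬝ᵥ (C i *ᵥ x - C i *ᵥ y)) := by
  rw [sub_dotProduct, sumTransport, sumTransport, sum_smul_transpose_mulVec_dotProduct,
    sum_smul_transpose_mulVec_dotProduct, ← Finset.sum_sub_distrib]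
  exact Finset.sum_congr rfl fun i _ => by rw [← mul_sub, ← sub_dotProduct, mulVec_sub]

theorem injOn_sumTransport (hker : ∀ x, (∀ i, C i *ᵥ x = 0) → x = 0) (hp : ∀ i, 0 < p i)
    (hT : ∀ i, MonotoneTransport (f i) (g i) (T i) (T' i) (s i)) :
    Set.InjOn (sumTransport C p T) (jointPreimage C s) := by
  intro x hx y hy hxy
  by_contra hne
  obtain ⟨i, hi⟩ : ∃ i, C i *ᵥ x ≠ C i *ᵥ y := by
    by_contra! C_eq
    exact hne (sub_eq_zero.1 (hker _ fun i => by rw [mulVec_sub, C_eq, sub_self]))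
  have pos : 0 < (sumTransport C p T x - sumTransport C p T y) ⬝ᵥ (x - y) := by
    rw [sumTransport_sub_dotProduct]
    exact Finset.sum_pos'
      (fun j _ => mul_nonneg (hp j).le ((hT j).dotProduct_sub_nonneg (hx j) (hy j)))
      ⟨i, Finset.mem_univ i, mul_pos (hp i) ((hT i).strictMono _ (hx i) _ (hy i) hi)⟩
  rw [hxy, sub_self, zero_dotProduct] at pos
  exact pos.false

theorem prod_rpow_eq_prod_ofReal_det_rpow_mul (hp : ∀ i, 0 ≤ p i)
    (hT : ∀ i, MonotoneTransport (f i) (g i) (T i) (T' i) (s i)) {z : ∀ i, Fin (d i) → ℝ}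
    (hz : ∀ i, z i ∈ s i) :
    ∏ i, f i (z i) ^ p i =
      (∏ i, ENNReal.ofReal (T' i (z i)).det ^ p i) * ∏ i, g i (T i (z i)) ^ p i := by
  rw [← Finset.prod_mul_distrib]
  exact Finset.prod_congr rfl fun i _ => by
    rw [(hT i).monge_ampere _ (hz i), ENNReal.mul_rpow_of_nonneg _ _ (hp i)]

theorem mul_lintegral_prod_rpow_le_lintegral_iSup (hC : ∀ i, Function.Surjective (C i).mulVec)
    (hker : ∀ x, (∀ i, C i *ᵥ x = 0) → x = 0) (hp : ∀ i, 0 < p i)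
    (hT : ∀ i, MonotoneTransport (f i) (g i) (T i) (T' i) (s i)) {K : ℝ≥0∞} (hK : K ≠ ∞)
    (hK_le : ∀ z : ∀ i, Fin (d i) → ℝ, (∀ i, z i ∈ s i) →
      K * ∏ i, ENNReal.ofReal (T' i (z i)).det ^ p i ≤
        ENNReal.ofReal (brascampLiebForm C p fun i => T' i (z i)).det) :
    K * ∫⁻ x, ∏ i, f i (C i *ᵥ x) ^ p i ≤
      ∫⁻ x, ⨆ (y : ∀ i, Fin (d i) → ℝ) (_ : ∑ i, p i • (C i)ᵀ *ᵥ y i = x),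
        ∏ i, g i (y i) ^ p i := by
  set H : (Fin n → ℝ) → ℝ≥0∞ := fun x =>
    ⨆ (y : ∀ i, Fin (d i) → ℝ) (_ : ∑ i, p i • (C i)ᵀ *ᵥ y i = x), ∏ i, g i (y i) ^ p i
  set N : (Fin n → ℝ) → Matrix (Fin n) (Fin n) ℝ := fun x =>
    brascampLiebForm C p fun i => T' i (C i *ᵥ x)
  have measurableSet := measurableSet_jointPreimage (C := C) fun i => (hT i).measurableSet
  have pointwise : ∀ x ∈ jointPreimage C s, K * ∏ i, f i (C i *ᵥ x) ^ p i ≤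
      ENNReal.ofReal |(mulVecCLM (N x)).det| * H (sumTransport C p T x) := by
    intro x hx
    have N_posDef : (N x).PosDef :=
      brascampLiebForm_posDef hker hp fun i => (hT i).posDef _ (hx i)
    rw [det_mulVecCLM, abs_of_pos N_posDef.det_pos,
      prod_rpow_eq_prod_ofReal_det_rpow_mul (fun i => (hp i).le) hT hx, ← mul_assoc]
    exact mul_le_mul' (hK_le _ hx) (le_iSup₂_of_le (fun i => T i (C i *ᵥ x)) rfl le_rfl)
  calc K * ∫⁻ x, ∏ i, f i (C i *ᵥ x) ^ p i
      = ∫⁻ x in jointPreimage C s, K * ∏ i, f i (C i *ᵥ x) ^ p i := by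
        rw [← lintegral_const_mul' _ _ hK, Measure.restrict_eq_self_of_ae_mem
          (ae_mem_jointPreimage hC (fun i => (hT i).measurableSet) fun i => (hT i).measure_compl)]
    _ ≤ ∫⁻ x in jointPreimage C s,
          ENNReal.ofReal |(mulVecCLM (N x)).det| * H (sumTransport C p T x) :=
        setLIntegral_mono' measurableSet pointwise
    _ = ∫⁻ x in sumTransport C p T '' jointPreimage C s, H x :=
        (lintegral_image_eq_lintegral_abs_det_fderiv_mul volume measurableSet
          (fun x hx => hasFDerivWithinAt_sumTransport fun i =>
            (hT i).hasFDerivWithinAt _ (hx i)) (injOn_sumTransport hker hp hT) H).symm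
    _ ≤ ∫⁻ x, H x := setLIntegral_le_lintegral _ _

theorem mul_self_mul_prod_rpow_le_lintegral_iSup_mul
    (hC : ∀ i, Function.Surjective (C i).mulVec) (hker : ∀ x, (∀ i, C i *ᵥ x = 0) → x = 0)
    (hp : ∀ i, 0 < p i) (hB : ∀ i, (B i).PosDef) {c : κ → ℝ≥0∞}
    (hT : ∀ i, MonotoneTransport (fun x => c i * ENNReal.ofReal (gaussDensity (B i) x)) (g i)
      (T i) (T' i) (s i)) {E : ℝ≥0∞} (hE_top : E ≠ ∞)
    (hE : ∀ z : ∀ i, Fin (d i) → ℝ, (∀ i, z i ∈ s i) →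
      E ≤ brascampLiebRatio C p fun i => T' i (z i)) :
    E * E * ∏ i, c i ^ p i ≤
      (∫⁻ x, ⨆ (y : ∀ i, Fin (d i) → ℝ) (_ : ∑ i, p i • (C i)ᵀ *ᵥ y i = x),
        ∏ i, g i (y i) ^ p i) * brascampLiebRatio C p B := by
  rw [← ENNReal.div_le_iff (brascampLiebRatio_ne_zero hker hp hB) (brascampLiebRatio_ne_top hB)]
  have measurable :
      Measurable fun x => ∏ i, ENNReal.ofReal (gaussDensity (B i) (C i *ᵥ x)) ^ p i :=
    Finset.measurable_prod _ fun i _ => (((measurable_gaussDensity (B i)).comp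
      (mulVecCLM (C i)).continuous.measurable).ennreal_ofReal.pow_const (p i))
  calc E * E * (∏ i, c i ^ p i) / brascampLiebRatio C p B
      = E * E * ∫⁻ x, ∏ i, (c i * ENNReal.ofReal (gaussDensity (B i) (C i *ᵥ x))) ^ p i := by
        simp only [ENNReal.mul_rpow_of_nonneg _ _ (hp _).le, Finset.prod_mul_distrib]
        rw [lintegral_const_mul _ measurable, lintegral_prod_ofReal_gaussDensity_rpow hker hp hB,
          ← mul_assoc, div_eq_mul_inv]
    _ ≤ _ := mul_lintegral_prod_rpow_le_lintegral_iSup hC hker hp hT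
        (ENNReal.mul_ne_top hE_top hE_top) fun z hz => mul_self_mul_prod_le_ofReal_det (hE z hz)

end SumTransport

section Infimum

theorem iInf_mul_le_of_forall_mul_self_mul_le {α : Type*} {S : Set α} {R : α → ℝ≥0∞}
    (hR : ⨅ a ∈ S, R a ≠ ∞) {b J : ℝ≥0∞}
    (h : ∀ a ∈ S, (⨅ a ∈ S, R a) * (⨅ a ∈ S, R a) * b ≤ J * R a) : (⨅ a ∈ S, R a) * b ≤ J := by
  set E := ⨅ a ∈ S, R a
  rcases eq_or_ne E 0 with E_eq_zero | E_ne_zero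
  · rw [E_eq_zero, zero_mul]
    exact zero_le
  rw [← ENNReal.mul_le_mul_iff_right E_ne_zero hR, ← mul_assoc,
    ← ENNReal.div_le_iff_le_mul (Or.inr hR) (Or.inr E_ne_zero)]
  exact le_iInf₂ fun a ha => ENNReal.div_le_of_le_mul' (h a ha)

theorem prod_ofReal_integral_rpow_eq_zero (hp : ∀ i, 0 < p i) {g : ∀ i, (Fin (d i) → ℝ) → ℝ}
    {i : κ} (hi : ∫ y, g i y = 0) :
    ∏ j, ENNReal.ofReal (∫ y, g j y) ^ p j = 0 :=
  Finset.prod_eq_zero (Finset.mem_univ i)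
    (by rw [hi, ENNReal.ofReal_zero, ENNReal.zero_rpow_of_pos (hp i)])

theorem ofReal_prod_rpow (hp : ∀ i, 0 ≤ p i) {a : κ → ℝ} (ha : ∀ i, 0 ≤ a i) :
    ENNReal.ofReal (∏ i, a i ^ p i) = ∏ i, ENNReal.ofReal (a i) ^ p i := by
  rw [ENNReal.ofReal_prod_of_nonneg fun i _ => Real.rpow_nonneg (ha i) _]
  exact Finset.prod_congr rfl fun i _ => (ENNReal.ofReal_rpow_of_nonneg (ha i) (hp i)).symm

end Infimum

end BrascampLieb

/-- Regularized reverse (dual) Brascamp–Lieb inequality with mixed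
log-concavity/log-convexity assumptions. -/
theorem regularized_brascamp_lieb_reverse
    {n m : ℕ} (hm : 1 ≤ m) {ni : Fin m → ℕ}
    (C : ∀ i, Matrix (Fin (ni i)) (Fin n) ℝ)
    (hCsurj : ∀ i, Function.Surjective (C i).mulVec)
    (hker : ∀ x : Fin n → ℝ, (∀ i, (C i).mulVec x = 0) → x = 0)
    (p : Fin m → ℝ) (hp : ∀ i, 0 < p i)
    (I : Finset (Fin m))
    (Q : ∀ i, Matrix (Fin (ni i)) (Fin (ni i)) ℝ) (hQ : ∀ i, (Q i).PosDef)
    (g : ∀ i, (Fin (ni i) → ℝ) → ℝ)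
    (hgint : ∀ i, Integrable (g i))
    (hgI : ∀ i ∈ I, MoreLogConcave (g i) (Q i)⁻¹)
    (hgIc : ∀ i ∉ I, MoreLogConvex (g i) (Q i)⁻¹) :
    (⨅ (B : ∀ i, Matrix (Fin (ni i)) (Fin (ni i)) ℝ)
        (_ : (∀ i, (B i).PosDef) ∧ (∀ i ∈ I, (Q i - B i).PosSemidef) ∧
             (∀ i ∉ I, (B i - Q i).PosSemidef)),
        (ENNReal.ofReal ((∑ i, p i • ((C i)ᵀ * B i * C i)).det) /
            ∏ i, ENNReal.ofReal ((B i).det) ^ p i) ^ ((2 : ℝ)⁻¹)) *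
      ∏ i, ENNReal.ofReal (∫ y, g i y) ^ p i ≤
      ∫⁻ x : Fin n → ℝ,
        ⨆ (y : ∀ i, Fin (ni i) → ℝ) (_ : ∑ i, p i • (C i)ᵀ.mulVec (y i) = x),
          ENNReal.ofReal (∏ i, g i (y i) ^ p i) := by
  have hg_nonneg : ∀ i y, 0 ≤ g i y := fun i y =>
    if hi : i ∈ I then (hgI i hi).nonneg y else (hgIc i hi).nonneg y
  rcases forall_or_exists_not fun i => ∫ y, g i y ≠ 0 with integral_ne_zero | ⟨i, hi⟩
  · have integral_pos : ∀ i, 0 < ∫ y, g i y := fun i =>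
      (integral_nonneg (hg_nonneg i)).lt_of_ne' (integral_ne_zero i)
    simp only [ofReal_prod_rpow (fun i => (hp i).le) fun i => hg_nonneg i _]
    have iInf_ne_top : ⨅ B ∈ regularizedFamilies I Q, brascampLiebRatio C p B ≠ ∞ :=
      ne_top_of_le_ne_top (brascampLiebRatio_ne_top hQ)
        (iInf₂_le Q (self_mem_regularizedFamilies hQ))
    refine iInf_mul_le_of_forall_mul_self_mul_le iInf_ne_top fun B hB => ?_
    obtain ⟨T, T', s, hT, hT'⟩ := exists_monotoneTransport_of_mem_regularizedFamilies hQ hB hgint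
      hgI hgIc integral_pos
    exact mul_self_mul_prod_rpow_le_lintegral_iSup_mul hCsurj hker hp hB.1 hT iInf_ne_top
      fun z hz => iInf₂_le _ (hT' z hz)
  · rw [prod_ofReal_integral_rpow_eq_zero hp (not_not.1 hi), mul_zero]
    exact zero_le
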